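/- The Poincaré polynomial of the real Grassmannian Gr(2j, 2m) over ℚ equals the q-binomial coefficient [m choose j]_{t^4}; that is, Σ_i dim_ℚ H^i(Gr(2j,2m); ℚ) t^i = [m choose j]_{t^4}. -/

import Mathlib

open CategoryTheory Polynomial

/-- The singular chain complex of a topological space `X` with coefficients in `R`,
i.e. the alternating face map complex of the free simplicial `R`-module on the
singular simplicial set of `X`. -/
noncomputable def singularChainComplex (R : Type) [CommRing R] (X : TopCat) :
    ChainComplex (ModuleCat R) ℕ :=
  (AlgebraicTopology.alternatingFaceMapComplex (ModuleCat R)).obj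
    (TopCat.toSSet.obj X ⋙ ModuleCat.free R)

/-- Singular cohomology of `X` with coefficients in `R`, the homology of the dual
cochain complex `Hom(C_•(X; R), R)`. -/
noncomputable def singularCohomology (R : Type) [CommRing R] (X : TopCat) (n : ℕ) :
    ModuleCat R :=
  (((((linearYoneda R (ModuleCat R)).obj (ModuleCat.of R R)).mapHomologicalComplex _).obj
    (singularChainComplex R X).op)).homology n


/-- The setoid on linearly independent `k`-frames in `ℝⁿ` identifying frames with the
same span. -/
def grassSetoid (k n : ℕ) :
    Setoid {A : Fin k → (Fin n → ℝ) // LinearIndependent ℝ A} :=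
  Setoid.ker fun A => Submodule.span ℝ (Set.range (A.1))

/-- The real Grassmann manifold `Gr(k, n)` of `k`-dimensional linear subspaces of `ℝⁿ`,
topologized as the quotient of the space of linearly independent `k`-frames. -/
def Grassmannian (k n : ℕ) : Type := _root_.Quotient (grassSetoid k n)

noncomputable instance (k n : ℕ) : TopologicalSpace (Grassmannian k n) :=
  inferInstanceAs (TopologicalSpace (_root_.Quotient _))

/-- The `q`-integer `[r]_q = 1 + q + ⋯ + q^(r-1)` as a polynomial in `q`. -/
noncomputable def qInt (r : ℕ) : Polynomial ℤ := ∑ i ∈ Finset.range r, X ^ i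

/-- The `q`-factorial `[r]_q! = [r]_q [r-1]_q ⋯ [1]_q`. -/
noncomputable def qFact : ℕ → Polynomial ℤ
  | 0 => 1
  | r + 1 => qInt (r + 1) * qFact r

section OrderedChains

/-- Formal linear combinations of finite sequences of points of `K`. -/
abbrev SeqChain (K : Type*) := (Σ n : ℕ, (Fin n → K)) →₀ ℚ

variable {K K' : Type*}

/-- Boundary of a sequence: the alternating sum of the sequences omitting one entry. -/
noncomputable def seqBdFun : (Σ n : ℕ, (Fin n → K)) → SeqChain K
  | ⟨0, _⟩ => 0
  | ⟨n + 1, w⟩ => ∑ i : Fin (n + 1), (-1 : ℚ) ^ (i : ℕ) • Finsupp.single ⟨n, w ∘ i.succAbove⟩ 1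

noncomputable def seqBd : SeqChain K →ₗ[ℚ] SeqChain K := Finsupp.linearCombination ℚ seqBdFun

noncomputable def seqCone (v : K) : SeqChain K →ₗ[ℚ] SeqChain K :=
  Finsupp.lmapDomain ℚ ℚ fun s => ⟨s.1 + 1, Fin.cons v s.2⟩

noncomputable def seqMap (f : K → K') : SeqChain K →ₗ[ℚ] SeqChain K' :=
  Finsupp.lmapDomain ℚ ℚ fun s => ⟨s.1, f ∘ s.2⟩

lemma seqBd_single (s : Σ n : ℕ, (Fin n → K)) : seqBd (Finsupp.single s 1) = seqBdFun s := by
  simp [seqBd]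

lemma seqBd_single_zero (w : Fin 0 → K) : seqBd (Finsupp.single ⟨0, w⟩ 1) = 0 := by
  simp [seqBd, seqBdFun]

lemma seqBd_single_succ {n : ℕ} (w : Fin (n + 1) → K) :
    seqBd (Finsupp.single ⟨n + 1, w⟩ 1) =
      ∑ i : Fin (n + 1), (-1 : ℚ) ^ (i : ℕ) • Finsupp.single ⟨n, w ∘ i.succAbove⟩ 1 := by
  simp [seqBd, seqBdFun]

lemma seqCone_single (v : K) (s : Σ n : ℕ, (Fin n → K)) :
    seqCone v (Finsupp.single s 1) = Finsupp.single ⟨s.1 + 1, Fin.cons v s.2⟩ 1 := by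
  simp [seqCone]

lemma seqMap_single (f : K → K') (s : Σ n : ℕ, (Fin n → K)) :
    seqMap f (Finsupp.single s 1) = Finsupp.single ⟨s.1, f ∘ s.2⟩ 1 := by
  simp [seqMap]

lemma seqMap_seqMap {K'' : Type*} (g : K' → K'') (f : K → K') (x : SeqChain K) :
    seqMap g (seqMap f x) = seqMap (g ∘ f) x := by
  simp [seqMap, ← Finsupp.mapDomain_comp]; rfl

lemma chain_hom_ext {S M : Type*} [AddCommGroup M] [Module ℚ M] {f g : (S →₀ ℚ) →ₗ[ℚ] M}
    (h : ∀ s, f (Finsupp.single s 1) = g (Finsupp.single s 1)) : f = g :=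
  Finsupp.lhom_ext' fun s => LinearMap.ext_ring (h s)

lemma chain_hom_congr {S M : Type*} [AddCommGroup M] [Module ℚ M] {f g : (S →₀ ℚ) →ₗ[ℚ] M}
    (h : ∀ s, f (Finsupp.single s 1) = g (Finsupp.single s 1)) (x : S →₀ ℚ) : f x = g x := by
  rw [chain_hom_ext h]

lemma seqBd_seqCone (v : K) (x : SeqChain K) :
    seqBd (seqCone v x) = x - seqCone v (seqBd x) := by
  refine chain_hom_congr (f := seqBd ∘ₗ seqCone v) (g := LinearMap.id - seqCone v ∘ₗ seqBd) ?_ x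
  rintro ⟨n, w⟩
  simp only [LinearMap.comp_apply, seqCone_single, seqBd_single_succ, LinearMap.sub_apply,
    LinearMap.id_apply]
  rw [Fin.sum_univ_succ, sub_eq_add_neg]
  congr 1
  · simp only [Fin.val_zero, pow_zero, one_smul]
    congr 1
  · cases n with
    | zero => simp [seqBd_single_zero]
    | succ n =>
      rw [seqBd_single_succ, map_sum, ← Finset.sum_neg_distrib]
      refine Finset.sum_congr rfl fun i _ => ?_
      rw [map_smul, seqCone_single, Fin.val_succ, pow_succ, mul_neg_one, neg_smul]
      congr 4
      funext j
      refine Fin.cases ?_ (fun j => ?_) j <;> simp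

lemma seqBd_seqBd (x : SeqChain K) : seqBd (seqBd x) = 0 := by
  refine chain_hom_congr (f := seqBd ∘ₗ seqBd) (g := 0) ?_ x
  rintro ⟨n, w⟩
  induction n with
  | zero => simp [seqBd_single_zero]
  | succ n ih =>
    have h : (Finsupp.single ⟨n + 1, w⟩ 1 : SeqChain K) =
        seqCone (w 0) (Finsupp.single ⟨n, Fin.tail w⟩ 1) := by
      rw [seqCone_single]; simp
    have := ih (Fin.tail w)
    simp only [LinearMap.comp_apply, LinearMap.zero_apply] at this ⊢
    rw [h, seqBd_seqCone, map_sub, seqBd_seqCone, this]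
    simp

lemma seqBd_seqMap (f : K → K') (x : SeqChain K) : seqBd (seqMap f x) = seqMap f (seqBd x) := by
  refine chain_hom_congr (f := seqBd ∘ₗ seqMap f) (g := seqMap f ∘ₗ seqBd) ?_ x
  rintro ⟨n, w⟩
  simp only [LinearMap.comp_apply, seqMap_single]
  cases n with
  | zero => simp [seqBd_single_zero]
  | succ n =>
    rw [seqBd_single_succ, seqBd_single_succ, map_sum]
    refine Finset.sum_congr rfl fun i _ => ?_
    rw [map_smul, seqMap_single, Function.comp_assoc]

lemma seqMap_seqCone (f : K → K') (v : K) (x : SeqChain K) :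
    seqMap f (seqCone v x) = seqCone (f v) (seqMap f x) := by
  refine chain_hom_congr (f := seqMap f ∘ₗ seqCone v) (g := seqCone (f v) ∘ₗ seqMap f) ?_ x
  rintro ⟨n, w⟩
  simp only [LinearMap.comp_apply, seqMap_single, seqCone_single, Fin.comp_cons]

/-- Subdivision of sequences with respect to a choice `b` of centers, valid on sequences
of length at most `k`. -/
noncomputable def seqSd (b : ∀ n : ℕ, (Fin (n + 1) → K) → K) : ℕ → SeqChain K →ₗ[ℚ] SeqChain K
  | 0 => LinearMap.id
  | k + 1 => Finsupp.linearCombination ℚ fun s => match s with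
    | ⟨0, w⟩ => Finsupp.single ⟨0, w⟩ 1
    | ⟨n + 1, w⟩ => seqCone (b n w) (seqSd b k (seqBdFun ⟨n + 1, w⟩))

/-- The chain homotopy between the identity and `seqSd`. -/
noncomputable def seqSdHom (b : ∀ n : ℕ, (Fin (n + 1) → K) → K) :
    ℕ → SeqChain K →ₗ[ℚ] SeqChain K
  | 0 => 0
  | k + 1 => Finsupp.linearCombination ℚ fun s => match s with
    | ⟨0, _⟩ => 0
    | ⟨n + 1, w⟩ => seqCone (b n w) (Finsupp.single ⟨n + 1, w⟩ 1
        - seqSd b (k + 1) (Finsupp.single ⟨n + 1, w⟩ 1) - seqSdHom b k (seqBdFun ⟨n + 1, w⟩))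

variable (b : ∀ n : ℕ, (Fin (n + 1) → K) → K)

lemma seqSd_succ_zero (k : ℕ) (w : Fin 0 → K) :
    seqSd b (k + 1) (Finsupp.single ⟨0, w⟩ 1) = Finsupp.single ⟨0, w⟩ 1 := by
  simp [seqSd]

lemma seqSd_succ_succ (k n : ℕ) (w : Fin (n + 1) → K) :
    seqSd b (k + 1) (Finsupp.single ⟨n + 1, w⟩ 1) =
      seqCone (b n w) (seqSd b k (seqBd (Finsupp.single ⟨n + 1, w⟩ 1))) := by
  simp [seqSd, seqBd_single]

lemma seqSdHom_succ_zero (k : ℕ) (w : Fin 0 → K) :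
    seqSdHom b (k + 1) (Finsupp.single ⟨0, w⟩ 1) = 0 := by
  simp [seqSdHom]

lemma seqSdHom_succ_succ (k n : ℕ) (w : Fin (n + 1) → K) :
    seqSdHom b (k + 1) (Finsupp.single ⟨n + 1, w⟩ 1) =
      seqCone (b n w) (Finsupp.single ⟨n + 1, w⟩ 1
        - seqSd b (k + 1) (Finsupp.single ⟨n + 1, w⟩ 1)
        - seqSdHom b k (seqBd (Finsupp.single ⟨n + 1, w⟩ 1))) := by
  simp [seqSdHom, seqBd_single]

lemma seqBd_seqSd (k : ℕ) (x : SeqChain K) :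
    seqBd (seqSd b (k + 1) x) = seqSd b k (seqBd x) := by
  induction k generalizing x with
  | zero =>
    refine chain_hom_congr (f := seqBd ∘ₗ seqSd b 1) (g := seqSd b 0 ∘ₗ seqBd) ?_ x
    rintro ⟨_ | n, w⟩
    · simp [seqSd_succ_zero, seqBd_single_zero]
    · simp only [LinearMap.comp_apply, seqSd_succ_succ, seqBd_seqCone]
      simp [seqSd, seqBd_seqBd]
  | succ k ih =>
    refine chain_hom_congr (f := seqBd ∘ₗ seqSd b (k + 2)) (g := seqSd b (k + 1) ∘ₗ seqBd) ?_ x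
    rintro ⟨_ | n, w⟩
    · simp [seqSd_succ_zero, seqBd_single_zero]
    · simp only [LinearMap.comp_apply]
      rw [seqSd_succ_succ, seqBd_seqCone, ih, seqBd_seqBd]
      simp

lemma seqBd_seqSdHom (k : ℕ) (x : SeqChain K) :
    seqBd (seqSdHom b (k + 1) x) =
      x - seqSd b (k + 1) x - seqSdHom b k (seqBd x) := by
  induction k generalizing x with
  | zero =>
    refine chain_hom_congr (f := seqBd ∘ₗ seqSdHom b 1)
      (g := LinearMap.id - seqSd b 1 - seqSdHom b 0 ∘ₗ seqBd) ?_ x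
    rintro ⟨_ | n, w⟩
    · simp [seqSd_succ_zero, seqSdHom_succ_zero, seqBd_single_zero]
    · simp only [LinearMap.comp_apply, seqSdHom_succ_succ, seqBd_seqCone, LinearMap.sub_apply,
        map_sub, seqBd_seqSd]
      simp [seqSd, seqSdHom]
  | succ k ih =>
    refine chain_hom_congr (f := seqBd ∘ₗ seqSdHom b (k + 2))
      (g := LinearMap.id - seqSd b (k + 2) - seqSdHom b (k + 1) ∘ₗ seqBd) ?_ x
    rintro ⟨_ | n, w⟩
    · simp [seqSd_succ_zero, seqSdHom_succ_zero, seqBd_single_zero]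
    · simp only [LinearMap.comp_apply, LinearMap.sub_apply, LinearMap.id_apply]
      rw [seqSdHom_succ_succ, seqBd_seqCone, map_sub seqBd, map_sub seqBd, seqBd_seqSd, ih,
        seqBd_seqBd]
      simp

lemma seqMap_seqSd {b' : ∀ n : ℕ, (Fin (n + 1) → K') → K'} (f : K → K')
    (hf : ∀ n w, f (b n w) = b' n (f ∘ w)) (k : ℕ) (x : SeqChain K) :
    seqMap f (seqSd b k x) = seqSd b' k (seqMap f x) := by
  induction k generalizing x with
  | zero => rfl
  | succ k ih =>
    refine chain_hom_congr (f := seqMap f ∘ₗ seqSd b (k + 1))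
      (g := seqSd b' (k + 1) ∘ₗ seqMap f) ?_ x
    rintro ⟨_ | n, w⟩
    · simp [seqSd_succ_zero, seqMap_single]
    · simp only [LinearMap.comp_apply]
      rw [seqSd_succ_succ, seqMap_seqCone, ih, ← seqBd_seqMap, seqMap_single, seqSd_succ_succ, hf]

lemma seqMap_seqSdHom {b' : ∀ n : ℕ, (Fin (n + 1) → K') → K'} (f : K → K')
    (hf : ∀ n w, f (b n w) = b' n (f ∘ w)) (k : ℕ) (x : SeqChain K) :
    seqMap f (seqSdHom b k x) = seqSdHom b' k (seqMap f x) := by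
  induction k generalizing x with
  | zero => simp [seqSdHom]
  | succ k ih =>
    refine chain_hom_congr (f := seqMap f ∘ₗ seqSdHom b (k + 1))
      (g := seqSdHom b' (k + 1) ∘ₗ seqMap f) ?_ x
    rintro ⟨_ | n, w⟩
    · simp [seqSdHom_succ_zero, seqMap_single]
    · simp only [LinearMap.comp_apply]
      rw [seqSdHom_succ_succ, seqMap_seqCone, map_sub (seqMap f), map_sub (seqMap f), ih, ← seqBd_seqMap,
        seqMap_seqSd b (b' := b') f hf, seqMap_single, seqSdHom_succ_succ, hf]

/-- The prism operator, from sequences in `K` to sequences in `K × L`, between the bottom `p` and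
the top `q`. -/
noncomputable def seqPrismFun {L : Type*} (p q : L) :
    ∀ n : ℕ, (Fin n → K) → SeqChain (K × L)
  | 0, _ => 0
  | n + 1, w => Finsupp.single ⟨n + 2, Fin.cons (w 0, p) fun i => (w i, q)⟩ 1
      - seqCone (w 0, p) (seqPrismFun p q n (Fin.tail w))

noncomputable def seqPrism {L : Type*} (p q : L) : SeqChain K →ₗ[ℚ] SeqChain (K × L) :=
  Finsupp.linearCombination ℚ fun s => seqPrismFun p q s.1 s.2

lemma seqPrism_seqCone {L : Type*} (p q : L) (v : K) (x : SeqChain K) :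
    seqPrism p q (seqCone v x) =
      seqCone (v, p) (seqCone (v, q) (seqMap (fun k => (k, q)) x) - seqPrism p q x) := by
  refine chain_hom_congr (f := seqPrism p q ∘ₗ seqCone v)
    (g := seqCone (v, p) ∘ₗ (seqCone (v, q) ∘ₗ seqMap (fun k => (k, q)) - seqPrism p q)) ?_ x
  rintro ⟨n, w⟩
  simp only [LinearMap.comp_apply, LinearMap.sub_apply, map_sub, seqCone_single, seqMap_single]
  simp only [seqPrism, Finsupp.linearCombination_single, one_smul, seqPrismFun, Fin.cons_zero,
    Fin.tail_cons]
  congr 4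
  funext j
  refine Fin.cases ?_ (fun j => ?_) j <;> simp

lemma seqBd_seqPrism {L : Type*} (p q : L) (x : SeqChain K) :
    seqBd (seqPrism p q x) = seqMap (fun k => (k, q)) x - seqMap (fun k => (k, p)) x
      - seqPrism p q (seqBd x) := by
  refine chain_hom_congr (f := seqBd ∘ₗ seqPrism p q)
    (g := seqMap (fun k => (k, q)) - seqMap (fun k => (k, p)) - seqPrism p q ∘ₗ seqBd) ?_ x
  rintro ⟨n, w⟩
  induction n with
  | zero =>
    have : (fun k => (k, q)) ∘ w = (fun k => (k, p)) ∘ w := Subsingleton.elim _ _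
    simp [seqBd_single_zero, seqPrism, seqPrismFun, seqMap_single, this]
  | succ n ih =>
    have h : (Finsupp.single ⟨n + 1, w⟩ 1 : SeqChain K) =
        seqCone (w 0) (Finsupp.single ⟨n, Fin.tail w⟩ 1) := by
      rw [seqCone_single]; simp
    have := ih (Fin.tail w)
    simp only [LinearMap.comp_apply, LinearMap.sub_apply] at this ⊢
    rw [h, seqPrism_seqCone, seqBd_seqCone, map_sub, map_sub, this, seqBd_seqCone, seqBd_seqCone,
      map_sub (seqPrism p q), seqPrism_seqCone, seqBd_seqMap, seqMap_seqCone, seqMap_seqCone]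
    simp only [map_sub]
    abel

lemma seqMap_seqPrism {L : Type*} (p q : L) (f : K → K') (x : SeqChain K) :
    seqMap (Prod.map f id) (seqPrism p q x) = seqPrism p q (seqMap f x) := by
  refine chain_hom_congr (f := seqMap (Prod.map f id) ∘ₗ seqPrism p q)
    (g := seqPrism p q ∘ₗ seqMap f) ?_ x
  rintro ⟨n, w⟩
  induction n with
  | zero => simp [seqPrism, seqPrismFun, seqMap_single]
  | succ n ih =>
    have h : (Finsupp.single ⟨n + 1, w⟩ 1 : SeqChain K) =
        seqCone (w 0) (Finsupp.single ⟨n, Fin.tail w⟩ 1) := by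
      rw [seqCone_single]; simp
    have := ih (Fin.tail w)
    simp only [LinearMap.comp_apply] at this ⊢
    rw [h, seqPrism_seqCone, seqMap_seqCone, seqMap_seqCone, map_sub, this, seqMap_seqCone,
      seqPrism_seqCone, seqMap_seqMap, seqMap_seqMap]
    rfl

end OrderedChains

section SingularChains

noncomputable def convexComb {E : Type*} [NormedAddCommGroup E] [NormedSpace ℝ E] {s : Set E}
    (hs : Convex ℝ s) {n : ℕ} (w : Fin (n + 1) → s) : C(stdSimplex ℝ (Fin (n + 1)), s) where
  toFun t := ⟨∑ i, t.1 i • (w i : E),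
    hs.sum_mem (fun i _ => t.2.1 i) t.2.2 fun i _ => (w i).2⟩
  continuous_toFun := by
    refine Continuous.subtype_mk (continuous_finsetSum _ fun i _ => ?_) _
    exact ((continuous_apply i).comp continuous_subtype_val).smul continuous_const

/-- Affine simplices in the standard simplex. -/
noncomputable abbrev stdComb {m n : ℕ} (w : Fin (m + 1) → stdSimplex ℝ (Fin (n + 1))) :
    C(stdSimplex ℝ (Fin (m + 1)), stdSimplex ℝ (Fin (n + 1))) :=
  convexComb (convex_stdSimplex ℝ (Fin (n + 1))) w

lemma convexComb_stdComb {E : Type*} [NormedAddCommGroup E] [NormedSpace ℝ E] {s : Set E}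
    (hs : Convex ℝ s) {m n : ℕ} (w : Fin (n + 1) → s)
    (v : Fin (m + 1) → stdSimplex ℝ (Fin (n + 1))) (t : stdSimplex ℝ (Fin (m + 1))) :
    convexComb hs w (stdComb v t) = convexComb hs (convexComb hs w ∘ v) t := by
  apply Subtype.ext
  simp only [convexComb, ContinuousMap.coe_mk, Finset.sum_apply, Pi.smul_apply, Finset.sum_smul,
    Function.comp_apply, Finset.smul_sum, smul_eq_mul, mul_smul]
  exact Finset.sum_comm

lemma convexComb_vertex {E : Type*} [NormedAddCommGroup E] [NormedSpace ℝ E] {s : Set E}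
    (hs : Convex ℝ s) {n : ℕ} (w : Fin (n + 1) → s) (i : Fin (n + 1)) :
    convexComb hs w (stdSimplex.vertex i) = w i := by
  apply Subtype.ext
  simp only [convexComb, ContinuousMap.coe_mk]
  have h : ∀ j, (stdSimplex.vertex (S := ℝ) i).1 j = if j = i then 1 else 0 := by
    intro j
    change stdSimplex.vertex (S := ℝ) i j = _
    rw [stdSimplex.vertex_coe, Pi.single_apply]
  change ∑ j, (stdSimplex.vertex (S := ℝ) i).1 j • (w j : E) = w i
  simp

lemma stdComb_vertex_eq_id (n : ℕ) :
    stdComb (fun i : Fin (n + 1) => stdSimplex.vertex i) = ContinuousMap.id _ := by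
  ext t j
  change (∑ i, t.1 i • (stdSimplex.vertex (S := ℝ) i).1) j = t j
  rw [Finset.sum_apply, Finset.sum_eq_single j]
  · change t.1 j * (stdSimplex.vertex (S := ℝ) j) j = t j
    simp; rfl
  · intro i _ hj
    change t.1 i * (stdSimplex.vertex (S := ℝ) i) j = 0
    simp [hj.symm]
  · simp

/-- A space with affine simplices spanned by arbitrary finite sequences of points. -/
class AffSpace (K : Type*) [TopologicalSpace K] where
  comb : ∀ {n : ℕ}, (Fin (n + 1) → K) → C(stdSimplex ℝ (Fin (n + 1)), K)
  comb_vertex : ∀ {n : ℕ} (w : Fin (n + 1) → K) (i), comb w (stdSimplex.vertex i) = w i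
  comb_stdComb : ∀ {m n : ℕ} (w : Fin (n + 1) → K)
    (v : Fin (m + 1) → stdSimplex ℝ (Fin (n + 1))) (t), comb w (stdComb v t) = comb (comb w ∘ v) t

open AffSpace

noncomputable instance (n : ℕ) : AffSpace (stdSimplex ℝ (Fin (n + 1))) where
  comb := stdComb
  comb_vertex := convexComb_vertex _
  comb_stdComb := convexComb_stdComb _

noncomputable instance : AffSpace unitInterval where
  comb := convexComb (convex_Icc 0 1)
  comb_vertex := convexComb_vertex _
  comb_stdComb := convexComb_stdComb _

noncomputable instance {K L : Type*} [TopologicalSpace K] [TopologicalSpace L] [AffSpace K]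
    [AffSpace L] : AffSpace (K × L) where
  comb w := (comb fun i => (w i).1).prodMk (comb fun i => (w i).2)
  comb_vertex w i := by simp [comb_vertex]
  comb_stdComb w v t := Prod.ext (comb_stdComb _ v t) (comb_stdComb _ v t)

lemma comb_const (p : unitInterval) {n : ℕ} (t : stdSimplex ℝ (Fin (n + 1))) :
    comb (fun _ : Fin (n + 1) => p) t = p := by
  apply Subtype.ext
  change ∑ i, t.1 i • (p : ℝ) = p
  rw [← Finset.sum_smul, t.2.2, one_smul]

/-- Singular chains of all degrees. -/
abbrev SingChain (X : Type*) [TopologicalSpace X] :=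
  (Σ n : ℕ, C(stdSimplex ℝ (Fin (n + 1)), X)) →₀ ℚ

variable {X Y Z K K' : Type*} [TopologicalSpace X] [TopologicalSpace Y] [TopologicalSpace Z]
  [TopologicalSpace K] [TopologicalSpace K'] [AffSpace K] [AffSpace K']

noncomputable def singPush (f : C(X, Y)) : SingChain X →ₗ[ℚ] SingChain Y :=
  Finsupp.lmapDomain ℚ ℚ fun s => ⟨s.1, f.comp s.2⟩

lemma singPush_single (f : C(X, Y)) (s : Σ n : ℕ, C(stdSimplex ℝ (Fin (n + 1)), X)) :
    singPush f (Finsupp.single s 1) = Finsupp.single ⟨s.1, f.comp s.2⟩ 1 := by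
  simp [singPush]

lemma singPush_singPush (g : C(Y, Z)) (f : C(X, Y)) (x : SingChain X) :
    singPush g (singPush f x) = singPush (g.comp f) x := by
  simp [singPush, ← Finsupp.mapDomain_comp]; rfl

lemma singPush_id (x : SingChain X) : singPush (ContinuousMap.id X) x = x := by
  refine chain_hom_congr (f := singPush (ContinuousMap.id X)) (g := LinearMap.id) ?_ x
  intro s; simp [singPush_single]

/-- The affine singular chain of a chain of sequences. -/
noncomputable def realize : SeqChain K →ₗ[ℚ] SingChain K :=
  Finsupp.linearCombination ℚ fun s => match s with
    | ⟨0, _⟩ => 0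
    | ⟨n + 1, w⟩ => Finsupp.single ⟨n, comb w⟩ 1

lemma realize_single_zero (w : Fin 0 → K) : realize (Finsupp.single ⟨0, w⟩ 1) = 0 := by
  simp [realize]

lemma realize_single_succ {n : ℕ} (w : Fin (n + 1) → K) :
    realize (Finsupp.single ⟨n + 1, w⟩ 1) = Finsupp.single ⟨n, comb w⟩ 1 := by
  simp [realize]

lemma singPush_realize (g : C(K, K'))
    (hg : ∀ (n : ℕ) (v : Fin (n + 1) → K) (t), g (comb v t) = comb (g ∘ v) t) (x : SeqChain K) :
    singPush g (realize x) = realize (seqMap g x) := by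
  refine chain_hom_congr (f := singPush g ∘ₗ realize) (g := realize ∘ₗ seqMap g) ?_ x
  rintro ⟨_ | n, w⟩
  · simp [realize_single_zero, seqMap_single]
  · simp only [LinearMap.comp_apply, realize_single_succ, singPush_single, seqMap_single]
    congr 2
    ext t
    exact hg n w t

lemma singPush_comb_realize {n : ℕ} (w : Fin (n + 1) → K)
    (x : SeqChain (stdSimplex ℝ (Fin (n + 1)))) :
    singPush (comb w) (realize x) = realize (seqMap (comb w) x) :=
  singPush_realize _ (fun _ v t => comb_stdComb w v t) x

noncomputable def fundSeq (n : ℕ) : SeqChain (stdSimplex ℝ (Fin (n + 1))) :=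
  Finsupp.single ⟨n + 1, fun i => stdSimplex.vertex i⟩ 1

lemma seqMap_fundSeq {n : ℕ} (w : Fin (n + 1) → K) :
    seqMap (comb w) (fundSeq n) = Finsupp.single ⟨n + 1, w⟩ 1 := by
  rw [fundSeq, seqMap_single]
  congr 2
  funext i
  exact comb_vertex w i

lemma realize_fundSeq (n : ℕ) :
    realize (fundSeq n) = Finsupp.single ⟨n, ContinuousMap.id _⟩ 1 := by
  rw [fundSeq, realize_single_succ]
  congr 2
  exact stdComb_vertex_eq_id n

/-- The natural operator on singular chains given by affine chains in the standard simplices. -/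
noncomputable def natOp (τ : ∀ n : ℕ, SeqChain (stdSimplex ℝ (Fin (n + 1)))) :
    SingChain X →ₗ[ℚ] SingChain X :=
  Finsupp.linearCombination ℚ fun s => singPush s.2 (realize (τ s.1))

lemma natOp_single (τ : ∀ n : ℕ, SeqChain (stdSimplex ℝ (Fin (n + 1))))
    (s : Σ n : ℕ, C(stdSimplex ℝ (Fin (n + 1)), X)) :
    natOp τ (Finsupp.single s 1) = singPush s.2 (realize (τ s.1)) := by
  simp [natOp]

lemma natOp_singPush (τ : ∀ n : ℕ, SeqChain (stdSimplex ℝ (Fin (n + 1)))) (f : C(X, Y))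
    (x : SingChain X) : natOp τ (singPush f x) = singPush f (natOp τ x) := by
  refine chain_hom_congr (f := natOp τ ∘ₗ singPush f) (g := singPush f ∘ₗ natOp τ) ?_ x
  intro s
  simp only [LinearMap.comp_apply, singPush_single, natOp_single, singPush_singPush]

lemma natOp_realize (τ : ∀ n : ℕ, SeqChain (stdSimplex ℝ (Fin (n + 1)))) {n : ℕ}
    (w : Fin (n + 1) → K) :
    natOp τ (realize (Finsupp.single ⟨n + 1, w⟩ 1)) = realize (seqMap (comb w) (τ n)) := by
  rw [realize_single_succ, natOp_single, singPush_comb_realize]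

noncomputable def singBd : SingChain X →ₗ[ℚ] SingChain X := natOp fun n => seqBd (fundSeq n)

lemma singBd_singPush (f : C(X, Y)) (x : SingChain X) :
    singBd (singPush f x) = singPush f (singBd x) := natOp_singPush _ f x

lemma singBd_realize (x : SeqChain K) : singBd (realize x) = realize (seqBd x) := by
  refine chain_hom_congr (f := singBd ∘ₗ realize) (g := realize ∘ₗ seqBd) ?_ x
  rintro ⟨_ | n, w⟩
  · simp [realize_single_zero, seqBd_single_zero]
  · simp only [LinearMap.comp_apply]
    rw [singBd, natOp_realize, ← seqBd_seqMap, seqMap_fundSeq]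

lemma singBd_singBd (x : SingChain X) : singBd (singBd x) = 0 := by
  refine chain_hom_congr (f := singBd ∘ₗ singBd) (g := 0) ?_ x
  intro s
  rw [LinearMap.comp_apply, singBd, natOp_single]
  change singBd _ = 0
  rw [singBd_singPush, singBd_realize, seqBd_seqBd, map_zero, map_zero]

lemma singBd_single_succ {n : ℕ} (σ : C(stdSimplex ℝ (Fin (n + 2)), X)) :
    singBd (Finsupp.single ⟨n + 1, σ⟩ 1) = ∑ i : Fin (n + 2), (-1 : ℚ) ^ (i : ℕ) •
      Finsupp.single ⟨n, σ.comp ⟨_, stdSimplex.continuous_map i.succAbove⟩⟩ 1 := by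
  rw [singBd, natOp_single, fundSeq, seqBd_single_succ, map_sum, map_sum]
  refine Finset.sum_congr rfl fun i _ => ?_
  rw [map_smul, map_smul, realize_single_succ, singPush_single]
  congr 4
  ext t j
  change (∑ k, t.1 k • (stdSimplex.vertex (S := ℝ) (i.succAbove k)).1) j =
    stdSimplex.map i.succAbove t j
  have h1 : ∀ a b : Fin (n + 2), (stdSimplex.vertex (S := ℝ) a).1 b = if b = a then 1 else 0 := by
    intro a b
    change stdSimplex.vertex (S := ℝ) a b = _
    rw [stdSimplex.vertex_coe, Pi.single_apply]
  have h2 := congrFun (stdSimplex.map_coe i.succAbove t) j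
  rw [h2, FunOnFinite.linearMap_apply_apply, Finset.sum_apply, Finset.sum_filter]
  refine Finset.sum_congr rfl fun k _ => ?_
  rw [Pi.smul_apply, h1, smul_eq_mul, mul_ite, mul_one, mul_zero]
  simp only [eq_comm]
  rfl

lemma singBd_single_zero (σ : C(stdSimplex ℝ (Fin 1), X)) :
    singBd (Finsupp.single ⟨0, σ⟩ 1) = 0 := by
  rw [singBd, natOp_single, fundSeq, seqBd_single_succ]
  simp [realize]

noncomputable def affBary (K : Type*) [TopologicalSpace K] [AffSpace K] (n : ℕ)
    (w : Fin (n + 1) → K) : K := comb w stdSimplex.barycenter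

noncomputable def singSd : SingChain X →ₗ[ℚ] SingChain X :=
  natOp fun n => seqSd (affBary _) (n + 1) (fundSeq n)

noncomputable def singSdHom : SingChain X →ₗ[ℚ] SingChain X :=
  natOp fun n => seqSdHom (affBary _) (n + 1) (fundSeq n)

lemma singSd_realize {n : ℕ} {x : SeqChain K} (hx : x ∈ Finsupp.supported ℚ ℚ {s | s.1 = n}) :
    singSd (realize x) = realize (seqSd (affBary K) n x) := by
  rw [Finsupp.supported_eq_span_single] at hx
  induction hx using Submodule.span_induction with
  | mem x h =>
    obtain ⟨⟨m, w⟩, rfl, rfl⟩ := h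
    rcases m with _ | n
    · simp [realize_single_zero, seqSd]
    · dsimp only
      rw [singSd, natOp_realize, seqMap_seqSd _ (b' := affBary K) (comb w), seqMap_fundSeq]
      exact fun _ v => comb_stdComb w v _
  | zero => simp
  | add x y _ _ hx hy => simp [hx, hy]
  | smul c x _ hx => simp [hx]

lemma singSdHom_realize {n : ℕ} {x : SeqChain K} (hx : x ∈ Finsupp.supported ℚ ℚ {s | s.1 = n}) :
    singSdHom (realize x) = realize (seqSdHom (affBary K) n x) := by
  rw [Finsupp.supported_eq_span_single] at hx
  induction hx using Submodule.span_induction with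
  | mem x h =>
    obtain ⟨⟨m, w⟩, rfl, rfl⟩ := h
    rcases m with _ | n
    · simp [realize_single_zero, seqSdHom]
    · dsimp only
      rw [singSdHom, natOp_realize, seqMap_seqSdHom _ (b' := affBary K) (comb w), seqMap_fundSeq]
      exact fun _ v => comb_stdComb w v _
  | zero => simp
  | add x y _ _ hx hy => simp [hx, hy]
  | smul c x _ hx => simp [hx]

lemma seqBd_single_mem {K : Type*} {n : ℕ} (w : Fin (n + 1) → K) :
    seqBd (Finsupp.single ⟨n + 1, w⟩ 1) ∈ Finsupp.supported ℚ ℚ {s | s.1 = n} := by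
  rw [seqBd_single_succ]
  exact Submodule.sum_mem _ fun i _ =>
    Submodule.smul_mem _ _ (Finsupp.single_mem_supported _ _ rfl)

lemma singBd_singSd (x : SingChain X) : singBd (singSd x) = singSd (singBd x) := by
  refine chain_hom_congr (f := singBd ∘ₗ singSd) (g := singSd ∘ₗ singBd) ?_ x
  rintro ⟨n, σ⟩
  simp only [LinearMap.comp_apply]
  rw [singSd, natOp_single, singBd_singPush, singBd_realize, seqBd_seqSd, singBd, natOp_single]
  change _ = singSd _
  rw [singSd, natOp_singPush]
  exact congrArg (singPush σ) (singSd_realize (seqBd_single_mem _)).symm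

lemma singBd_singSdHom (x : SingChain X) :
    singBd (singSdHom x) = x - singSd x - singSdHom (singBd x) := by
  refine chain_hom_congr (f := singBd ∘ₗ singSdHom)
    (g := LinearMap.id - singSd - singSdHom ∘ₗ singBd) ?_ x
  rintro ⟨n, σ⟩
  have h : singSdHom (singBd (Finsupp.single ⟨n, σ⟩ 1 : SingChain X)) =
      singPush σ (realize (seqSdHom (affBary _) n (seqBd (fundSeq n)))) := by
    rw [singBd, natOp_single, singSdHom, natOp_singPush]
    exact congrArg (singPush σ) (singSdHom_realize (seqBd_single_mem _))
  simp only [LinearMap.comp_apply, LinearMap.sub_apply, LinearMap.id_apply, h]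
  rw [singSdHom, natOp_single, singBd_singPush, singBd_realize, seqBd_seqSdHom, singSd,
    natOp_single]
  simp only [map_sub, realize_fundSeq, singPush_single, ContinuousMap.comp_id]

/-- The prism operator. -/
noncomputable def singPrism : SingChain X →ₗ[ℚ] SingChain (X × unitInterval) :=
  Finsupp.linearCombination ℚ fun s =>
    singPush (s.2.prodMap (ContinuousMap.id _)) (realize (seqPrism 0 1 (fundSeq s.1)))

lemma singPrism_single (s : Σ n : ℕ, C(stdSimplex ℝ (Fin (n + 1)), X)) :
    singPrism (Finsupp.single s 1) =
      singPush (s.2.prodMap (ContinuousMap.id _)) (realize (seqPrism 0 1 (fundSeq s.1))) := by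
  simp [singPrism]

lemma singPrism_singPush (f : C(X, Y)) (x : SingChain X) :
    singPrism (singPush f x) = singPush (f.prodMap (ContinuousMap.id _)) (singPrism x) := by
  refine chain_hom_congr (f := singPrism ∘ₗ singPush f)
    (g := singPush (f.prodMap (ContinuousMap.id _)) ∘ₗ singPrism) ?_ x
  intro s
  simp only [LinearMap.comp_apply, singPush_single, singPrism_single, singPush_singPush]
  rfl

lemma singPrism_realize (x : SeqChain K) :
    singPrism (realize x) = realize (seqPrism 0 1 x) := by
  refine chain_hom_congr (f := singPrism ∘ₗ realize) (g := realize ∘ₗ seqPrism 0 1) ?_ x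
  rintro ⟨_ | n, w⟩
  · simp [realize_single_zero, seqPrism, seqPrismFun]
  · simp only [LinearMap.comp_apply]
    rw [realize_single_succ, singPrism_single, singPush_realize, ← seqMap_fundSeq w,
      ← seqMap_seqPrism]
    · rfl
    · intro m v t
      refine Prod.ext ?_ rfl
      exact comb_stdComb w _ t

noncomputable def prodConst (p : unitInterval) : C(X, X × unitInterval) :=
  (ContinuousMap.id X).prodMk (ContinuousMap.const X p)

lemma singBd_singPrism (x : SingChain X) :
    singBd (singPrism x) = singPush (prodConst 1) x - singPush (prodConst 0) x
      - singPrism (singBd x) := by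
  refine chain_hom_congr (f := singBd ∘ₗ singPrism)
    (g := singPush (prodConst 1) - singPush (prodConst 0) - singPrism ∘ₗ singBd) ?_ x
  rintro ⟨n, σ⟩
  have h : ∀ p : unitInterval, singPush (σ.prodMap (ContinuousMap.id _))
      (realize (seqMap (fun k => (k, p)) (fundSeq n))) =
      singPush (prodConst p) (Finsupp.single ⟨n, σ⟩ 1) := by
    intro p
    rw [fundSeq, seqMap_single, realize_single_succ, singPush_single, singPush_single]
    congr 2
    ext1 t
    refine Prod.ext ?_ ?_
    · exact congrArg σ (DFunLike.congr_fun (stdComb_vertex_eq_id n) t)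
    · exact comb_const p t
  simp only [LinearMap.comp_apply, LinearMap.sub_apply]
  rw [singPrism_single, singBd_singPush, singBd_realize, seqBd_seqPrism, singBd, natOp_single,
    singPrism_singPush, singPrism_realize]
  simp only [map_sub, h]

end SingularChains

section RelativeHomology

variable {M N : Type*} [AddCommGroup M] [Module ℚ M] [AddCommGroup N] [Module ℚ N]

structure IsSubcomplex (d : M →ₗ[ℚ] M) (C : ℕ → Submodule ℚ M) : Prop where
  sq_zero : ∀ x, d (d x) = 0
  map_zero : ∀ x ∈ C 0, d x = 0
  map_succ : ∀ n, ∀ x ∈ C (n + 1), d x ∈ C n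

def relCycles (d : M →ₗ[ℚ] M) (C A : ℕ → Submodule ℚ M) (n : ℕ) : Submodule ℚ M :=
  C n ⊓ (A (n - 1)).comap d

def relBds (d : M →ₗ[ℚ] M) (C A : ℕ → Submodule ℚ M) (n : ℕ) : Submodule ℚ M :=
  A n ⊔ (C (n + 1)).map d

/-- The homology of a pair of subcomplexes `A ⊆ C` of a module with a differential. -/
abbrev RelHomol (d : M →ₗ[ℚ] M) (C A : ℕ → Submodule ℚ M) (n : ℕ) :=
  relCycles d C A n ⧸ (relBds d C A n).submoduleOf (relCycles d C A n)

variable {d : M →ₗ[ℚ] M} {C A B : ℕ → Submodule ℚ M} {d' : N →ₗ[ℚ] N} {C' A' : ℕ → Submodule ℚ N}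

lemma mem_relCycles {n : ℕ} {z : M} : z ∈ relCycles d C A n ↔ z ∈ C n ∧ d z ∈ A (n - 1) := Iff.rfl

lemma mem_relBds {n : ℕ} {z : M} :
    z ∈ relBds d C A n ↔ ∃ a ∈ A n, ∃ w ∈ C (n + 1), a + d w = z := by
  simp [relBds, Submodule.mem_sup]

lemma mem_relBds_of_mem {n : ℕ} {a : M} (h : a ∈ A n) : a ∈ relBds d C A n :=
  Submodule.mem_sup_left h

lemma bd_mem_relBds {n : ℕ} {w : M} (h : w ∈ C (n + 1)) : d w ∈ relBds d C A n :=
  Submodule.mem_sup_right ⟨w, h, rfl⟩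

def relClass {n : ℕ} (z : M) (hz : z ∈ relCycles d C A n) : RelHomol d C A n :=
  Submodule.Quotient.mk ⟨z, hz⟩

lemma relClass_eq {n : ℕ} {z z' : M} (hz : z ∈ relCycles d C A n) (hz' : z' ∈ relCycles d C A n) :
    relClass z hz = relClass z' hz' ↔ z - z' ∈ relBds d C A n :=
  Submodule.Quotient.eq _

lemma relClass_eq_zero {n : ℕ} {z : M} (hz : z ∈ relCycles d C A n) :
    relClass z hz = 0 ↔ z ∈ relBds d C A n :=
  Submodule.Quotient.mk_eq_zero _

lemma relClass_add {n : ℕ} {z z' : M} (hz : z ∈ relCycles d C A n) (hz' : z' ∈ relCycles d C A n) :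
    relClass z hz + relClass z' hz' = relClass (z + z') (add_mem hz hz') := rfl

lemma relClass_smul {n : ℕ} {z : M} (q : ℚ) (hz : z ∈ relCycles d C A n) :
    q • relClass z hz = relClass (q • z) (Submodule.smul_mem _ q hz) := rfl

lemma relHom_ind {n : ℕ} {p : RelHomol d C A n → Prop}
    (h : ∀ z (hz : z ∈ relCycles d C A n), p (relClass z hz)) (x : RelHomol d C A n) : p x := by
  obtain ⟨⟨z, hz⟩, rfl⟩ := Submodule.Quotient.mk_surjective _ x
  exact h z hz

structure IsRelMap (d : M →ₗ[ℚ] M) (C A : ℕ → Submodule ℚ M) (d' : N →ₗ[ℚ] N)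
    (C' A' : ℕ → Submodule ℚ N) (φ : M →ₗ[ℚ] N) : Prop where
  comm : ∀ x, d' (φ x) = φ (d x)
  map_mem : ∀ n, ∀ x ∈ C n, φ x ∈ C' n
  map_mem_sub : ∀ n, ∀ x ∈ A n, φ x ∈ A' n

lemma IsRelMap.map_relCycles {φ : M →ₗ[ℚ] N} (h : IsRelMap d C A d' C' A' φ) {n : ℕ} {z : M}
    (hz : z ∈ relCycles d C A n) : φ z ∈ relCycles d' C' A' n :=
  mem_relCycles.2 ⟨h.map_mem n z hz.1, by rw [h.comm]; exact h.map_mem_sub _ _ hz.2⟩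

lemma IsRelMap.map_relBds {φ : M →ₗ[ℚ] N} (h : IsRelMap d C A d' C' A' φ) {n : ℕ} {z : M}
    (hz : z ∈ relBds d C A n) : φ z ∈ relBds d' C' A' n := by
  obtain ⟨a, ha, w, hw, rfl⟩ := mem_relBds.1 hz
  rw [map_add, ← h.comm]
  exact Submodule.add_mem _ (mem_relBds_of_mem (h.map_mem_sub _ _ ha))
    (bd_mem_relBds (h.map_mem _ _ hw))

def relMap {φ : M →ₗ[ℚ] N} (h : IsRelMap d C A d' C' A' φ) (n : ℕ) :
    RelHomol d C A n →ₗ[ℚ] RelHomol d' C' A' n :=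
  Submodule.mapQ _ _ (φ.restrict fun _ hz => h.map_relCycles hz) fun _ hx => h.map_relBds hx

lemma relMap_relClass {φ : M →ₗ[ℚ] N} (h : IsRelMap d C A d' C' A' φ) {n : ℕ} {z : M}
    (hz : z ∈ relCycles d C A n) :
    relMap h n (relClass z hz) = relClass (φ z) (h.map_relCycles hz) := rfl

lemma relMap_eq_of_homotopy {φ ψ : M →ₗ[ℚ] N} (hφ : IsRelMap d C A d' C' A' φ)
    (hψ : IsRelMap d C A d' C' A' ψ) (hd : IsSubcomplex d C) (T : M →ₗ[ℚ] N)
    (hT : ∀ x, d' (T x) = φ x - ψ x - T (d x)) (hTC : ∀ n, ∀ x ∈ C n, T x ∈ C' (n + 1))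
    (hTA : ∀ n, ∀ x ∈ A n, T x ∈ A' (n + 1)) (n : ℕ) : relMap hφ n = relMap hψ n := by
  refine LinearMap.ext fun x => ?_
  induction x using relHom_ind with
  | h z hz =>
    rw [relMap_relClass, relMap_relClass, relClass_eq]
    have h1 : φ z - ψ z = d' (T z) + T (d z) := by rw [hT]; abel
    rw [h1]
    refine Submodule.add_mem _ (bd_mem_relBds (hTC _ _ hz.1)) (mem_relBds_of_mem ?_)
    cases n with
    | zero => rw [hd.map_zero z hz.1, map_zero]; exact zero_mem _
    | succ n => exact hTA _ _ hz.2

lemma relMap_bijective {φ : M →ₗ[ℚ] N} (h : IsRelMap d C A d' C' A' φ) (n : ℕ)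
    (hi : ∀ z ∈ relCycles d C A n, φ z ∈ relBds d' C' A' n → z ∈ relBds d C A n)
    (hs : ∀ z' ∈ relCycles d' C' A' n, ∃ z ∈ relCycles d C A n, φ z - z' ∈ relBds d' C' A' n) :
    Function.Bijective (relMap h n) := by
  constructor
  · rw [injective_iff_map_eq_zero]
    refine relHom_ind fun z hz h0 => ?_
    rw [relMap_relClass, relClass_eq_zero] at h0
    exact (relClass_eq_zero hz).2 (hi z hz h0)
  · refine relHom_ind fun z' hz' => ?_
    obtain ⟨z, hz, hzz⟩ := hs z' hz'
    exact ⟨relClass z hz, by rw [relMap_relClass, relClass_eq]; exact hzz⟩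

lemma relMap_bijective_of_injective {φ : M →ₗ[ℚ] N} (h : IsRelMap d C A d' C' A' φ)
    (hφ : Function.Injective φ) (hC : ∀ n, ∀ y ∈ C' n, ∃ x ∈ C n, φ x = y)
    (hA : ∀ n, ∀ y ∈ A' n, ∃ x ∈ A n, φ x = y) (n : ℕ) : Function.Bijective (relMap h n) := by
  refine relMap_bijective h n ?_ ?_
  · intro z hz hb
    obtain ⟨a', ha', w', hw', e⟩ := mem_relBds.1 hb
    obtain ⟨a, ha, rfl⟩ := hA _ _ ha'
    obtain ⟨w, hw, rfl⟩ := hC _ _ hw'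
    rw [h.comm, ← map_add] at e
    exact mem_relBds.2 ⟨a, ha, w, hw, hφ e⟩
  · intro z' hz'
    obtain ⟨z, hz, rfl⟩ := hC _ _ hz'.1
    obtain ⟨a, ha, e⟩ := hA _ _ hz'.2
    refine ⟨z, mem_relCycles.2 ⟨hz, ?_⟩, by simp⟩
    rw [h.comm] at e
    rw [← hφ e]
    exact ha

/-- The connecting homomorphism of a triple of subcomplexes. -/
def relConnect (hB : IsSubcomplex d B) (A C : ℕ → Submodule ℚ M) (n : ℕ) :
    RelHomol d C B (n + 1) →ₗ[ℚ] RelHomol d B A n :=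
  Submodule.mapQ _ _ (d.restrict fun z hz => mem_relCycles.2 ⟨hz.2, by
    rw [hB.sq_zero]; exact zero_mem _⟩) fun x hx => by
      obtain ⟨b, hb, w, hw, e⟩ := mem_relBds.1 hx
      change d x.1 ∈ relBds d B A n
      rw [Submodule.subtype_apply] at e
      rw [← e, map_add, hB.sq_zero, add_zero]
      exact bd_mem_relBds hb

lemma bd_mem_relCycles (hB : IsSubcomplex d B) {n : ℕ} {z : M} (hz : z ∈ relCycles d C B (n + 1)) :
    d z ∈ relCycles d B A n :=
  mem_relCycles.2 ⟨hz.2, by rw [hB.sq_zero]; exact zero_mem _⟩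

lemma relConnect_relClass (hB : IsSubcomplex d B) {n : ℕ} {z : M}
    (hz : z ∈ relCycles d C B (n + 1)) :
    relConnect hB A C n (relClass z hz) = relClass (d z) (bd_mem_relCycles hB hz) := rfl

section Triple

variable (hBs : IsSubcomplex d B) (hAB : ∀ n, A n ≤ B n) (hBC : ∀ n, B n ≤ C n)

include hBC in
lemma isRelMap_triple_left : IsRelMap d B A d C A LinearMap.id :=
  ⟨fun _ => rfl, fun n _ hx => hBC n hx, fun _ _ hx => hx⟩

include hAB in
lemma isRelMap_triple_right : IsRelMap d C A d C B LinearMap.id :=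
  ⟨fun _ => rfl, fun _ _ hx => hx, fun n _ hx => hAB n hx⟩

include hAB in
lemma ker_relMap_triple_right (hCs : IsSubcomplex d C) (n : ℕ) :
    LinearMap.ker (relMap (isRelMap_triple_right (C := C) (d := d) hAB) n) =
      LinearMap.range (relMap (isRelMap_triple_left (A := A) (d := d) hBC) n) := by
  apply le_antisymm
  · refine relHom_ind fun z hz h0 => ?_
    rw [LinearMap.mem_ker, relMap_relClass, relClass_eq_zero] at h0
    obtain ⟨b, hb, w, hw, e⟩ := mem_relBds.1 h0
    have hb' : b ∈ relCycles d B A n := by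
      refine mem_relCycles.2 ⟨hb, ?_⟩
      have : b = z - d w := by rw [← LinearMap.id_apply (R := ℚ) z, ← e]; abel
      rw [this, map_sub, hCs.sq_zero, sub_zero]
      exact hz.2
    refine ⟨relClass b hb', ?_⟩
    rw [relMap_relClass, relClass_eq]
    have : LinearMap.id (R := ℚ) b - z = d (-w) := by
      rw [map_neg, ← LinearMap.id_apply (R := ℚ) z, ← e]; simp
    rw [this]
    exact bd_mem_relBds (neg_mem hw)
  · rintro _ ⟨y, rfl⟩
    induction y using relHom_ind with
    | h z hz =>
      rw [LinearMap.mem_ker, relMap_relClass, relMap_relClass, relClass_eq_zero]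
      exact mem_relBds_of_mem hz.1

include hAB in
lemma ker_relConnect (n : ℕ) (hBC : ∀ n, B n ≤ C n) :
    LinearMap.ker (relConnect hBs A C n) =
      LinearMap.range (relMap (isRelMap_triple_right (C := C) (d := d) hAB) (n + 1)) := by
  apply le_antisymm
  · refine relHom_ind fun z hz h0 => ?_
    rw [LinearMap.mem_ker, relConnect_relClass, relClass_eq_zero] at h0
    obtain ⟨a, ha, b, hb, e⟩ := mem_relBds.1 h0
    refine ⟨relClass (z - b) (mem_relCycles.2 ⟨Submodule.sub_mem _ hz.1 (hBC _ hb), ?_⟩), ?_⟩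
    · rw [map_sub, ← e, add_sub_cancel_right]
      exact ha
    · rw [relMap_relClass, relClass_eq, LinearMap.id_apply, sub_sub_cancel_left]
      exact mem_relBds_of_mem (neg_mem hb)
  · rintro _ ⟨y, rfl⟩
    induction y using relHom_ind with
    | h z hz =>
      rw [LinearMap.mem_ker, relMap_relClass, relConnect_relClass, relClass_eq_zero]
      exact mem_relBds_of_mem hz.2

include hAB in
lemma ker_relMap_triple_left (n : ℕ) :
    LinearMap.ker (relMap (isRelMap_triple_left (A := A) (d := d) hBC) n) =
      LinearMap.range (relConnect hBs A C n) := by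
  apply le_antisymm
  · refine relHom_ind fun z hz h0 => ?_
    rw [LinearMap.mem_ker, relMap_relClass, relClass_eq_zero] at h0
    obtain ⟨a, ha, w, hw, e⟩ := mem_relBds.1 h0
    rw [LinearMap.id_apply] at e
    have hw' : d w = z - a := by rw [← e]; abel
    refine ⟨relClass w (mem_relCycles.2 ⟨hw, ?_⟩), ?_⟩
    · rw [hw']
      exact Submodule.sub_mem _ hz.1 (hAB _ ha)
    · rw [relConnect_relClass, relClass_eq, hw', sub_sub_cancel_left]
      exact mem_relBds_of_mem (neg_mem ha)
  · rintro _ ⟨y, rfl⟩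
    induction y using relHom_ind with
    | h z hz =>
      rw [LinearMap.mem_ker, relConnect_relClass, relMap_relClass, relClass_eq_zero]
      exact bd_mem_relBds hz.1

lemma relMap_triple_right_zero_surjective (hCs : IsSubcomplex d C) :
    Function.Surjective (relMap (isRelMap_triple_right (C := C) (d := d) hAB) 0) := by
  refine relHom_ind fun z hz => ?_
  exact ⟨relClass z (mem_relCycles.2 ⟨hz.1, by rw [hCs.map_zero z hz.1]; exact zero_mem _⟩), rfl⟩

end Triple

end RelativeHomology

section SingularSubcomplexes
open AffSpace

variable {X Y Z K : Type*} [TopologicalSpace X] [TopologicalSpace Y] [TopologicalSpace Z]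
  [TopologicalSpace K] [AffSpace K]

/-- Sequences of given length. -/
abbrev seqsOf (K : Type*) (n : ℕ) : Submodule ℚ (SeqChain K) := Finsupp.supported ℚ ℚ {s | s.1 = n}

/-- Singular `n`-chains in a subset. -/
def chainsIn (U : Set X) (n : ℕ) : Submodule ℚ (SingChain X) :=
  Finsupp.supported ℚ ℚ {s | s.1 = n ∧ Set.range s.2 ⊆ U}

lemma supported_induction {S M : Type*} [AddCommGroup M] [Module ℚ M] {p : Set S}
    {φ : (S →₀ ℚ) →ₗ[ℚ] M} {Q : Submodule ℚ M} (h : ∀ s ∈ p, φ (Finsupp.single s 1) ∈ Q)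
    {x : S →₀ ℚ} (hx : x ∈ Finsupp.supported ℚ ℚ p) : φ x ∈ Q := by
  rw [Finsupp.supported_eq_span_single] at hx
  have : Submodule.span ℚ ((fun i => Finsupp.single i (1 : ℚ)) '' p) ≤ Q.comap φ := by
    rw [Submodule.span_le]
    rintro _ ⟨s, hs, rfl⟩
    exact h s hs
  exact this hx

lemma single_mem_chainsIn {U : Set X} {n : ℕ} {σ : C(stdSimplex ℝ (Fin (n + 1)), X)}
    (h : Set.range σ ⊆ U) : Finsupp.single ⟨n, σ⟩ 1 ∈ chainsIn U n :=
  Finsupp.single_mem_supported _ _ ⟨rfl, h⟩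

lemma chainsIn_mono {U V : Set X} (h : U ⊆ V) (n : ℕ) : chainsIn U n ≤ chainsIn V n :=
  Finsupp.supported_mono fun _ hs => ⟨hs.1, hs.2.trans h⟩

lemma chainsIn_inter (U V : Set X) (n : ℕ) : chainsIn (U ∩ V) n = chainsIn U n ⊓ chainsIn V n := by
  rw [chainsIn, chainsIn, chainsIn, ← Finsupp.supported_inter]
  congr 1
  ext s
  simp only [Set.mem_ofPred_eq, Set.subset_inter_iff, Set.mem_inter_iff]
  tauto

lemma singPush_mem {f : C(X, Y)} {U : Set X} {V : Set Y} (h : Set.MapsTo f U V) {n : ℕ}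
    {x : SingChain X} (hx : x ∈ chainsIn U n) : singPush f x ∈ chainsIn V n := by
  refine supported_induction ?_ hx
  rintro ⟨m, σ⟩ ⟨rfl, hs⟩
  rw [singPush_single]
  refine single_mem_chainsIn ?_
  rintro _ ⟨t, rfl⟩
  exact h (hs ⟨t, rfl⟩)

lemma realize_mem {n : ℕ} {x : SeqChain K} (hx : x ∈ seqsOf K (n + 1)) :
    realize x ∈ chainsIn (Set.univ : Set K) n := by
  refine supported_induction ?_ hx
  rintro ⟨m, w⟩ h
  obtain rfl : m = n + 1 := h
  rw [realize_single_succ]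
  exact single_mem_chainsIn (Set.subset_univ _)

lemma natOp_mem {τ : ∀ n : ℕ, SeqChain (stdSimplex ℝ (Fin (n + 1)))} {n m : ℕ}
    (hτ : τ n ∈ seqsOf _ (m + 1)) {U : Set X} {x : SingChain X} (hx : x ∈ chainsIn U n) :
    natOp τ x ∈ chainsIn U m := by
  refine supported_induction ?_ hx
  rintro ⟨k, σ⟩ ⟨rfl, hs⟩
  rw [natOp_single]
  exact singPush_mem (fun t _ => hs ⟨t, rfl⟩) (realize_mem hτ)

lemma single_mem_seqsOf {K : Type*} {n : ℕ} (w : Fin n → K) :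
    Finsupp.single ⟨n, w⟩ 1 ∈ seqsOf K n := Finsupp.single_mem_supported _ _ rfl

lemma seqCone_mem {K : Type*} (v : K) {n : ℕ} {x : SeqChain K} (hx : x ∈ seqsOf K n) :
    seqCone v x ∈ seqsOf K (n + 1) := by
  refine supported_induction ?_ hx
  rintro ⟨k, w⟩ rfl
  rw [seqCone_single]
  exact single_mem_seqsOf _

lemma seqBd_mem {K : Type*} {n : ℕ} {x : SeqChain K} (hx : x ∈ seqsOf K (n + 1)) :
    seqBd x ∈ seqsOf K n := by
  refine supported_induction ?_ hx
  rintro ⟨k, w⟩ h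
  obtain rfl : k = n + 1 := h
  exact seqBd_single_mem w

lemma seqSd_mem {K : Type*} (b : ∀ n : ℕ, (Fin (n + 1) → K) → K) (k : ℕ) {n : ℕ} {x : SeqChain K}
    (hx : x ∈ seqsOf K n) : seqSd b k x ∈ seqsOf K n := by
  induction k generalizing n x with
  | zero => exact hx
  | succ k ih =>
    refine supported_induction ?_ hx
    rintro ⟨_ | n, w⟩ rfl
    · rw [seqSd_succ_zero]
      exact single_mem_seqsOf _
    · rw [seqSd_succ_succ]
      exact seqCone_mem _ (ih (seqBd_mem (single_mem_seqsOf _)))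

lemma seqSdHom_mem {K : Type*} (b : ∀ n : ℕ, (Fin (n + 1) → K) → K) (k : ℕ) {n : ℕ}
    {x : SeqChain K} (hx : x ∈ seqsOf K n) : seqSdHom b k x ∈ seqsOf K (n + 1) := by
  induction k generalizing n x with
  | zero => simp [seqSdHom]
  | succ k ih =>
    refine supported_induction ?_ hx
    rintro ⟨_ | n, w⟩ rfl
    · rw [seqSdHom_succ_zero]
      exact zero_mem _
    · rw [seqSdHom_succ_succ]
      exact seqCone_mem _ (Submodule.sub_mem _ (Submodule.sub_mem _ (single_mem_seqsOf _)
        (seqSd_mem _ _ (single_mem_seqsOf _)))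
        (ih (seqBd_mem (single_mem_seqsOf _))))

lemma singBd_mem {U : Set X} {n : ℕ} {x : SingChain X} (hx : x ∈ chainsIn U (n + 1)) :
    singBd x ∈ chainsIn U n := natOp_mem (seqBd_single_mem _) hx

lemma singBd_eq_zero {U : Set X} {x : SingChain X} (hx : x ∈ chainsIn U 0) : singBd x = 0 := by
  rw [← Submodule.mem_bot ℚ]
  refine supported_induction ?_ hx
  rintro ⟨k, σ⟩ ⟨rfl, -⟩
  rw [singBd_single_zero]
  exact zero_mem _

lemma isSubcomplex_chainsIn (U : Set X) : IsSubcomplex singBd (chainsIn U) where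
  sq_zero := singBd_singBd
  map_zero _ hx := singBd_eq_zero hx
  map_succ _ _ hx := singBd_mem hx

lemma singSd_mem {U : Set X} {n : ℕ} {x : SingChain X} (hx : x ∈ chainsIn U n) :
    singSd x ∈ chainsIn U n := natOp_mem (seqSd_mem _ _ (single_mem_seqsOf _)) hx

lemma singSdHom_mem {U : Set X} {n : ℕ} {x : SingChain X} (hx : x ∈ chainsIn U n) :
    singSdHom x ∈ chainsIn U (n + 1) := natOp_mem (seqSdHom_mem _ _ (single_mem_seqsOf _)) hx

lemma seqPrism_mem {K L : Type*} (p q : L) {n : ℕ} {x : SeqChain K} (hx : x ∈ seqsOf K n) :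
    seqPrism p q x ∈ seqsOf (K × L) (n + 1) := by
  refine supported_induction ?_ hx
  rintro ⟨n, w⟩ rfl
  simp only [seqPrism, Finsupp.linearCombination_single, one_smul]
  clear hx
  induction n with
  | zero => exact zero_mem _
  | succ n ih => exact Submodule.sub_mem _ (single_mem_seqsOf _) (seqCone_mem _ (ih _))

lemma singPrism_mem {U : Set X} {n : ℕ} {x : SingChain X} (hx : x ∈ chainsIn U n) :
    singPrism x ∈ chainsIn (U ×ˢ (Set.univ : Set unitInterval)) (n + 1) := by
  refine supported_induction ?_ hx
  rintro ⟨k, σ⟩ ⟨rfl, hs⟩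
  rw [singPrism_single]
  have h : Set.MapsTo (σ.prodMap (ContinuousMap.id unitInterval)) Set.univ (U ×ˢ Set.univ) :=
    fun t _ => ⟨hs ⟨t.1, rfl⟩, trivial⟩
  exact singPush_mem h (realize_mem (seqPrism_mem _ _ (single_mem_seqsOf _)))

/-- Singular homology of the pair `(U, V)` of subsets of a space. -/
abbrev SingHom (U V : Set X) (n : ℕ) := RelHomol (singBd (X := X)) (chainsIn U) (chainsIn V) n

lemma isRelMap_singPush {f : C(X, Y)} {U V : Set X} {U' V' : Set Y} (hU : Set.MapsTo f U U')
    (hV : Set.MapsTo f V V') :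
    IsRelMap singBd (chainsIn U) (chainsIn V) singBd (chainsIn U') (chainsIn V') (singPush f) :=
  ⟨singBd_singPush f, fun _ _ hx => singPush_mem hU hx, fun _ _ hx => singPush_mem hV hx⟩

/-- The map induced on relative singular homology. -/
noncomputable def singMap (f : C(X, Y)) {U V : Set X} {U' V' : Set Y} (hU : Set.MapsTo f U U')
    (hV : Set.MapsTo f V V') (n : ℕ) : SingHom U V n →ₗ[ℚ] SingHom U' V' n :=
  relMap (isRelMap_singPush hU hV) n

lemma singMap_singMap (f : C(X, Y)) (g : C(Y, Z)) {U V : Set X} {U' V' : Set Y} {U'' V'' : Set Z}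
    (hU : Set.MapsTo f U U') (hV : Set.MapsTo f V V') (hU' : Set.MapsTo g U' U'')
    (hV' : Set.MapsTo g V' V'') (n : ℕ) (x : SingHom U V n) :
    singMap g hU' hV' n (singMap f hU hV n x) =
      singMap (g.comp f) (hU'.comp hU) (hV'.comp hV) n x := by
  induction x using relHom_ind with
  | h z hz =>
    simp only [singMap, relMap_relClass, singPush_singPush]

lemma singMap_id {U V : Set X} (n : ℕ) (x : SingHom U V n) :
    singMap (ContinuousMap.id X) (Set.mapsTo_id U) (Set.mapsTo_id V) n x = x := by
  induction x using relHom_ind with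
  | h z hz => simp only [singMap, relMap_relClass, singPush_id]

lemma singMap_eq_of_homotopy (F : C(X × unitInterval, Y)) {U V : Set X} {U' V' : Set Y}
    (hU : ∀ x ∈ U, ∀ t, F (x, t) ∈ U') (hV : ∀ x ∈ V, ∀ t, F (x, t) ∈ V') {f g : C(X, Y)}
    (hf : ∀ x, F (x, 1) = f x) (hg : ∀ x, F (x, 0) = g x) (hfU : Set.MapsTo f U U')
    (hfV : Set.MapsTo f V V') (hgU : Set.MapsTo g U U') (hgV : Set.MapsTo g V V') (n : ℕ) :
    singMap f hfU hfV n = singMap g hgU hgV n := by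
  have hf' : F.comp (prodConst 1) = f := ContinuousMap.ext hf
  have hg' : F.comp (prodConst 0) = g := ContinuousMap.ext hg
  refine relMap_eq_of_homotopy _ _ (isSubcomplex_chainsIn U) (singPush F ∘ₗ singPrism) ?_ ?_ ?_ n
  · intro x
    rw [LinearMap.comp_apply, LinearMap.comp_apply, singBd_singPush, singBd_singPrism, map_sub,
      map_sub, singPush_singPush, singPush_singPush, hf', hg']
  · exact fun n x hx => singPush_mem (fun p hp => hU _ hp.1 _) (singPrism_mem hx)
  · exact fun n x hx => singPush_mem (fun p hp => hV _ hp.1 _) (singPrism_mem hx)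

end SingularSubcomplexes

section SmallSimplices
open AffSpace

variable {N : ℕ}

lemma dist_comb_le {n : ℕ} (w : Fin (n + 1) → stdSimplex ℝ (Fin (N + 1)))
    (t : stdSimplex ℝ (Fin (n + 1))) {c : stdSimplex ℝ (Fin (N + 1))} {r : ℝ}
    (h : ∀ i, dist (w i) c ≤ r) : dist (comb w t) c ≤ r := by
  change ∑ i, t.1 i • (w i).1 ∈ Metric.closedBall c.1 r
  exact (convex_closedBall c.1 r).sum_mem (fun i _ => t.2.1 i) t.2.2 fun i _ => h i

lemma dist_affBary_le {n : ℕ} (w : Fin (n + 1) → stdSimplex ℝ (Fin (N + 1))) {D : ℝ}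
    (h : ∀ i j, dist (w i) (w j) ≤ D) (i : Fin (n + 1)) :
    dist (affBary _ n w) (w i) ≤ n / (n + 1) * D := by
  have h1 : (affBary _ n w).1 - (w i).1 = ∑ j, ((n : ℝ) + 1)⁻¹ • ((w j).1 - (w i).1) := by
    have h2 : (affBary _ n w).1 = ∑ j, ((n : ℝ) + 1)⁻¹ • (w j).1 := by
      change ∑ j, (stdSimplex.barycenter (𝕜 := ℝ) (X := Fin (n + 1))) j • (w j).1 = _
      refine Finset.sum_congr rfl fun j _ => congrArg (· • (w j).1) ?_
      refine (stdSimplex.barycenter_apply (𝕜 := ℝ) j).trans ?_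
      simp
    rw [h2]
    simp only [smul_sub, Finset.sum_sub_distrib, Finset.sum_const, Finset.card_univ,
      Fintype.card_fin]
    rw [← Nat.cast_smul_eq_nsmul ℝ, smul_smul]
    push_cast
    rw [mul_inv_cancel₀ (by positivity), one_smul]
  rw [Subtype.dist_eq, dist_eq_norm, h1]
  refine (norm_sum_le _ _).trans ?_
  rw [← Finset.add_sum_erase _ _ (Finset.mem_univ i)]
  simp only [sub_self, smul_zero, norm_zero, zero_add]
  refine (Finset.sum_le_card_nsmul _ _ (((n : ℝ) + 1)⁻¹ * D) fun j _ => ?_).trans ?_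
  · rw [norm_smul, Real.norm_of_nonneg (by positivity)]
    gcongr
    exact (dist_eq_norm (w j).1 (w i).1).symm.trans_le (h j i)
  · rw [Finset.card_erase_of_mem (Finset.mem_univ i), Finset.card_univ, Fintype.card_fin,
      nsmul_eq_mul]
    apply le_of_eq
    simp only [Nat.add_sub_cancel]
    ring

lemma seqSd_small (n : ℕ) (w : Fin n → stdSimplex ℝ (Fin (N + 1))) :
    seqSd (affBary _) n (Finsupp.single ⟨n, w⟩ 1) ∈ Finsupp.supported ℚ ℚ
      {s : Σ n : ℕ, Fin n → stdSimplex ℝ (Fin (N + 1)) | s.1 = n ∧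
        (∀ c r, (∀ i, dist (w i) c ≤ r) → ∀ i, dist (s.2 i) c ≤ r) ∧
        ∀ D, 0 ≤ D → (∀ i j, dist (w i) (w j) ≤ D) →
          ∀ i j, dist (s.2 i) (s.2 j) ≤ ((n : ℝ) - 1) / n * D} := by
  induction n with
  | zero =>
    exact Finsupp.single_mem_supported _ _ ⟨rfl, fun _ _ h => h, fun _ _ _ i => i.elim0⟩
  | succ n ih =>
    rw [seqSd_succ_succ, seqBd_single_succ, map_sum, map_sum]
    refine Submodule.sum_mem _ fun a _ => ?_
    rw [map_smul, map_smul]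
    refine Submodule.smul_mem _ _ (supported_induction ?_ (ih _))
    rintro ⟨m, v⟩ ⟨hm, h1, h2⟩
    dsimp only at hm h1 h2
    subst hm
    rw [seqCone_single]
    have h3 : ∀ c r, (∀ i, dist (w i) c ≤ r) →
        ∀ i, dist ((Fin.cons (affBary _ m w) v : Fin (m + 1) → _) i) c ≤ r := by
      intro c r h i
      refine Fin.cases ?_ (fun i => ?_) i
      · exact dist_comb_le w _ h
      · exact h1 c r (fun i => h _) i
    refine Finsupp.single_mem_supported _ _ ⟨rfl, h3, fun D hD h => ?_⟩
    have h4 : ∀ i, dist ((Fin.cons (affBary _ m w) v : Fin (m + 1) → _) i)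
        (affBary _ m w) ≤ m / (m + 1) * D :=
      h3 _ _ fun i => by rw [dist_comm]; exact dist_affBary_le w h i
    push_cast
    rw [add_sub_cancel_right]
    intro i j
    refine Fin.cases ?_ (fun i => ?_) i
    · rw [dist_comm]; exact h4 j
    refine Fin.cases ?_ (fun j => ?_) j
    · exact h4 _
    · refine (h2 D hD (fun _ _ => h _ _) i j).trans ?_
      gcongr ?_ * D
      have : 0 < (m : ℝ) := by exact_mod_cast Fin.pos i
      rw [div_le_div_iff₀ this (by positivity)]
      nlinarith

/-- Chains of sequences of points in a simplex of small diameter. -/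
abbrev smallSeqs (N n : ℕ) (D : ℝ) : Submodule ℚ (SeqChain (stdSimplex ℝ (Fin (N + 1)))) :=
  Finsupp.supported ℚ ℚ {s | s.1 = n ∧ ∀ i j, dist (s.2 i) (s.2 j) ≤ D}

lemma seqSd_mem_smallSeqs {n : ℕ} {D : ℝ} (hD : 0 ≤ D)
    {x : SeqChain (stdSimplex ℝ (Fin (N + 1)))} (hx : x ∈ smallSeqs N n D) :
    seqSd (affBary _) n x ∈ smallSeqs N n (((n : ℝ) - 1) / n * D) := by
  refine supported_induction ?_ hx
  rintro ⟨n, w⟩ ⟨rfl, h⟩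
  refine Finsupp.supported_mono ?_ (seqSd_small n w)
  exact fun s hs => ⟨hs.1, hs.2.2 D hD h⟩

lemma exists_singSd_iterate_fundSeq (n m : ℕ) : ∃ x ∈ smallSeqs n (n + 1) ((n / (n + 1)) ^ m * 2),
    ∀ {X : Type*} [TopologicalSpace X] (σ : C(stdSimplex ℝ (Fin (n + 1)), X)),
      (singSd^[m]) (Finsupp.single ⟨n, σ⟩ 1) = singPush σ (realize x) := by
  induction m with
  | zero =>
    refine ⟨fundSeq n, Finsupp.single_mem_supported _ _ ⟨rfl, fun i j => ?_⟩, fun σ => ?_⟩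
    · rw [pow_zero, one_mul]
      refine (dist_pi_le_iff zero_le_two).2 fun a => ?_
      have h1 : ∀ t : stdSimplex ℝ (Fin (n + 1)), 0 ≤ t.1 a ∧ t.1 a ≤ 1 := fun t =>
        ⟨t.2.1 a, t.2.2 ▸ Finset.single_le_sum (fun b _ => t.2.1 b) (Finset.mem_univ a)⟩
      rw [Real.dist_eq, abs_le]
      constructor
      · linarith [h1 (stdSimplex.vertex i), h1 (stdSimplex.vertex j)]
      · linarith [h1 (stdSimplex.vertex i), h1 (stdSimplex.vertex j)]
    · simp [realize_fundSeq, singPush_single]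
  | succ m ih =>
    obtain ⟨x, hx, h⟩ := ih
    refine ⟨seqSd (affBary _) (n + 1) x, ?_, fun σ => ?_⟩
    · have := seqSd_mem_smallSeqs (by positivity) hx
      push_cast at this
      rw [add_sub_cancel_right] at this
      rwa [pow_succ', mul_assoc]
    · rw [Function.iterate_succ_apply', h, singSd, natOp_singPush]
      exact congrArg (singPush σ) (singSd_realize (Finsupp.supported_mono (fun s hs => hs.1) hx))

variable {X Y : Type*} [TopologicalSpace X] [TopologicalSpace Y]

lemma exists_singSd_iterate_single {V W : Set X} (hV : IsOpen V) (hW : IsOpen W) {n : ℕ}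
    (σ : C(stdSimplex ℝ (Fin (n + 1)), X)) (hσ : Set.range σ ⊆ V ∪ W) :
    ∃ M, ∀ m, M ≤ m → (singSd^[m]) (Finsupp.single ⟨n, σ⟩ 1) ∈ chainsIn V n ⊔ chainsIn W n := by
  obtain ⟨δ, hδ, H⟩ := lebesgue_number_lemma_of_metric (s := Set.univ)
    (c := fun b : Bool => σ ⁻¹' (if b then V else W)) isCompact_univ (fun b => by
      cases b
      · exact hW.preimage σ.continuous
      · exact hV.preimage σ.continuous) (fun t _ => by
        rcases hσ ⟨t, rfl⟩ with h | h
        · exact Set.mem_iUnion.2 ⟨true, h⟩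
        · exact Set.mem_iUnion.2 ⟨false, h⟩)
  have hlim : Filter.Tendsto (fun m : ℕ => ((n : ℝ) / (n + 1)) ^ m * 2) Filter.atTop (nhds 0) := by
    have := (tendsto_pow_atTop_nhds_zero_of_lt_one (r := (n : ℝ) / (n + 1)) (by positivity)
      (by rw [div_lt_one (by positivity)]; linarith)).mul_const 2
    simpa using this
  obtain ⟨M, hM⟩ := Filter.eventually_atTop.1 (hlim.eventually (gt_mem_nhds hδ))
  refine ⟨M, fun m hm => ?_⟩
  obtain ⟨x, hx, h⟩ := exists_singSd_iterate_fundSeq n m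
  rw [h]
  change (singPush σ ∘ₗ realize) x ∈ _
  refine supported_induction ?_ hx
  rintro ⟨k, w⟩ ⟨hk, hw⟩
  dsimp only at hk hw
  subst hk
  rw [LinearMap.comp_apply, realize_single_succ, singPush_single]
  obtain ⟨b, hb⟩ := H (w 0) trivial
  have hr : Set.range (σ.comp (comb w)) ⊆ if b then V else W := by
    rintro _ ⟨t, rfl⟩
    refine hb ?_
    exact (dist_comb_le w t fun i => hw i 0).trans_lt (hM m hm)
  cases b
  · exact Submodule.mem_sup_right (single_mem_chainsIn hr)
  · exact Submodule.mem_sup_left (single_mem_chainsIn hr)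

lemma exists_singSd_iterate {V W : Set X} (hV : IsOpen V) (hW : IsOpen W) {n : ℕ}
    {x : SingChain X} (hx : x ∈ chainsIn (V ∪ W) n) :
    ∃ M, ∀ m, M ≤ m → (singSd^[m]) x ∈ chainsIn V n ⊔ chainsIn W n := by
  rw [chainsIn, Finsupp.supported_eq_span_single] at hx
  induction hx using Submodule.span_induction with
  | mem x h =>
    obtain ⟨⟨m, σ⟩, ⟨rfl, hs⟩, rfl⟩ := h
    exact exists_singSd_iterate_single hV hW σ hs
  | zero =>
    refine ⟨0, fun m _ => ?_⟩
    rw [← Module.End.coe_pow, map_zero]; exact zero_mem _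
  | add x y _ _ hx hy =>
    obtain ⟨M, hM⟩ := hx
    obtain ⟨M', hM'⟩ := hy
    refine ⟨max M M', fun m hm => ?_⟩
    rw [← Module.End.coe_pow, map_add, Module.End.coe_pow]
    exact add_mem (hM m ((le_max_left _ _).trans hm)) (hM' m ((le_max_right _ _).trans hm))
  | smul c x _ hx =>
    obtain ⟨M, hM⟩ := hx
    refine ⟨M, fun m hm => ?_⟩
    rw [← Module.End.coe_pow, map_smul, Module.End.coe_pow]
    exact Submodule.smul_mem _ _ (hM m hm)

lemma singSd_pow_mem {U : Set X} {n : ℕ} {x : SingChain X} (hx : x ∈ chainsIn U n) (m : ℕ) :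
    (singSd ^ m) x ∈ chainsIn U n := by
  induction m with
  | zero => exact hx
  | succ m ih => rw [pow_succ', Module.End.mul_apply]; exact singSd_mem ih

lemma singBd_singSd_pow (m : ℕ) (x : SingChain X) :
    singBd ((singSd ^ m) x) = (singSd ^ m) (singBd x) := by
  induction m with
  | zero => rfl
  | succ m ih => rw [pow_succ', Module.End.mul_apply, Module.End.mul_apply, singBd_singSd, ih]

lemma exists_singSd_iterate_homotopy (X : Type*) [TopologicalSpace X] (m : ℕ) :
    ∃ T : SingChain X →ₗ[ℚ] SingChain X,
      (∀ (U : Set X) n, ∀ x ∈ chainsIn U n, T x ∈ chainsIn U (n + 1)) ∧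
      ∀ x, x - (singSd^[m]) x = singBd (T x) + T (singBd x) := by
  induction m with
  | zero => exact ⟨0, fun U n x _ => zero_mem _, fun x => by simp⟩
  | succ m ih =>
    obtain ⟨T, hT, h⟩ := ih
    refine ⟨T + singSdHom ∘ₗ singSd ^ m, fun U n x hx => ?_, fun x => ?_⟩
    · exact add_mem (hT U n x hx) (singSdHom_mem (singSd_pow_mem hx m))
    · simp only [LinearMap.add_apply, LinearMap.comp_apply, map_add, singBd_singSdHom,
        singBd_singSd_pow]
      have := h x
      rw [← Module.End.coe_pow] at this ⊢
      rw [pow_succ', Module.End.mul_apply]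
      rw [sub_eq_iff_eq_add] at this
      nth_rewrite 1 [this]
      abel

lemma isRelMap_inclusion {U V U' V' : Set X} (hU : U ⊆ U') (hV : V ⊆ V') :
    IsRelMap singBd (chainsIn U) (chainsIn V) singBd (chainsIn U') (chainsIn V') LinearMap.id :=
  ⟨fun _ => rfl, fun n _ hx => chainsIn_mono hU n hx, fun n _ hx => chainsIn_mono hV n hx⟩

/-- The map on homology of pairs of subsets induced by an inclusion. -/
noncomputable def singIncl {U V U' V' : Set X} (hU : U ⊆ U') (hV : V ⊆ V') (n : ℕ) :
    SingHom U V n →ₗ[ℚ] SingHom U' V' n := relMap (isRelMap_inclusion hU hV) n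

/-- Excision. -/
theorem singIncl_bijective {V W : Set X} (hV : IsOpen V) (hW : IsOpen W) (n : ℕ) :
    Function.Bijective (singIncl (Set.subset_union_left : V ⊆ V ∪ W)
      (Set.inter_subset_right : V ∩ W ⊆ W) n) := by
  refine relMap_bijective _ n ?_ ?_
  · intro z hz hb
    obtain ⟨b, hb, w, hw, e⟩ := mem_relBds.1 hb
    rw [LinearMap.id_apply] at e
    obtain ⟨M, hM⟩ := exists_singSd_iterate hV hW hw
    obtain ⟨T, hT, h⟩ := exists_singSd_iterate_homotopy X M
    obtain ⟨w1, hw1, w2, hw2, e'⟩ := Submodule.mem_sup.1 (hM M le_rfl)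
    rw [← Module.End.coe_pow] at e' h
    have h1 : (singSd ^ M) z - singBd w1 = (singSd ^ M) b + singBd w2 := by
      rw [← e, map_add, ← singBd_singSd_pow, ← e', map_add]
      abel
    have h2 : (singSd ^ M) z - singBd w1 ∈ chainsIn (V ∩ W) n := by
      rw [chainsIn_inter]
      refine ⟨sub_mem (singSd_pow_mem hz.1 M) (singBd_mem hw1), ?_⟩
      rw [h1]
      exact add_mem (singSd_pow_mem hb M) (singBd_mem hw2)
    have h3 : T (singBd z) ∈ chainsIn (V ∩ W) n := by
      cases n with
      | zero => rw [singBd_eq_zero hz.1, map_zero]; exact zero_mem _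
      | succ n => exact hT _ _ _ hz.2
    refine mem_relBds.2 ⟨_, add_mem h2 h3, w1 + T z, add_mem hw1 (hT _ _ _ hz.1), ?_⟩
    rw [map_add]
    have := h z
    rw [sub_eq_iff_eq_add] at this
    conv_rhs => rw [this]
    abel
  · intro z hz
    obtain ⟨M, hM⟩ := exists_singSd_iterate hV hW hz.1
    obtain ⟨T, hT, h⟩ := exists_singSd_iterate_homotopy X M
    obtain ⟨a, ha, b, hb, e⟩ := Submodule.mem_sup.1 (hM M le_rfl)
    rw [← Module.End.coe_pow] at e h
    have h3 : T (singBd z) ∈ chainsIn W n := by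
      cases n with
      | zero => rw [singBd_eq_zero hz.1, map_zero]; exact zero_mem _
      | succ n => exact hT _ _ _ hz.2
    refine ⟨a, mem_relCycles.2 ⟨ha, ?_⟩, ?_⟩
    · cases n with
      | zero => rw [singBd_eq_zero ha]; exact zero_mem _
      | succ n =>
        rw [chainsIn_inter]
        refine ⟨singBd_mem ha, ?_⟩
        have : singBd a = (singSd ^ M) (singBd z) - singBd b := by
          rw [← singBd_singSd_pow, ← e, map_add]; abel
        rw [this]
        exact sub_mem (singSd_pow_mem hz.2 M) (singBd_mem hb)
    · rw [LinearMap.id_apply]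
      have h4 : a - z = (- b - T (singBd z)) + singBd (- T z) := by
        have := h z
        rw [← e, sub_eq_iff_eq_add] at this
        nth_rewrite 1 [this]
        rw [map_neg]
        abel
      rw [h4]
      exact add_mem (mem_relBds_of_mem (sub_mem (neg_mem hb) h3))
        (bd_mem_relBds (neg_mem (hT _ _ _ hz.1)))

lemma exists_singPush_eq {f : C(X, Y)} (hf : Topology.IsEmbedding f) {U : Set X} {n : ℕ}
    {y : SingChain Y} (hy : y ∈ chainsIn (f '' U) n) : ∃ x ∈ chainsIn U n, singPush f x = y := by
  refine supported_induction (φ := LinearMap.id) (Q := (chainsIn U n).map (singPush f)) ?_ hy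
  rintro ⟨m, σ⟩ ⟨rfl, hs⟩
  have h : ∀ t, ∃ x ∈ U, f x = σ t := fun t => hs ⟨t, rfl⟩
  choose τ hτ h using h
  have hc : Continuous τ := by
    rw [hf.continuous_iff]
    convert σ.continuous using 1
    exact funext h
  refine ⟨Finsupp.single ⟨m, ⟨τ, hc⟩⟩ 1, single_mem_chainsIn ?_, ?_⟩
  · rintro _ ⟨t, rfl⟩; exact hτ t
  · rw [singPush_single]
    congr 2
    exact ContinuousMap.ext h

lemma singPush_injective {f : C(X, Y)} (hf : Function.Injective f) :
    Function.Injective (singPush f) := by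
  refine Finsupp.mapDomain_injective ?_
  rintro ⟨n, σ⟩ ⟨m, τ⟩ h
  simp only [Sigma.mk.injEq] at h
  obtain ⟨rfl, h⟩ := h
  congr 1
  ext t
  exact hf (DFunLike.congr_fun (eq_of_heq h) t)

theorem singMap_bijective_of_isEmbedding {f : C(X, Y)} (hf : Topology.IsEmbedding f) (U V : Set X)
    (n : ℕ) : Function.Bijective (singMap f (Set.mapsTo_image f U) (Set.mapsTo_image f V) n) :=
  relMap_bijective_of_injective _ (singPush_injective hf.injective)
    (fun _ _ hy => exists_singPush_eq hf hy) (fun _ _ hy => exists_singPush_eq hf hy) n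

end SmallSimplices

section Vanishing

variable {X Y : Type*} [TopologicalSpace X] [TopologicalSpace Y]

lemma singMap_eq_zero {f : C(X, Y)} {U V : Set X} {U' V' : Set Y} (hU : Set.MapsTo f U U')
    (hV : Set.MapsTo f V V') (h : Set.MapsTo f U V') (n : ℕ) : singMap f hU hV n = 0 := by
  refine LinearMap.ext fun x => ?_
  induction x using relHom_ind with
  | h z hz =>
    rw [singMap, relMap_relClass, LinearMap.zero_apply, relClass_eq_zero]
    exact mem_relBds_of_mem (singPush_mem h hz.1)

/-- The straight-line homotopy. -/
noncomputable def lineHomotopy {E : Type*} [NormedAddCommGroup E] [NormedSpace ℝ E] (f : C(E, E)) :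
    C(E × unitInterval, E) where
  toFun p := AffineMap.lineMap p.1 (f p.1) (p.2 : ℝ)
  continuous_toFun := by
    simp only [AffineMap.lineMap_apply_module]
    fun_prop

lemma singMap_eq_id_of_line {E : Type*} [NormedAddCommGroup E] [NormedSpace ℝ E] (f : C(E, E))
    {U V : Set E} (hU : ∀ x ∈ U, ∀ t : unitInterval, AffineMap.lineMap x (f x) (t : ℝ) ∈ U)
    (hV : ∀ x ∈ V, ∀ t : unitInterval, AffineMap.lineMap x (f x) (t : ℝ) ∈ V)
    (hfU : Set.MapsTo f U U) (hfV : Set.MapsTo f V V) (n : ℕ) (x : SingHom U V n) :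
    singMap f hfU hfV n x = x := by
  rw [singMap_eq_of_homotopy (g := ContinuousMap.id E) (lineHomotopy f) hU hV
    (by simp [lineHomotopy]) (by simp [lineHomotopy]) hfU hfV (Set.mapsTo_id U) (Set.mapsTo_id V),
    singMap_id]

noncomputable def constChain (x : X) (n : ℕ) : SingChain X :=
  Finsupp.single ⟨n, ContinuousMap.const _ x⟩ 1

lemma singPush_const_mem (y : Y) {U : Set X} {n : ℕ} {z : SingChain X} (hz : z ∈ chainsIn U n) :
    ∃ q : ℚ, singPush (ContinuousMap.const X y) z = q • constChain y n := by
  have : singPush (ContinuousMap.const X y) z ∈ Submodule.span ℚ {constChain y n} := by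
    refine supported_induction ?_ hz
    rintro ⟨m, σ⟩ ⟨rfl, -⟩
    rw [singPush_single]
    exact Submodule.mem_span_singleton_self _
  obtain ⟨q, hq⟩ := Submodule.mem_span_singleton.1 this
  exact ⟨q, hq.symm⟩

lemma singBd_constChain (x : X) (n : ℕ) :
    singBd (constChain x (n + 1)) = if Even (n + 1) then constChain x n else 0 := by
  rw [constChain, singBd_single_succ]
  have : ∀ i : Fin (n + 2), (ContinuousMap.const (stdSimplex ℝ (Fin (n + 1 + 1))) x).comp
      ⟨_, stdSimplex.continuous_map i.succAbove⟩ = ContinuousMap.const _ x := fun i => rfl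
  simp only [this, ← Finset.sum_smul]
  rw [Fin.sum_univ_eq_sum_range (fun i => (-1 : ℚ) ^ i), Finset.range_eq_Ico]
  rw [← Finset.range_eq_Ico, neg_one_geom_sum]
  split_ifs with h1 h2 h2
  · exact absurd h1 (by grind)
  · simp
  · simp [constChain]
  · exact absurd h1 (by grind)

noncomputable def augmentation : SingChain X →ₗ[ℚ] ℚ := Finsupp.linearCombination ℚ fun _ => 1

lemma augmentation_singBd {U : Set X} {w : SingChain X} (hw : w ∈ chainsIn U 1) :
    augmentation (singBd w) = 0 := by
  rw [← Submodule.mem_bot ℚ]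
  refine supported_induction (φ := augmentation ∘ₗ singBd) ?_ hw
  rintro ⟨m, σ⟩ ⟨h, -⟩
  dsimp only at h
  subst h
  rw [LinearMap.comp_apply, singBd_single_succ (n := 0)]
  simp [augmentation]

lemma chainsIn_empty (n : ℕ) {z : SingChain X} (hz : z ∈ chainsIn (∅ : Set X) n) : z = 0 := by
  rw [← Submodule.mem_bot ℚ]
  refine supported_induction (φ := LinearMap.id) ?_ hz
  rintro ⟨m, σ⟩ ⟨rfl, h⟩
  exact (h ⟨stdSimplex.vertex 0, rfl⟩).elim

theorem rank_singHom_of_contractible (x₀ : X)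
    (h : ∀ n (x : SingHom (Set.univ : Set X) ∅ n), singMap (ContinuousMap.const X x₀)
      (Set.mapsTo_univ _ _) (Set.mapsTo_empty _ _) n x = x) (n : ℕ) :
    Module.rank ℚ (SingHom (Set.univ : Set X) ∅ n) = if n = 0 then 1 else 0 := by
  split_ifs with hn
  · subst hn
    have hc : constChain x₀ 0 ∈ relCycles singBd (chainsIn Set.univ) (chainsIn (∅ : Set X)) 0 := by
      refine mem_relCycles.2 ⟨single_mem_chainsIn (Set.subset_univ _), ?_⟩
      rw [constChain, singBd_single_zero]
      exact zero_mem _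
    rw [rank_eq_one_iff]
    refine ⟨relClass _ hc, ?_, ?_⟩
    · rw [Ne, relClass_eq_zero, mem_relBds]
      rintro ⟨a, ha, w, hw, e⟩
      have := congrArg augmentation e
      rw [chainsIn_empty _ ha, zero_add, augmentation_singBd hw] at this
      simp [augmentation, constChain] at this
    · refine relHom_ind fun z hz => ?_
      obtain ⟨q, hq⟩ := singPush_const_mem x₀ hz.1
      refine ⟨q, ?_⟩
      rw [← h 0 (relClass z hz), singMap, relMap_relClass]
      change relClass (q • constChain x₀ 0) _ = _
      simp only [hq]
  · rw [rank_zero_iff, subsingleton_iff_forall_eq 0]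
    refine relHom_ind fun z hz => ?_
    obtain ⟨q, hq⟩ := singPush_const_mem x₀ hz.1
    obtain ⟨n, rfl⟩ := Nat.exists_eq_succ_of_ne_zero hn
    rw [← h _ (relClass z hz), singMap, relMap_relClass, relClass_eq_zero, hq]
    by_cases hp : Even (n + 1)
    · have h1 : singBd z = 0 := chainsIn_empty _ hz.2
      have h2 := congrArg singBd hq
      rw [singBd_singPush, h1, map_zero, map_smul, Nat.succ_eq_add_one, singBd_constChain, if_pos hp] at h2
      rcases smul_eq_zero.1 h2.symm with h3 | h3
      · rw [h3, zero_smul]; exact zero_mem _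
      · simp [constChain] at h3
    · refine Submodule.smul_mem _ _ ?_
      have := singBd_constChain x₀ (n + 1)
      rw [if_pos (by grind)] at this
      rw [Nat.succ_eq_add_one, ← this]
      exact bd_mem_relBds (single_mem_chainsIn (Set.subset_univ _))

/-- Every class has a representative with boundary subordinate to a given open cover. -/
lemma exists_relClass_subordinate {U V₁ V₂ V₃ : Set X} (h₁ : IsOpen V₁) (h₂ : IsOpen V₂)
    (h₃ : IsOpen V₃) {n : ℕ} (x : SingHom U (V₁ ∪ (V₂ ∪ V₃)) (n + 1)) :
    ∃ z, ∃ hz : z ∈ relCycles singBd (chainsIn U) (chainsIn (V₁ ∪ (V₂ ∪ V₃))) (n + 1),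
      x = relClass z hz ∧ ∃ a ∈ chainsIn V₁ n, ∃ b ∈ chainsIn V₂ n, ∃ c ∈ chainsIn V₃ n,
        singBd z = a + b + c := by
  induction x using relHom_ind with
  | h z hz =>
    obtain ⟨M, hM⟩ := exists_singSd_iterate h₁ (h₂.union h₃) (show singBd z ∈ _ from hz.2)
    obtain ⟨a, ha, y, hy, e⟩ := Submodule.mem_sup.1 (hM M le_rfl)
    obtain ⟨M', hM'⟩ := exists_singSd_iterate h₂ h₃ hy
    obtain ⟨b, hb, c, hc, e'⟩ := Submodule.mem_sup.1 (hM' M' le_rfl)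
    obtain ⟨T, hT, h⟩ := exists_singSd_iterate_homotopy X (M' + M)
    rw [← Module.End.coe_pow] at e e' h
    have hd : singBd ((singSd ^ (M' + M)) z) = (singSd ^ M') a + b + c := by
      rw [singBd_singSd_pow, pow_add, Module.End.mul_apply, ← e, map_add, ← e']
      abel
    refine ⟨(singSd ^ (M' + M)) z, mem_relCycles.2 ⟨singSd_pow_mem hz.1 _, ?_⟩, ?_, _,
      singSd_pow_mem ha _, b, hb, c, hc, hd⟩
    · rw [singBd_singSd_pow]
      exact singSd_pow_mem hz.2 _
    · rw [relClass_eq, h]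
      exact add_mem (bd_mem_relBds (hT _ _ _ hz.1)) (mem_relBds_of_mem (hT _ _ _ hz.2))

end Vanishing

section Local

set_option linter.unusedSectionVars false

variable {ι : Type} [Fintype ι] [DecidableEq ι]

/-- Vectors which are nonzero at some coordinate in `I`. -/
def offSet (I : Finset ι) : Set (ι → ℝ) := {x | ∃ i ∈ I, x i ≠ 0}

lemma isOpen_offSet (I : Finset ι) : IsOpen (offSet I) := by
  have : offSet I = ⋃ i ∈ I, {x : ι → ℝ | x i ≠ 0} := by ext; simp [offSet]
  rw [this]
  exact isOpen_biUnion fun i _ => isOpen_ne_fun (continuous_apply i) continuous_const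

def posSet (a : ι) : Set (ι → ℝ) := {x | 0 < x a}
def negSet (a : ι) : Set (ι → ℝ) := {x | x a < 0}

lemma mem_posSet {a : ι} {x : ι → ℝ} : x ∈ posSet a ↔ 0 < x a := Iff.rfl
lemma mem_negSet {a : ι} {x : ι → ℝ} : x ∈ negSet a ↔ x a < 0 := Iff.rfl

lemma isOpen_posSet (a : ι) : IsOpen (posSet a) := isOpen_lt continuous_const (continuous_apply a)
lemma isOpen_negSet (a : ι) : IsOpen (negSet a) := isOpen_lt (continuous_apply a) continuous_const

lemma offSet_insert (a : ι) (I : Finset ι) :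
    offSet (insert a I) = posSet a ∪ (negSet a ∪ offSet I) := by
  ext x
  simp only [offSet, posSet, negSet, Finset.mem_insert, Set.mem_union, Set.mem_ofPred_eq,
    exists_eq_or_imp, ← or_assoc]
  rw [ne_iff_lt_or_gt, or_comm (a := x a < 0)]

/-- Move the `a`-coordinate to `±(|x a| + 1)`. -/
noncomputable def pushCoord (a : ι) (s : ℝ) : C(ι → ℝ, ι → ℝ) where
  toFun x := Function.update x a (s * (|x a| + 1))
  continuous_toFun := by fun_prop

lemma lineMap_pushCoord_self (a : ι) (s t : ℝ) (x : ι → ℝ) :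
    AffineMap.lineMap (k := ℝ) x (pushCoord a s x) t a = (1 - t) * x a + t * (s * (|x a| + 1)) := by
  simp [AffineMap.lineMap_apply_module, pushCoord]

lemma lineMap_pushCoord_of_ne {a i : ι} (h : i ≠ a) (s t : ℝ) (x : ι → ℝ) :
    AffineMap.lineMap (k := ℝ) x (pushCoord a s x) t i = x i := by
  simp [AffineMap.lineMap_apply_module, pushCoord, h]; ring

lemma pushCoord_eq_lineMap (a : ι) (s : ℝ) (x : ι → ℝ) :
    pushCoord a s x = AffineMap.lineMap (k := ℝ) x (pushCoord a s x) (((1 : unitInterval) : ℝ)) := by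
  simp

lemma lineMap_pushCoord_mem_offSet {a : ι} {I : Finset ι} (ha : a ∉ I) (s t : ℝ) {x : ι → ℝ}
    (hx : x ∈ offSet I) : AffineMap.lineMap (k := ℝ) x (pushCoord a s x) t ∈ offSet I := by
  obtain ⟨i, hi, h⟩ := hx
  refine ⟨i, hi, ?_⟩
  rwa [lineMap_pushCoord_of_ne (by rintro rfl; exact ha hi)]

lemma lineMap_pushCoord_mem_posSet {a : ι} (t : unitInterval) {x : ι → ℝ}
    (hx : x ∈ posSet a) : AffineMap.lineMap (k := ℝ) x (pushCoord a 1 x) (t : ℝ) ∈ posSet a := by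
  rw [mem_posSet, lineMap_pushCoord_self]
  have h1 := t.2.1
  have h2 := t.2.2
  have h3 : 0 < x a := hx
  rw [abs_of_pos h3]
  nlinarith

lemma lineMap_pushCoord_mem_negSet {a : ι} (t : unitInterval) {x : ι → ℝ}
    (hx : x ∈ negSet a) : AffineMap.lineMap (k := ℝ) x (pushCoord a (-1) x) (t : ℝ) ∈ negSet a := by
  rw [mem_negSet, lineMap_pushCoord_self]
  have h1 := t.2.1
  have h2 := t.2.2
  have h3 : x a < 0 := hx
  rw [abs_of_neg h3]
  nlinarith

lemma pushCoord_mem_posSet (a : ι) (x : ι → ℝ) : pushCoord a 1 x ∈ posSet a := by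
  change 0 < Function.update x a _ a
  rw [Function.update_self]; positivity

lemma pushCoord_mem_negSet (a : ι) (x : ι → ℝ) : pushCoord a (-1) x ∈ negSet a := by
  change Function.update x a _ a < 0
  rw [Function.update_self]; linarith [abs_nonneg (x a)]

lemma pushCoord_mem_offSet {a : ι} {I : Finset ι} (ha : a ∉ I) (s : ℝ) {x : ι → ℝ}
    (hx : x ∈ offSet I) : pushCoord a s x ∈ offSet I := by
  rw [pushCoord_eq_lineMap]; exact lineMap_pushCoord_mem_offSet ha _ _ hx

variable {a : ι} {I : Finset ι}

lemma subsingleton_singHom_negSet (ha : a ∉ I) (n : ℕ) :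
    Subsingleton (SingHom Set.univ (negSet a ∪ offSet I) n) := by
  rw [subsingleton_iff_forall_eq 0]
  intro x
  have hV : ∀ x ∈ negSet a ∪ offSet I, ∀ t : unitInterval,
      AffineMap.lineMap (k := ℝ) x (pushCoord a (-1) x) (t : ℝ) ∈ negSet a ∪ offSet I := by
    rintro x (hx | hx) t
    · exact Or.inl (lineMap_pushCoord_mem_negSet t hx)
    · exact Or.inr (lineMap_pushCoord_mem_offSet ha _ _ hx)
  have hm : Set.MapsTo (pushCoord a (-1)) Set.univ (negSet a ∪ offSet I) :=
    fun x _ => Or.inl (pushCoord_mem_negSet a x)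
  rw [← singMap_eq_id_of_line (pushCoord a (-1)) (fun _ _ _ => Set.mem_univ _) hV (Set.mapsTo_univ _ _)
    (hm.mono_left (Set.subset_univ _)) n x, singMap_eq_zero _ _ hm]
  rfl

lemma posSet_inter_subset : posSet a ∩ (negSet a ∪ offSet I) ⊆ offSet I := by
  rintro x ⟨h, h' | h'⟩
  · exact absurd h (lt_asymm (show x a < 0 from h'))
  · exact h'

lemma mapsTo_id_of_subset {X : Type*} [TopologicalSpace X] {U V : Set X} (h : U ⊆ V) :
    Set.MapsTo (ContinuousMap.id X) U V := h

lemma singIncl_eq_singMap {X : Type*} [TopologicalSpace X] {U V U' V' : Set X} (hU : U ⊆ U')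
    (hV : V ⊆ V') (n : ℕ) (x : SingHom U V n) :
    singIncl hU hV n x = singMap (ContinuousMap.id X) (mapsTo_id_of_subset hU)
      (mapsTo_id_of_subset hV) n x := by
  induction x using relHom_ind with
  | h z hz => simp only [singMap, singIncl, relMap_relClass, singPush_id, LinearMap.id_apply]

lemma singIncl_posSet_bijective (ha : a ∉ I) (n : ℕ) :
    Function.Bijective (singIncl (Set.subset_univ (posSet a))
      (posSet_inter_subset (a := a) (I := I)) n) := by
  have hm : Set.MapsTo (pushCoord a 1) (offSet I) (posSet a ∩ (negSet a ∪ offSet I)) :=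
    fun x hx => ⟨pushCoord_mem_posSet a x, Or.inr (pushCoord_mem_offSet ha _ hx)⟩
  have hm' : Set.MapsTo (pushCoord a 1) Set.univ (posSet a) := fun x _ => pushCoord_mem_posSet a x
  rw [Function.bijective_iff_has_inverse]
  refine ⟨singMap (pushCoord a 1) hm' hm n, fun x => ?_, fun x => ?_⟩
  · rw [singIncl_eq_singMap, singMap_singMap]
    have hV : ∀ x ∈ posSet a ∩ (negSet a ∪ offSet I), ∀ t : unitInterval,
        AffineMap.lineMap (k := ℝ) x (pushCoord a 1 x) (t : ℝ) ∈
          posSet a ∩ (negSet a ∪ offSet I) := fun x hx t =>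
      ⟨lineMap_pushCoord_mem_posSet t hx.1,
        Or.inr (lineMap_pushCoord_mem_offSet ha _ _ (posSet_inter_subset hx))⟩
    exact singMap_eq_id_of_line (pushCoord a 1)
      (fun x hx t => lineMap_pushCoord_mem_posSet t hx) hV _ _ n x
  · rw [singIncl_eq_singMap, singMap_singMap]
    exact singMap_eq_id_of_line (pushCoord a 1) (fun _ _ _ => Set.mem_univ _)
      (fun x hx t => lineMap_pushCoord_mem_offSet ha _ _ hx) _ _ n x

/-- The connecting isomorphism reducing the number of coordinates. -/
lemma exists_coordEquiv (ha : a ∉ I) (n : ℕ) :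
    ∃ Φ : SingHom Set.univ (offSet (insert a I)) (n + 1) ≃ₗ[ℚ] SingHom Set.univ (offSet I) n,
      ∀ z (hz : z ∈ relCycles singBd (chainsIn Set.univ) (chainsIn (offSet (insert a I))) (n + 1)),
        ∀ c ∈ chainsIn (posSet a) n, ∀ c' ∈ chainsIn (negSet a ∪ offSet I) n, singBd z = c + c' →
          ∃ hc : c ∈ relCycles singBd (chainsIn Set.univ) (chainsIn (offSet I)) n,
            Φ (relClass z hz) = relClass c hc := by
  rw [offSet_insert]
  have hVW : ∀ n, chainsIn (negSet a ∪ offSet I) n ≤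
      chainsIn (posSet a ∪ (negSet a ∪ offSet I)) n := fun n =>
    chainsIn_mono Set.subset_union_right n
  have hW : ∀ n, chainsIn (posSet a ∪ (negSet a ∪ offSet I)) n ≤ chainsIn Set.univ n := fun n =>
    chainsIn_mono (Set.subset_univ _) n
  have hs := isSubcomplex_chainsIn (posSet a ∪ (negSet a ∪ offSet I))
  have b1 : Function.Bijective (relConnect hs (chainsIn (negSet a ∪ offSet I))
      (chainsIn Set.univ) n) := by
    constructor
    · rw [← LinearMap.ker_eq_bot, ker_relConnect hs hVW n hW, LinearMap.range_eq_bot]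
      have := subsingleton_singHom_negSet ha (n + 1)
      refine LinearMap.ext fun x => ?_
      rw [Subsingleton.elim x 0, map_zero, map_zero]
    · rw [← LinearMap.range_eq_top, ← ker_relMap_triple_left hs hVW hW, LinearMap.ker_eq_top]
      have := subsingleton_singHom_negSet ha n
      exact LinearMap.ext fun x => Subsingleton.elim (α := SingHom Set.univ (negSet a ∪ offSet I) n) _ _
  let e1 := LinearEquiv.ofBijective _ b1
  let e2 := LinearEquiv.ofBijective _ (singIncl_bijective (isOpen_posSet a)
    ((isOpen_negSet a).union (isOpen_offSet I)) n)
  let e3 := LinearEquiv.ofBijective _ (singIncl_posSet_bijective ha n)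
  refine ⟨e1.trans (e2.symm.trans e3), fun z hz c hc c' hc' e => ?_⟩
  have hc1 : c ∈ relCycles singBd (chainsIn (posSet a))
      (chainsIn (posSet a ∩ (negSet a ∪ offSet I))) n := by
    refine mem_relCycles.2 ⟨hc, ?_⟩
    cases n with
    | zero => rw [singBd_eq_zero hc]; exact zero_mem _
    | succ n =>
      rw [chainsIn_inter]
      refine ⟨singBd_mem hc, ?_⟩
      have := singBd_singBd z
      rw [e, map_add] at this
      rw [eq_neg_of_add_eq_zero_left this]
      exact neg_mem (singBd_mem hc')
  refine ⟨(isRelMap_inclusion (Set.subset_univ _) posSet_inter_subset).map_relCycles hc1, ?_⟩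
  have h2 : e2.symm (e1 (relClass z hz)) = relClass c hc1 := by
    rw [LinearEquiv.symm_apply_eq]
    change relConnect hs _ _ n _ = singIncl Set.subset_union_left Set.inter_subset_right n _
    rw [relConnect_relClass, singIncl, relMap_relClass, relClass_eq, e, LinearMap.id_apply,
      add_sub_cancel_left]
    exact mem_relBds_of_mem hc'
  change e3 (e2.symm (e1 (relClass z hz))) = _
  rw [h2]
  rfl

lemma subsingleton_singHom_zero (hI : I.Nonempty) :
    Subsingleton (SingHom Set.univ (offSet I) 0) := by
  rw [subsingleton_iff_forall_eq 0]
  intro x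
  obtain ⟨y, rfl⟩ := relMap_triple_right_zero_surjective (A := chainsIn ∅) (B := chainsIn (offSet I))
    (fun n => chainsIn_mono (Set.empty_subset _) n) (isSubcomplex_chainsIn Set.univ) x
  obtain ⟨i, hi⟩ := hI
  have hp : Set.MapsTo (ContinuousMap.const (ι → ℝ) (fun _ => (1 : ℝ))) Set.univ (offSet I) :=
    fun _ _ => ⟨i, hi, one_ne_zero⟩
  change singIncl (Set.Subset.refl _) (Set.empty_subset (offSet I)) 0 y = 0
  have := singMap_eq_of_homotopy (U' := Set.univ) (V' := offSet I) (lineHomotopy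
    (ContinuousMap.const (ι → ℝ) (fun _ => (1 : ℝ)))) (U := Set.univ) (V := ∅)
    (fun _ _ _ => Set.mem_univ _) (fun _ h => h.elim)
    (f := ContinuousMap.const (ι → ℝ) (fun _ => (1 : ℝ))) (g := ContinuousMap.id _)
    (by simp [lineHomotopy]) (by simp [lineHomotopy]) (Set.mapsTo_univ _ _)
    (Set.mapsTo_empty _ _) (Set.mapsTo_univ _ _) (Set.mapsTo_empty _ _) 0
  rw [singIncl_eq_singMap, ← this, singMap_eq_zero _ _ hp]
  rfl

theorem rank_singHom_offSet (I : Finset ι) (n : ℕ) :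
    Module.rank ℚ (SingHom Set.univ (offSet I) n) = if n = I.card then 1 else 0 := by
  induction I using Finset.induction_on generalizing n with
  | empty =>
    have : offSet (∅ : Finset ι) = ∅ := by ext; simp [offSet]
    rw [this, Finset.card_empty]
    exact rank_singHom_of_contractible (0 : ι → ℝ) (fun n x =>
      singMap_eq_id_of_line _ (fun _ _ _ => Set.mem_univ _) (fun _ h => h.elim) _ _ n x) n
  | insert a I ha ih =>
    rw [Finset.card_insert_of_notMem ha]
    cases n with
    | zero =>
      rw [if_neg (by omega), rank_zero_iff]
      exact subsingleton_singHom_zero (Finset.insert_nonempty a I)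
    | succ n =>
      obtain ⟨Φ, -⟩ := exists_coordEquiv ha n
      rw [Φ.rank_eq, ih]
      simp

/-- Coordinatewise sign changes. -/
noncomputable def signFlip (ε : ι → ℤˣ) : C(ι → ℝ, ι → ℝ) where
  toFun x i := ((ε i : ℤ) : ℝ) * x i
  continuous_toFun := by fun_prop

lemma signFlip_mapsTo (ε : ι → ℤˣ) (I : Finset ι) :
    Set.MapsTo (signFlip ε) (offSet I) (offSet I) := by
  rintro x ⟨i, hi, h⟩
  refine ⟨i, hi, mul_ne_zero ?_ h⟩
  exact_mod_cast (ε i).ne_zero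

lemma signFlip_apply (ε : ι → ℤˣ) (x : ι → ℝ) (i : ι) :
    signFlip ε x i = ((ε i : ℤ) : ℝ) * x i := rfl

theorem singMap_signFlip (ε : ι → ℤˣ) (I : Finset ι) (n : ℕ)
    (x : SingHom Set.univ (offSet I) n) :
    singMap (signFlip ε) (Set.mapsTo_univ _ _) (signFlip_mapsTo ε I) n x =
      (((∏ i ∈ I, ε i : ℤˣ) : ℤ) : ℚ) • x := by
  induction I using Finset.induction_on generalizing n with
  | empty =>
    rw [Finset.prod_empty, Units.val_one, Int.cast_one, one_smul]
    refine singMap_eq_id_of_line _ (fun _ _ _ => Set.mem_univ _) ?_ _ _ n x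
    rintro y ⟨i, hi, -⟩
    simp at hi
  | insert a I ha ih =>
    cases n with
    | zero =>
      have := subsingleton_singHom_zero (Finset.insert_nonempty a I)
      exact Subsingleton.elim _ _
    | succ n =>
      obtain ⟨Φ, hΦ⟩ := exists_coordEquiv ha n
      have sub : ∀ y : SingHom Set.univ (offSet (insert a I)) (n + 1), ∃ z,
          ∃ hz : z ∈ relCycles singBd (chainsIn Set.univ) (chainsIn (offSet (insert a I))) (n + 1),
          y = relClass z hz ∧ ∃ p ∈ chainsIn (posSet a) n, ∃ q ∈ chainsIn (negSet a) n,
            ∃ b ∈ chainsIn (offSet I) n, singBd z = p + q + b := by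
        rw [offSet_insert]
        exact exists_relClass_subordinate (isOpen_posSet a) (isOpen_negSet a) (isOpen_offSet I)
      obtain ⟨z, hz, rfl, p, hp, q, hq, b, hb, e⟩ := sub x
      have hqb : ∀ {q b : SingChain (ι → ℝ)}, q ∈ chainsIn (negSet a) n →
          b ∈ chainsIn (offSet I) n → q + b ∈ chainsIn (negSet a ∪ offSet I) n := fun h h' =>
        add_mem (chainsIn_mono Set.subset_union_left n h) (chainsIn_mono Set.subset_union_right n h')
      obtain ⟨hpc, hΦp⟩ := hΦ z hz p hp (q + b) (hqb hq hb) (by rw [e, add_assoc])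
      have hfb := singPush_mem (signFlip_mapsTo ε I) hb
      have hd : singBd (singPush (signFlip ε) z) = singPush (signFlip ε) p +
          singPush (signFlip ε) q + singPush (signFlip ε) b := by
        rw [singBd_singPush, e, map_add, map_add]
      apply Φ.injective
      rw [map_smul, hΦp, Finset.prod_insert ha, singMap]
      have ihp := ih n (relClass p hpc)
      rw [singMap, relMap_relClass] at ihp
      rcases Int.units_eq_one_or (ε a) with h | h
      · have hP : Set.MapsTo (signFlip ε) (posSet a) (posSet a) := fun x hx => by
          rw [mem_posSet, signFlip_apply, h]; simpa using (show _ < _ from hx)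
        have hN : Set.MapsTo (signFlip ε) (negSet a) (negSet a) := fun x hx => by
          rw [mem_negSet, signFlip_apply, h]; simpa using (show _ < _ from hx)
        obtain ⟨h1, h2⟩ := hΦ _ ((isRelMap_singPush (Set.mapsTo_univ _ _)
          (signFlip_mapsTo ε (insert a I))).map_relCycles hz) _ (singPush_mem hP hp) _
          (hqb (singPush_mem hN hq) hfb) (by rw [hd, add_assoc])
        rw [relMap_relClass, h2, ihp, h, one_mul]
      · have hP : Set.MapsTo (signFlip ε) (posSet a) (negSet a) := fun x hx => by
          rw [mem_negSet, signFlip_apply, h]; simpa using (show _ < _ from hx)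
        have hN : Set.MapsTo (signFlip ε) (negSet a) (posSet a) := fun x hx => by
          rw [mem_posSet, signFlip_apply, h]; simpa using (show _ < _ from hx)
        obtain ⟨h1, h2⟩ := hΦ _ ((isRelMap_singPush (Set.mapsTo_univ _ _)
          (signFlip_mapsTo ε (insert a I))).map_relCycles hz) _ (singPush_mem hN hq) _
          (hqb (singPush_mem hP hp) hfb) (by rw [hd]; abel)
        have h3 : relClass _ h1 = -relClass _ ((isRelMap_singPush (Set.mapsTo_univ _ _)
            (signFlip_mapsTo ε I)).map_relCycles hpc) := by
          rw [eq_neg_iff_add_eq_zero, relClass_add, relClass_eq_zero]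
          rw [show singPush (signFlip ε) q + singPush (signFlip ε) p = singBd (singPush (signFlip ε) z) -
            singPush (signFlip ε) b by rw [hd]; abel]
          exact sub_mem (bd_mem_relBds (singPush_mem (Set.mapsTo_univ _ _) hz.1)) (mem_relBds_of_mem hfb)
        rw [relMap_relClass, h2, h3, ihp, h]
        simp

end Local

section Frames

variable {k n : ℕ}

abbrev Frame (k n : ℕ) : Type := {A : Fin k → (Fin n → ℝ) // LinearIndependent ℝ A}

/-- The subspace spanned by a frame. -/
def Frame.mk (A : Frame k n) : Grassmannian k n := Quotient.mk (grassSetoid k n) A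

def Frame.mat (A : Frame k n) : Matrix (Fin k) (Fin n) ℝ := Matrix.of A.1

lemma Frame.mk_surjective (x : Grassmannian k n) : ∃ A : Frame k n, A.mk = x := by
  induction x using Quotient.inductionOn with
  | h A => exact ⟨A, rfl⟩

lemma span_mul_le (g : Matrix (Fin k) (Fin k) ℝ) (A : Matrix (Fin k) (Fin n) ℝ) :
    Submodule.span ℝ (Set.range (g * A).row) ≤ Submodule.span ℝ (Set.range A.row) := by
  rw [Submodule.span_le]
  rintro _ ⟨r, rfl⟩
  refine (Submodule.mem_span_range_iff_exists_fun ℝ).2 ⟨g r, ?_⟩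
  ext c
  simp [Matrix.mul_apply, Matrix.row]

lemma Frame.exists_mul_of_mk_eq {A B : Frame k n} (h : A.mk = B.mk) :
    ∃ g : Matrix (Fin k) (Fin k) ℝ, B.mat = g * A.mat := by
  have h' : Submodule.span ℝ (Set.range A.1) = Submodule.span ℝ (Set.range B.1) := Quotient.exact h
  have : ∀ r, ∃ v : Fin k → ℝ, ∑ i, v i • A.1 i = B.1 r := fun r =>
    (Submodule.mem_span_range_iff_exists_fun ℝ).1 (h' ▸ Submodule.subset_span ⟨r, rfl⟩)
  choose g hg using this
  refine ⟨Matrix.of g, ?_⟩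
  ext r c
  simp [Matrix.mul_apply, Frame.mat, ← hg]

lemma Frame.mk_eq_of_mul {A B : Frame k n} (g : Matrix (Fin k) (Fin k) ℝ)
    (hg : IsUnit g.det) (h : B.mat = g * A.mat) : A.mk = B.mk := by
  refine Quotient.sound (le_antisymm ?_ ?_)
  · have : A.mat = g⁻¹ * B.mat := by rw [h, Matrix.nonsing_inv_mul_cancel_left _ _ hg]
    have h2 := span_mul_le g⁻¹ B.mat
    rwa [← this] at h2
  · have h2 := span_mul_le g A.mat
    rwa [← h] at h2

lemma linearIndependent_mul {g : Matrix (Fin k) (Fin k) ℝ} (hg : IsUnit g.det)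
    {A : Matrix (Fin k) (Fin n) ℝ} (hA : LinearIndependent ℝ A.row) :
    LinearIndependent ℝ (g * A).row := by
  rw [Fintype.linearIndependent_iff] at hA ⊢
  intro v hv
  have h1 : Matrix.vecMul (Matrix.vecMul v g) A = 0 := by
    rw [Matrix.vecMul_vecMul, ← hv]
    ext c
    simp [Matrix.vecMul, dotProduct, Matrix.row]
  have h2 : Matrix.vecMul v g = 0 := by
    refine funext (hA _ ?_)
    rw [← h1]
    ext c
    simp [Matrix.vecMul, dotProduct, Matrix.row]
  exact congrFun (Matrix.eq_zero_of_vecMul_eq_zero hg.ne_zero h2)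

lemma linearIndependent_mul_right {R : Matrix (Fin n) (Fin n) ℝ} (hR : IsUnit R.det)
    {A : Matrix (Fin k) (Fin n) ℝ} (hA : LinearIndependent ℝ A.row) :
    LinearIndependent ℝ (A * R).row := by
  have : (A * R).row = R.vecMulLinear ∘ A.row := by
    rfl
  rw [this]
  refine hA.map' _ ?_
  rw [LinearMap.ker_eq_bot]
  exact Matrix.vecMul_injective_of_isUnit ((Matrix.isUnit_iff_isUnit_det R).2 hR)

/-- The minor of `A` at the columns `f`. -/
def minor (f : Fin k → Fin n) (A : Matrix (Fin k) (Fin n) ℝ) : ℝ := (A.submatrix id f).det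

lemma minor_mul (f : Fin k → Fin n) (g : Matrix (Fin k) (Fin k) ℝ) (A : Matrix (Fin k) (Fin n) ℝ) :
    minor f (g * A) = g.det * minor f A := by
  rw [minor, minor, ← Matrix.det_mul]
  rfl

lemma linearIndependent_of_minor_ne_zero {f : Fin k → Fin n} {A : Matrix (Fin k) (Fin n) ℝ}
    (h : minor f A ≠ 0) : LinearIndependent ℝ A.row := by
  refine LinearIndependent.of_comp (LinearMap.funLeft ℝ ℝ f) ?_
  exact Matrix.linearIndependent_rows_iff_isUnit.2
    ((Matrix.isUnit_iff_isUnit_det _).2 (isUnit_iff_ne_zero.2 h))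

/-- Columns of a nonvanishing minor can be listed in increasing order. -/
lemma exists_orderEmb_minor_ne_zero {f : Fin k → Fin n} {A : Matrix (Fin k) (Fin n) ℝ}
    (h : minor f A ≠ 0) : ∃ (e : Fin k ↪o Fin n) (σ : Equiv.Perm (Fin k)), ⇑e = f ∘ σ ∧ minor e A ≠ 0 := by
  have hf : Function.Injective f := by
    intro i j hij
    by_contra hne
    exact h (Matrix.det_zero_of_column_eq hne fun r => by simp [hij])
  refine ⟨OrderEmbedding.ofStrictMono (f ∘ Tuple.sort f)
    ((Tuple.monotone_sort f).strictMono_of_injective (hf.comp (Tuple.sort f).injective)),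
    Tuple.sort f, rfl, ?_⟩
  change ((A.submatrix id f).submatrix id (Tuple.sort f)).det ≠ 0
  rw [Matrix.det_permute']
  exact mul_ne_zero (by exact_mod_cast (Equiv.Perm.sign _).ne_zero) h

lemma exists_minor_ne_zero {A : Matrix (Fin k) (Fin n) ℝ} (hA : LinearIndependent ℝ A.row) :
    ∃ e : Fin k ↪o Fin n, minor e A ≠ 0 := by
  have hr := hA.rank_matrix
  rw [Matrix.rank_eq_finrank_span_cols, Fintype.card_fin] at hr
  obtain ⟨v, hv, -, hli⟩ := Submodule.exists_fun_fin_finrank_span_eq ℝ (Set.range A.col)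
  choose f hf using hv
  have h : minor (f ∘ finCongr hr.symm) A ≠ 0 := by
    rw [minor, ← isUnit_iff_ne_zero, ← Matrix.isUnit_iff_isUnit_det, ← Matrix.linearIndependent_cols_iff_isUnit]
    have := hli.comp _ (finCongr hr.symm).injective
    rwa [← funext hf] at this
  obtain ⟨e, -, -, he⟩ := exists_orderEmb_minor_ne_zero h
  exact ⟨e, he⟩

lemma continuous_mat : Continuous (Frame.mat : Frame k n → _) := continuous_subtype_val

lemma continuous_mk : Continuous (Frame.mk : Frame k n → _) := continuous_quotient_mk'

lemma isOpenQuotientMap_mk : IsOpenQuotientMap (Frame.mk : Frame k n → _) := by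
  refine ⟨Frame.mk_surjective, continuous_mk, fun U hU => ?_⟩
  have : Frame.mk ⁻¹' (Frame.mk '' U) = ⋃ (g : Matrix (Fin k) (Fin k) ℝ) (hg : IsUnit g.det),
      {A : Frame k n | (⟨g * A.mat, linearIndependent_mul hg A.2⟩ : Frame k n) ∈ U} := by
    ext A
    simp only [Set.mem_preimage, Set.mem_image, Set.mem_iUnion, Set.mem_ofPred_eq]
    constructor
    · rintro ⟨B, hB, h⟩
      obtain ⟨g, hg⟩ := Frame.exists_mul_of_mk_eq h.symm
      refine ⟨g, ?_, ?_⟩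
      · obtain ⟨e, he⟩ := exists_minor_ne_zero B.2
        change minor e B.mat ≠ 0 at he
        rw [hg, minor_mul] at he
        exact isUnit_iff_ne_zero.2 (left_ne_zero_of_mul he)
      · convert hB
        exact Subtype.ext hg.symm
    · rintro ⟨g, hg, h⟩
      exact ⟨_, h, (Frame.mk_eq_of_mul g hg rfl).symm⟩
  refine isOpen_coinduced.2 ?_
  change IsOpen (Frame.mk ⁻¹' (Frame.mk '' U))
  rw [this]
  refine isOpen_iUnion fun g => isOpen_iUnion fun hg => hU.preimage ?_
  exact Continuous.subtype_mk (continuous_const.matrix_mul continuous_mat) _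

/-- The subspaces with nonvanishing Plücker coordinate at `e`. -/
def plueckerOpen (e : Fin k → Fin n) : Set (Grassmannian k n) := Frame.mk '' {A | minor e A.mat ≠ 0}

lemma mk_mem_plueckerOpen {e : Fin k → Fin n} {A : Frame k n} :
    A.mk ∈ plueckerOpen e ↔ minor e A.mat ≠ 0 := by
  refine ⟨?_, fun h => ⟨A, h, rfl⟩⟩
  rintro ⟨B, hB, h⟩
  obtain ⟨g, hg⟩ := Frame.exists_mul_of_mk_eq h.symm
  rw [Set.mem_ofPred_eq, hg, minor_mul] at hB
  exact right_ne_zero_of_mul hB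

lemma continuous_minor (e : Fin k → Fin n) : Continuous (minor e) :=
  (continuous_id.matrix_submatrix id e).matrix_det

lemma isOpen_plueckerOpen (e : Fin k → Fin n) : IsOpen (plueckerOpen e) :=
  isOpenQuotientMap_mk.isOpenMap _
    (isOpen_ne_fun ((continuous_minor e).comp continuous_mat) continuous_const)

lemma iUnion_plueckerOpen : ⋃ e : Fin k ↪o Fin n, plueckerOpen e = Set.univ := by
  rw [Set.eq_univ_iff_forall]
  intro x
  obtain ⟨A, rfl⟩ := Frame.mk_surjective x
  obtain ⟨e, he⟩ := exists_minor_ne_zero A.2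
  exact Set.mem_iUnion.2 ⟨e, mk_mem_plueckerOpen.2 he⟩

end Frames

section Charts

variable {k n : ℕ}

/-- Right multiplication of frames by an invertible matrix. -/
def Frame.mulRight (R : Matrix (Fin n) (Fin n) ℝ) (hR : IsUnit R.det) (A : Frame k n) : Frame k n :=
  ⟨A.mat * R, linearIndependent_mul_right hR A.2⟩

lemma Frame.exists_isUnit_of_mk_eq {A B : Frame k n} (h : A.mk = B.mk) :
    ∃ g : Matrix (Fin k) (Fin k) ℝ, IsUnit g.det ∧ B.mat = g * A.mat := by
  obtain ⟨g, hg⟩ := Frame.exists_mul_of_mk_eq h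
  obtain ⟨e, he⟩ := exists_minor_ne_zero B.2
  change minor e B.mat ≠ 0 at he
  rw [hg, minor_mul] at he
  exact ⟨g, isUnit_iff_ne_zero.2 (left_ne_zero_of_mul he), hg⟩

/-- The image of a subspace under an invertible matrix. -/
def grassAct (R : Matrix (Fin n) (Fin n) ℝ) (hR : IsUnit R.det) : Grassmannian k n → Grassmannian k n :=
  Quotient.map' (Frame.mulRight R hR) fun (A B : Frame k n) h => by
    obtain ⟨g, hg, e⟩ := Frame.exists_isUnit_of_mk_eq (A := A) (B := B) (Quotient.sound h)
    refine Quotient.exact (Frame.mk_eq_of_mul g hg ?_)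
    change Frame.mat B * R = g * (Frame.mat A * R)
    rw [e, Matrix.mul_assoc]

lemma continuous_grassAct {T : Type*} [TopologicalSpace T] {R : T → Matrix (Fin n) (Fin n) ℝ}
    (hc : Continuous R) (hR : ∀ t, IsUnit (R t).det) :
    Continuous fun p : Grassmannian k n × T => grassAct (R p.2) (hR p.2) p.1 := by
  have hq := (isOpenQuotientMap_mk (k := k) (n := n)).prodMap (.id (X := T))
  rw [hq.isQuotientMap.continuous_iff]
  change Continuous fun p : Frame k n × T => Frame.mk (Frame.mulRight (R p.2) (hR p.2) p.1)
  refine continuous_mk.comp (Continuous.subtype_mk ?_ _)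
  exact (continuous_mat.comp continuous_fst).matrix_mul (hc.comp continuous_snd)

/-- Free matrix entries of a frame normalised at the columns `e`. -/
abbrev FreeEntry (e : Fin k → Fin n) : Type := {p : Fin k × Fin n // ∀ s, e s ≠ p.2}

/-- The frame with free entries `x` which is the identity at the columns `e`. -/
def chartMat (e : Fin k → Fin n) (x : FreeEntry e → ℝ) : Matrix (Fin k) (Fin n) ℝ := fun r c =>
  if h : ∀ s, e s ≠ c then x ⟨(r, c), h⟩ else if e r = c then 1 else 0

lemma chartMat_of_ne {e : Fin k → Fin n} (x : FreeEntry e → ℝ) (p : FreeEntry e) :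
    chartMat e x p.1.1 p.1.2 = x p := dif_pos p.2

variable (e : Fin k ↪o Fin n)

lemma chartMat_submatrix (x : FreeEntry e → ℝ) : (chartMat e x).submatrix id e = 1 := by
  ext r s
  simp [chartMat, Matrix.one_apply]

lemma minor_chartMat (x : FreeEntry e → ℝ) : minor e (chartMat e x) = 1 := by
  rw [minor, chartMat_submatrix, Matrix.det_one]

def chartFrame (x : FreeEntry e → ℝ) : Frame k n :=
  ⟨chartMat e x, linearIndependent_of_minor_ne_zero (f := e) (A := chartMat e x)
    (by rw [minor_chartMat]; exact one_ne_zero)⟩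

lemma mat_chartFrame (x : FreeEntry e → ℝ) : (chartFrame e x).mat = chartMat e x := rfl

lemma continuous_chartMat : Continuous (chartMat e) := by
  refine continuous_pi fun r => continuous_pi fun c => ?_
  unfold chartMat
  split_ifs
  · exact continuous_apply _
  all_goals exact continuous_const

/-- The affine chart of the Grassmannian at `e`. -/
def chart : C(FreeEntry e → ℝ, Grassmannian k n) where
  toFun x := (chartFrame e x).mk
  continuous_toFun := continuous_mk.comp (Continuous.subtype_mk (continuous_chartMat e) _)

lemma chart_apply (x : FreeEntry e → ℝ) : chart e x = (chartFrame e x).mk := rfl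

lemma eq_chartMat {A : Matrix (Fin k) (Fin n) ℝ} (h : A.submatrix id e = 1) :
    A = chartMat e fun p => A p.1.1 p.1.2 := by
  ext r c
  by_cases hc : ∀ s, e s ≠ c
  · exact (chartMat_of_ne (fun p => A p.1.1 p.1.2) ⟨(r, c), hc⟩).symm
  · push Not at hc
    obtain ⟨s, rfl⟩ := hc
    exact congrFun (congrFun (h.trans (chartMat_submatrix e fun p => A p.1.1 p.1.2).symm) r) s

lemma chart_injective : Function.Injective (chart e) := by
  intro x y h
  obtain ⟨g, hg⟩ := Frame.exists_mul_of_mk_eq (A := chartFrame e x) (B := chartFrame e y) h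
  rw [mat_chartFrame, mat_chartFrame] at hg
  have h1 : (1 : Matrix (Fin k) (Fin k) ℝ) = g := calc
    1 = (g * chartMat e x).submatrix id e := by rw [← hg, chartMat_submatrix]
    _ = g * (chartMat e x).submatrix id e := rfl
    _ = g := by rw [chartMat_submatrix, Matrix.mul_one]
  rw [← h1, Matrix.one_mul] at hg
  funext p
  rw [← chartMat_of_ne x p, ← chartMat_of_ne y p, hg]

/-- The chart coordinates of a frame. -/
noncomputable def chartCoord (A : Matrix (Fin k) (Fin n) ℝ) : FreeEntry e → ℝ := fun p =>
  (((minor e A)⁻¹ • (A.submatrix id e).adjugate) * A) p.1.1 p.1.2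

lemma chart_chartCoord (A : Frame k n) (h : minor e A.mat ≠ 0) : chart e (chartCoord e A.mat) = A.mk := by
  have h1 : ((minor e A.mat)⁻¹ • (A.mat.submatrix id e).adjugate) * (A.mat.submatrix id e) = 1 := by
    rw [Matrix.smul_mul, Matrix.adjugate_mul, ← minor, smul_smul, inv_mul_cancel₀ h, one_smul]
  have h2 := eq_chartMat e (A := ((minor e A.mat)⁻¹ • (A.mat.submatrix id e).adjugate) * A.mat) h1
  exact (Frame.mk_eq_of_mul (A := A) (B := chartFrame e (chartCoord e A.mat)) _ (Matrix.isUnit_det_of_right_inverse h1) h2.symm).symm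

lemma chartCoord_chartMat (x : FreeEntry e → ℝ) : chartCoord e (chartMat e x) = x := by
  refine chart_injective e ?_
  have := chart_chartCoord e (chartFrame e x) (by
    rw [mat_chartFrame, minor_chartMat]; exact one_ne_zero)
  exact this

lemma range_chart : Set.range (chart e) = plueckerOpen e := by
  refine Set.Subset.antisymm ?_ ?_
  · rintro _ ⟨x, rfl⟩
    refine mk_mem_plueckerOpen.2 ?_
    rw [mat_chartFrame, minor_chartMat]
    exact one_ne_zero
  · rintro _ ⟨A, hA, rfl⟩
    exact ⟨_, chart_chartCoord e A hA⟩

lemma isOpenEmbedding_chart : Topology.IsOpenEmbedding (chart e) := by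
  refine .of_continuous_injective_isOpenMap (chart e).continuous (chart_injective e) fun W hW => ?_
  have : chart e '' W = Frame.mk '' ({A : Frame k n | minor e A.mat ≠ 0} ∩
      (fun A : Frame k n => chartCoord e A.mat) ⁻¹' W) := by
    ext y
    constructor
    · rintro ⟨x, hx, rfl⟩
      refine ⟨chartFrame e x, ⟨?_, ?_⟩, rfl⟩
      · rw [Set.mem_ofPred_eq, mat_chartFrame, minor_chartMat]
        exact one_ne_zero
      · rw [Set.mem_preimage, mat_chartFrame, chartCoord_chartMat]
        exact hx
    · rintro ⟨A, ⟨h1, h2⟩, rfl⟩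
      exact ⟨_, h2, chart_chartCoord e A h1⟩
  rw [this]
  refine isOpenQuotientMap_mk.isOpenMap _ (ContinuousOn.isOpen_inter_preimage ?_
    (isOpen_ne_fun ((continuous_minor e).comp continuous_mat) continuous_const) hW)
  have hc : Continuous fun A : Frame k n => minor e A.mat := (continuous_minor e).comp continuous_mat
  have hd : Continuous fun A : Frame k n => (A.mat.submatrix id e).adjugate * A.mat :=
    (continuous_mat.matrix_submatrix id e).matrix_adjugate.matrix_mul continuous_mat
  refine continuousOn_pi.2 fun p => ?_
  simp only [chartCoord, Matrix.smul_mul, Matrix.smul_apply]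
  exact (hc.continuousOn.inv₀ fun _ h => h).smul
    ((continuous_apply_apply p.1.1 p.1.2).comp hd).continuousOn

/-- The sum of the column indices. -/
def weight (f : Fin k → Fin n) : ℕ := ∑ r, (f r : ℕ)

/-- The free entries to the left of the pivots. -/
def leftEntries : Finset (FreeEntry e) := {p | p.1.2 < e p.1.1}

lemma chart_mem_of_mem_offSet {x : FreeEntry e → ℝ} (hx : x ∈ offSet (leftEntries e)) :
    ∃ f : Fin k ↪o Fin n, weight f < weight e ∧ chart e x ∈ plueckerOpen f := by
  obtain ⟨p, hp, hx⟩ := hx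
  have hlt : p.1.2 < e p.1.1 := by simpa [leftEntries] using hp
  have hm : minor (Function.update e p.1.1 p.1.2) (chartMat e x) ≠ 0 := by
    have : (chartMat e x).submatrix id (Function.update e p.1.1 p.1.2) =
        (1 : Matrix (Fin k) (Fin k) ℝ).updateCol p.1.1 fun r => chartMat e x r p.1.2 := by
      rw [← chartMat_submatrix e x]
      ext r s
      by_cases h : s = p.1.1
      · subst h; simp
      · simp [h]
    rw [minor, this, ← Matrix.cramer_apply, Matrix.cramer_one]
    change chartMat e x p.1.1 p.1.2 ≠ 0
    rwa [chartMat_of_ne]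
  obtain ⟨f, σ, hf, hmin⟩ := exists_orderEmb_minor_ne_zero hm
  refine ⟨f, ?_, mk_mem_plueckerOpen.2 hmin⟩
  rw [weight, hf]
  simp only [Function.comp_apply]
  rw [Equiv.sum_comp σ fun r => ((Function.update e p.1.1 p.1.2 r : Fin n) : ℕ), weight]
  refine Finset.sum_lt_sum (fun i _ => ?_) ⟨p.1.1, Finset.mem_univ _, by simpa using hlt⟩
  by_cases h : i = p.1.1
  · subst h; simpa using hlt.le
  · simp [h]

lemma mem_offSet_of_chart_mem {x : FreeEntry e → ℝ} {f : Fin k ↪o Fin n} (hw : weight f ≤ weight e)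
    (hne : f ≠ e) (h : chart e x ∈ plueckerOpen f) : x ∈ offSet (leftEntries e) := by
  by_contra hx
  have hz : ∀ r c, c < e r → chartMat e x r c = 0 := by
    intro r c hc
    by_cases hs : ∀ s, e s ≠ c
    · by_contra h0
      refine hx ⟨⟨(r, c), hs⟩, by simpa [leftEntries] using hc, ?_⟩
      rwa [← chartMat_of_ne x ⟨(r, c), hs⟩]
    · rw [chartMat, dif_neg hs, if_neg hc.ne']
  have hm : ((chartMat e x).submatrix id f).det ≠ 0 := mk_mem_plueckerOpen.1 h
  rw [Matrix.det_apply] at hm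
  obtain ⟨σ, -, hσ⟩ := Finset.exists_ne_zero_of_sum_ne_zero hm
  have hle : ∀ r, e (σ r) ≤ f r := by
    intro r
    by_contra! hlt
    refine hσ ?_
    rw [Finset.prod_eq_zero (Finset.mem_univ r), smul_zero]
    exact hz _ _ hlt
  have hsum : weight e = ∑ r, (e (σ r) : ℕ) := (Equiv.sum_comp σ fun r => (e r : ℕ)).symm
  have heq : ∀ r, (e (σ r) : ℕ) = f r := by
    have := (Finset.sum_eq_sum_iff_of_le (s := Finset.univ) (f := fun r => (e (σ r) : ℕ))
      (g := fun r => (f r : ℕ)) fun r _ => hle r).1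
      (le_antisymm (Finset.sum_le_sum fun r _ => hle r) (hsum ▸ hw))
    exact fun r => this r (Finset.mem_univ r)
  refine hne (DFunLike.coe_injective ((f.strictMono.range_inj e.strictMono).1 ?_))
  have : (f : Fin k → Fin n) = e ∘ σ := funext fun r => Fin.ext (heq r).symm
  rw [this, Set.range_comp, σ.range_eq_univ, Set.image_univ]

end Charts

section RankAdditivity

variable {M : Type*} [AddCommGroup M] [Module ℚ M]

theorem rank_relHomol_add {d : M →ₗ[ℚ] M} {A B C : ℕ → Submodule ℚ M} (hB : IsSubcomplex d B)
    (hC : IsSubcomplex d C) (hAB : ∀ n, A n ≤ B n) (hBC : ∀ n, B n ≤ C n)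
    (h₁ : ∀ n, Odd n → Subsingleton (RelHomol d B A n))
    (h₂ : ∀ n, Odd n → Subsingleton (RelHomol d C B n)) (n : ℕ) :
    Module.rank ℚ (RelHomol d C A n) =
      Module.rank ℚ (RelHomol d C B n) + Module.rank ℚ (RelHomol d B A n) := by
  have h0 : ∀ n, relConnect hB A C n = 0 := fun n => by
    rcases Nat.even_or_odd n with h | h
    · have := h₂ (n + 1) h.add_one
      exact LinearMap.ext fun x => by rw [Subsingleton.elim x 0, map_zero, map_zero]
    · have := h₁ n h
      exact LinearMap.ext fun x => Subsingleton.elim _ _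
  have hi : Function.Injective (relMap (isRelMap_triple_left (A := A) (d := d) hBC) n) := by
    rw [← LinearMap.ker_eq_bot, ker_relMap_triple_left hB hAB hBC, h0, LinearMap.range_zero]
  have hs : Function.Surjective (relMap (isRelMap_triple_right (C := C) (d := d) hAB) n) := by
    cases n with
    | zero => exact relMap_triple_right_zero_surjective hAB hC
    | succ n => rw [← LinearMap.range_eq_top, ← ker_relConnect hB hAB n hBC, h0, LinearMap.ker_zero]
  rw [← LinearMap.rank_range_add_rank_ker (relMap (isRelMap_triple_right (C := C) (d := d) hAB) n),
    rank_range_of_surjective _ hs, ker_relMap_triple_right hAB hBC hC, rank_range_of_injective _ hi]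

end RankAdditivity

section Averaging

set_option linter.unusedSectionVars false

variable {X G : Type} [TopologicalSpace X] [Group G] [Fintype G]

/-- The average of the chain maps induced by a family of self-maps. -/
noncomputable def average (ρ : G → C(X, X)) : SingChain X →ₗ[ℚ] SingChain X :=
  (Fintype.card G : ℚ)⁻¹ • ∑ s, singPush (ρ s)

variable {ρ : G → C(X, X)}

lemma average_apply (x : SingChain X) :
    average ρ x = (Fintype.card G : ℚ)⁻¹ • ∑ s, singPush (ρ s) x := by
  simp [average]

lemma singBd_average (x : SingChain X) : singBd (average ρ x) = average ρ (singBd x) := by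
  simp only [average_apply, map_smul, map_sum, singBd_singPush]

lemma average_mem {U : Set X} (hU : ∀ s, Set.MapsTo (ρ s) U U) {n : ℕ} {x : SingChain X}
    (hx : x ∈ chainsIn U n) : average ρ x ∈ chainsIn U n := by
  rw [average_apply]
  exact Submodule.smul_mem _ _ (sum_mem fun s _ => singPush_mem (hU s) hx)

lemma card_inv_smul_sum_const {M : Type*} [AddCommGroup M] [Module ℚ M] (x : M) :
    (Fintype.card G : ℚ)⁻¹ • ∑ _s : G, x = x := by
  rw [Finset.sum_const, Finset.card_univ, ← Nat.cast_smul_eq_nsmul ℚ, smul_smul,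
    inv_mul_cancel₀ (Nat.cast_ne_zero.2 Fintype.card_ne_zero), one_smul]

lemma average_average (hρ : ∀ s t, (ρ s).comp (ρ t) = ρ (s * t)) (x : SingChain X) :
    average ρ (average ρ x) = average ρ x := by
  rw [average_apply, average_apply]
  have : ∀ s, singPush (ρ s) ((Fintype.card G : ℚ)⁻¹ • ∑ t, singPush (ρ t) x) =
      (Fintype.card G : ℚ)⁻¹ • ∑ t, singPush (ρ t) x := by
    intro s
    rw [map_smul, map_sum]
    simp only [singPush_singPush, hρ]
    rw [← Equiv.sum_comp (Equiv.mulLeft s) fun t => singPush (ρ t) x]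
    rfl
  simp only [this]
  exact card_inv_smul_sum_const _

/-- The invariant chains in `U`. -/
noncomputable def invChains (ρ : G → C(X, X)) (U : Set X) (n : ℕ) : Submodule ℚ (SingChain X) :=
  (chainsIn U n).map (average ρ)

lemma invChains_mono {U V : Set X} (h : U ⊆ V) (n : ℕ) : invChains ρ U n ≤ invChains ρ V n :=
  Submodule.map_mono (chainsIn_mono h n)

lemma isSubcomplex_invChains (U : Set X) : IsSubcomplex singBd (invChains ρ U) where
  sq_zero := singBd_singBd
  map_zero := by
    rintro _ ⟨x, hx, rfl⟩
    rw [singBd_average, singBd_eq_zero hx, map_zero]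
  map_succ := by
    rintro n _ ⟨x, hx, rfl⟩
    rw [singBd_average]
    exact ⟨_, singBd_mem hx, rfl⟩

lemma average_eq_self (hρ : ∀ s t, (ρ s).comp (ρ t) = ρ (s * t)) {U : Set X} {n : ℕ}
    {x : SingChain X} (hx : x ∈ invChains ρ U n) : average ρ x = x := by
  obtain ⟨y, -, rfl⟩ := hx
  exact average_average hρ y

lemma invChains_le {U : Set X} (hU : ∀ s, Set.MapsTo (ρ s) U U) (n : ℕ) :
    invChains ρ U n ≤ chainsIn U n := by
  rintro _ ⟨x, hx, rfl⟩
  exact average_mem hU hx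

abbrev InvHom (ρ : G → C(X, X)) (U V : Set X) (n : ℕ) :=
  RelHomol (singBd (X := X)) (invChains ρ U) (invChains ρ V) n

lemma mem_relBds_invChains (hρ : ∀ s t, (ρ s).comp (ρ t) = ρ (s * t)) {U V : Set X} {n : ℕ}
    {z : SingChain X} (hz : z ∈ relCycles singBd (invChains ρ U) (invChains ρ V) n)
    (h : z ∈ relBds singBd (chainsIn U) (chainsIn V) n) :
    z ∈ relBds singBd (invChains ρ U) (invChains ρ V) n := by
  obtain ⟨v, hv, w, hw, e⟩ := mem_relBds.1 h
  rw [← average_eq_self hρ hz.1, ← e, map_add, ← singBd_average]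
  exact mem_relBds.2 ⟨_, ⟨v, hv, rfl⟩, _, ⟨w, hw, rfl⟩, rfl⟩

variable {U V : Set X} (hU : ∀ s, Set.MapsTo (ρ s) U U) (hV : ∀ s, Set.MapsTo (ρ s) V V)

include hU hV in
lemma average_mem_relCycles {n : ℕ} {z : SingChain X}
    (hz : z ∈ relCycles singBd (chainsIn U) (chainsIn V) n) :
    average ρ z ∈ relCycles singBd (chainsIn U) (chainsIn V) n := by
  refine mem_relCycles.2 ⟨average_mem hU hz.1, ?_⟩
  rw [singBd_average]
  exact average_mem hV hz.2

lemma relClass_average {n : ℕ} {z : SingChain X}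
    (hz : z ∈ relCycles singBd (chainsIn U) (chainsIn V) n) :
    relClass (average ρ z) (average_mem_relCycles hU hV hz) =
      (Fintype.card G : ℚ)⁻¹ • ∑ s, singMap (ρ s) (hU s) (hV s) n (relClass z hz) := by
  have : ∀ t : Finset G, ∃ h, ∑ s ∈ t, singMap (ρ s) (hU s) (hV s) n (relClass z hz) =
      relClass (∑ s ∈ t, singPush (ρ s) z) h := by
    intro t
    classical
    induction t using Finset.induction_on with
    | empty => exact ⟨by rw [Finset.sum_empty]; exact zero_mem _, rfl⟩
    | insert a t ha ih =>
      obtain ⟨h, e⟩ := ih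
      have h' := (isRelMap_singPush (hU a) (hV a)).map_relCycles hz
      simp only [Finset.sum_insert ha]
      exact ⟨add_mem h' h, by rw [e]; rfl⟩
  obtain ⟨h, e⟩ := this Finset.univ
  rw [e, relClass_smul]
  congr 1
  exact average_apply z

theorem rank_invHom_of_trivial (hρ : ∀ s t, (ρ s).comp (ρ t) = ρ (s * t)) {n : ℕ}
    (h : ∀ s x, singMap (ρ s) (hU s) (hV s) n x = x) :
    Module.rank ℚ (InvHom ρ U V n) = Module.rank ℚ (SingHom U V n) := by
  have hm : IsRelMap singBd (invChains ρ U) (invChains ρ V) singBd (chainsIn U) (chainsIn V)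
      (LinearMap.id (R := ℚ) (M := SingChain X)) :=
    ⟨fun _ => rfl, fun n _ hx => invChains_le hU n hx, fun n _ hx => invChains_le hV n hx⟩
  refine (LinearEquiv.ofBijective (relMap hm n) (relMap_bijective hm n
    (fun z hz hz' => mem_relBds_invChains hρ hz hz') fun z hz => ?_)).rank_eq
  refine ⟨average ρ z, mem_relCycles.2 ⟨⟨z, hz.1, rfl⟩, ?_⟩, ?_⟩
  · rw [singBd_average]
    exact ⟨_, hz.2, rfl⟩
  · have := relClass_average hU hV hz
    simp only [h] at this
    rwa [card_inv_smul_sum_const, relClass_eq] at this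

theorem subsingleton_invHom (hρ : ∀ s t, (ρ s).comp (ρ t) = ρ (s * t)) {n : ℕ} (χ : G → ℚ)
    (h : ∀ s x, singMap (ρ s) (hU s) (hV s) n x = χ s • x) (hχ : ∑ s, χ s = 0) :
    Subsingleton (InvHom ρ U V n) := by
  rw [subsingleton_iff_forall_eq 0]
  refine relHom_ind fun z hz => ?_
  rw [relClass_eq_zero]
  refine mem_relBds_invChains hρ hz ?_
  have hz' : z ∈ relCycles singBd (chainsIn U) (chainsIn V) n :=
    ⟨invChains_le hU n hz.1, invChains_le hV _ hz.2⟩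
  have := relClass_average hU hV hz'
  simp only [h] at this
  rw [← Finset.sum_smul, hχ, zero_smul, smul_zero, relClass_eq_zero, average_eq_self hρ hz.1] at this
  exact this

end Averaging

section Cells

variable {k n : ℕ}

/-- The diagonal matrix with the given signs. -/
def signMat (g : Fin n → ℤˣ) : Matrix (Fin n) (Fin n) ℝ := Matrix.diagonal fun c => ((g c : ℤ) : ℝ)

lemma isUnit_det_signMat (g : Fin n → ℤˣ) : IsUnit (signMat g).det := by
  rw [signMat, Matrix.det_diagonal, isUnit_iff_ne_zero, Finset.prod_ne_zero_iff]
  exact fun c _ => by exact_mod_cast (g c).ne_zero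

/-- Coordinate sign changes acting on the Grassmannian. -/
def signAct (g : Fin n → ℤˣ) : C(Grassmannian k n, Grassmannian k n) where
  toFun := grassAct (signMat g) (isUnit_det_signMat g)
  continuous_toFun := (continuous_grassAct (T := Unit) (R := fun _ => signMat g) continuous_const
    fun _ => isUnit_det_signMat g).comp (Continuous.prodMk continuous_id (continuous_const (y := ())))

lemma signAct_mk (g : Fin n → ℤˣ) (A : Frame k n) :
    signAct g A.mk = (A.mulRight _ (isUnit_det_signMat g)).mk := rfl

lemma signAct_comp (g h : Fin n → ℤˣ) :
    (signAct g).comp (signAct h) = signAct (k := k) (g * h) := by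
  ext x
  obtain ⟨A, rfl⟩ := Frame.mk_surjective x
  rw [ContinuousMap.comp_apply, signAct_mk, signAct_mk, signAct_mk]
  congr 1
  refine Subtype.ext ?_
  change A.mat * signMat h * signMat g = A.mat * signMat (g * h)
  rw [Matrix.mul_assoc, signMat, signMat, Matrix.diagonal_mul_diagonal, signMat]
  congr 2
  funext c
  simp [mul_comm]

lemma signAct_mapsTo (g : Fin n → ℤˣ) (e : Fin k → Fin n) :
    Set.MapsTo (signAct g) (plueckerOpen e) (plueckerOpen e) := by
  intro x hx
  obtain ⟨A, rfl⟩ := Frame.mk_surjective x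
  rw [signAct_mk]
  rw [mk_mem_plueckerOpen] at hx ⊢
  have : minor e (A.mulRight _ (isUnit_det_signMat g)).mat = minor e A.mat *
      (Matrix.diagonal fun r => ((g (e r) : ℤ) : ℝ)).det := by
    rw [minor, minor, ← Matrix.det_mul]
    congr 1
    ext r s
    rw [Matrix.mul_diagonal]
    exact Matrix.mul_diagonal (fun c => ((g c : ℤ) : ℝ)) A.mat r (e s)
  rw [this, Matrix.det_diagonal]
  exact mul_ne_zero hx (Finset.prod_ne_zero_iff.2 fun c _ => by exact_mod_cast (g (e c)).ne_zero)

lemma signAct_chart (g : Fin n → ℤˣ) (e : Fin k ↪o Fin n) (x : FreeEntry e → ℝ) :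
    signAct g (chart e x) = chart e (signFlip (fun p => g (e p.1.1) * g p.1.2) x) := by
  rw [chart_apply, signAct_mk, chart_apply]
  refine Frame.mk_eq_of_mul (Matrix.diagonal fun r => ((g (e r) : ℤ) : ℝ)) ?_ ?_
  · rw [Matrix.det_diagonal, isUnit_iff_ne_zero, Finset.prod_ne_zero_iff]
    exact fun c _ => by exact_mod_cast (g (e c)).ne_zero
  · change chartMat e _ = _ * (chartMat e x * signMat g)
    ext r c
    rw [Matrix.diagonal_mul, signMat, Matrix.mul_diagonal]
    by_cases hc : ∀ s, e s ≠ c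
    · rw [chartMat_of_ne _ ⟨(r, c), hc⟩, chartMat_of_ne _ ⟨(r, c), hc⟩, signFlip_apply]
      push_cast
      ring
    · rw [chartMat, chartMat, dif_neg hc, dif_neg hc]
      split_ifs with h
      · subst h
        rcases Int.units_eq_one_or (g (e r)) with h | h <;> simp [h]
      · simp

/-- A union of standard open subsets. -/
def cellUnion (s : Finset (Fin k ↪o Fin n)) : Set (Grassmannian k n) := ⋃ f ∈ s, plueckerOpen f

lemma isOpen_cellUnion (s : Finset (Fin k ↪o Fin n)) : IsOpen (cellUnion s) :=
  isOpen_biUnion fun f _ => isOpen_plueckerOpen f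

lemma signAct_mapsTo_cellUnion (g : Fin n → ℤˣ) (s : Finset (Fin k ↪o Fin n)) :
    Set.MapsTo (signAct g) (cellUnion s) (cellUnion s) := by
  intro x hx
  obtain ⟨f, hf, h⟩ := Set.mem_iUnion₂.1 hx
  exact Set.mem_iUnion₂.2 ⟨f, hf, signAct_mapsTo g f h⟩

/-- Families of cells containing every cell of smaller weight than one of their members. -/
def DownClosed (s : Finset (Fin k ↪o Fin n)) : Prop := ∀ f ∈ s, ∀ f' : Fin k ↪o Fin n, weight f' < weight f → f' ∈ s

variable {s : Finset (Fin k ↪o Fin n)} {a : Fin k ↪o Fin n}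

lemma preimage_chart_cellUnion (ha : a ∉ s) (hs : ∀ f ∈ s, weight f ≤ weight a)
    (hd : ∀ f : Fin k ↪o Fin n, weight f < weight a → f ∈ s) :
    chart a ⁻¹' cellUnion s = offSet (leftEntries a) := by
  ext x
  constructor
  · intro hx
    obtain ⟨f, hf, h⟩ := Set.mem_iUnion₂.1 hx
    exact mem_offSet_of_chart_mem a (hs f hf) (by rintro rfl; exact ha hf) h
  · intro hx
    obtain ⟨f, hf, h⟩ := chart_mem_of_mem_offSet a hx
    exact Set.mem_iUnion₂.2 ⟨f, hd f hf, h⟩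

lemma cellUnion_insert [DecidableEq (Fin k ↪o Fin n)] :
    cellUnion (insert a s) = plueckerOpen a ∪ cellUnion s := by
  simp [cellUnion, Set.iUnion_or, Set.iUnion_union_distrib]

lemma chart_mapsTo : Set.MapsTo (chart a) Set.univ (plueckerOpen a ∪ cellUnion s) := fun x _ =>
  Or.inl (range_chart a ▸ Set.mem_range_self x)

/-- Excision identifies the homology of adding one cell with a local computation. -/
theorem singMap_chart_bijective {I : Finset (FreeEntry a)} (h : chart a ⁻¹' cellUnion s = offSet I) (i : ℕ)
    (hm : Set.MapsTo (chart a) (offSet I) (cellUnion s)) :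
    Function.Bijective (singMap (chart a) (chart_mapsTo (s := s)) hm i) := by
  have h1 := singMap_bijective_of_isEmbedding (isOpenEmbedding_chart a).isEmbedding
    Set.univ (offSet I) i
  have hi : chart a '' Set.univ = plueckerOpen a := by rw [Set.image_univ, range_chart]
  have hj : chart a '' offSet I = plueckerOpen a ∩ cellUnion s := by
    rw [← h, Set.image_preimage_eq_range_inter, range_chart]
  have h2 := singIncl_bijective (isOpen_plueckerOpen a) (isOpen_cellUnion s) i
  have hx : ∀ (A B : Set (Grassmannian k n)) (hA : A = chart a '' Set.univ) (hB : B = chart a '' offSet I)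
      (hA' : A ⊆ plueckerOpen a ∪ cellUnion s) (hB' : B ⊆ cellUnion s),
      Function.Bijective (singIncl hA' hB' i) →
      Function.Bijective (singMap (chart a) (chart_mapsTo (s := s)) hm i) := by
    rintro _ _ rfl rfl hA' hB' h3
    convert h3.comp h1 using 1
    funext x
    rw [Function.comp_apply, singIncl_eq_singMap, singMap_singMap]
    rfl
  exact hx _ _ hi.symm hj.symm _ _ h2

/-- The sign by which a coordinate sign change acts on the cell `e`. -/
def cellSign (e : Fin k ↪o Fin n) (g : Fin n → ℤˣ) : ℤˣ := ∏ p ∈ leftEntries e, g (e p.1.1) * g p.1.2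

lemma cellSign_mul (e : Fin k ↪o Fin n) (g h : Fin n → ℤˣ) :
    cellSign e (g * h) = cellSign e g * cellSign e h := by
  rw [cellSign, cellSign, cellSign, ← Finset.prod_mul_distrib]
  refine Finset.prod_congr rfl fun p _ => ?_
  simp only [Pi.mul_apply]
  exact mul_mul_mul_comm _ _ _ _

section Step

variable [DecidableEq (Fin k ↪o Fin n)] (ha : a ∉ s) (hs : ∀ f ∈ s, weight f ≤ weight a)
  (hd : ∀ f : Fin k ↪o Fin n, weight f < weight a → f ∈ s)

include ha hs hd

lemma rank_singHom_cell (i : ℕ) : Module.rank ℚ (SingHom (cellUnion (insert a s)) (cellUnion s) i) =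
    if i = (leftEntries a).card then 1 else 0 := by
  have h := preimage_chart_cellUnion ha hs hd
  rw [cellUnion_insert, ← rank_singHom_offSet]
  exact (LinearEquiv.ofBijective _ (singMap_chart_bijective h i h.ge)).rank_eq.symm

lemma singMap_signAct_cell (g : Fin n → ℤˣ) (i : ℕ)
    (x : SingHom (cellUnion (insert a s)) (cellUnion s) i) :
    singMap (signAct g) (signAct_mapsTo_cellUnion g _) (signAct_mapsTo_cellUnion g _) i x =
      ((cellSign a g : ℤ) : ℚ) • x := by
  have h := preimage_chart_cellUnion ha hs hd
  suffices ∀ (U : Set (Grassmannian k n)) (hU : Set.MapsTo (signAct g) U U)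
      (_ : U = plueckerOpen a ∪ cellUnion s) (x : SingHom U (cellUnion s) i),
      singMap (signAct g) hU (signAct_mapsTo_cellUnion g _) i x = ((cellSign a g : ℤ) : ℚ) • x from
    this _ _ cellUnion_insert x
  rintro _ hU rfl x
  have hm : Set.MapsTo (chart a) (offSet (leftEntries a)) (cellUnion s) := h.ge
  obtain ⟨y, rfl⟩ := (singMap_chart_bijective h i hm).2 x
  have hc : (signAct g).comp (chart a) = (chart a).comp (signFlip fun p => g (a p.1.1) * g p.1.2) :=
    ContinuousMap.ext fun x => signAct_chart g a x
  rw [singMap_singMap, cellSign, ← map_smul, ← singMap_signFlip, singMap_singMap]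
  simp only [hc]

end Step

variable {G : Type} [Group G] [Fintype G] (ψ : G →* (Fin n → ℤˣ))

lemma sum_cellSign_eq_zero {e : Fin k ↪o Fin n} {s₀ : G} (h : cellSign e (ψ s₀) ≠ 1) :
    ∑ s, ((cellSign e (ψ s) : ℤ) : ℚ) = 0 := by
  have h' : cellSign e (ψ s₀) = -1 := (Int.units_eq_one_or _).resolve_left h
  have := Equiv.sum_comp (Equiv.mulLeft s₀) fun s => ((cellSign e (ψ s) : ℤ) : ℚ)
  simp only [Equiv.coe_mulLeft, map_mul, cellSign_mul, h'] at this
  simp only [neg_one_mul, Units.val_neg, Int.cast_neg, Finset.sum_neg_distrib] at this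
  linarith

omit [Fintype G] in
lemma signAct_map_mul (s t : G) :
    (signAct (k := k) (ψ s)).comp (signAct (ψ t)) = signAct (ψ (s * t)) := by
  rw [signAct_comp, map_mul]

open Classical in
/-- The rank of the invariant homology of a union of cells counts the cells on which the signs act
trivially, provided that these have even dimension. -/
theorem rank_invHom_cellUnion
    (hev : ∀ e : Fin k ↪o Fin n, (∀ s, cellSign e (ψ s) = 1) → Even (leftEntries e).card)
    (s : Finset (Fin k ↪o Fin n)) (hs : DownClosed s) (i : ℕ) :
    Module.rank ℚ (InvHom (fun t => signAct (ψ t)) (cellUnion s) ∅ i) =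
      ((s.filter fun e => (∀ t, cellSign e (ψ t) = 1) ∧ (leftEntries e).card = i).card : Cardinal) := by
  induction s using Finset.induction_on_max_value (fun f : Fin k ↪o Fin n => weight f)
    generalizing i with
  | empty =>
    rw [Finset.filter_empty, Finset.card_empty, Nat.cast_zero, rank_zero_iff]
    rw [subsingleton_iff_forall_eq 0]
    refine relHom_ind fun z hz => ?_
    rw [relClass_eq_zero]
    refine mem_relBds_of_mem ?_
    have := hz.1
    simpa [cellUnion] using this
  | insert a s ha hle ih =>
    have hd : ∀ f : Fin k ↪o Fin n, weight f < weight a → f ∈ s := fun f hf =>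
      (Finset.mem_insert.1 (hs a (Finset.mem_insert_self a s) f hf)).resolve_left (by
        rintro rfl; exact lt_irrefl _ hf)
    have hs' : DownClosed s := fun f hf f' h =>
      (Finset.mem_insert.1 (hs f (Finset.mem_insert_of_mem hf) f' h)).resolve_left (by
        rintro rfl; exact absurd h (hle f hf).not_gt)
    have hcell : ∀ i, Module.rank ℚ (InvHom (fun t => signAct (ψ t)) (cellUnion (insert a s))
        (cellUnion s) i) = if (∀ t, cellSign a (ψ t) = 1) ∧ (leftEntries a).card = i then 1 else 0 := by
      intro i
      by_cases h : ∀ t, cellSign a (ψ t) = 1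
      · rw [rank_invHom_of_trivial (fun t => signAct_mapsTo_cellUnion _ _)
          (fun t => signAct_mapsTo_cellUnion _ _) (signAct_map_mul ψ), rank_singHom_cell ha hle hd]
        · simp [h, eq_comm]
        · intro t x
          rw [singMap_signAct_cell ha hle hd, h]
          simp
      · rw [if_neg (fun h' => h h'.1), rank_zero_iff]
        push Not at h
        obtain ⟨s₀, h⟩ := h
        exact subsingleton_invHom (fun t => signAct_mapsTo_cellUnion _ _)
          (fun t => signAct_mapsTo_cellUnion _ _) (signAct_map_mul ψ) _
          (fun t x => singMap_signAct_cell ha hle hd _ _ x) (sum_cellSign_eq_zero ψ h)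
    rw [rank_relHomol_add (isSubcomplex_invChains _) (isSubcomplex_invChains _)
      (invChains_mono (Set.empty_subset _))
      (invChains_mono (show cellUnion s ⊆ cellUnion (insert a s) from
        Set.biUnion_subset_biUnion_left fun f => Finset.mem_insert_of_mem)) ?_ ?_]
    · rw [ih hs', hcell, Finset.filter_insert]
      split_ifs with h
      · rw [Finset.card_insert_of_notMem (fun h' => ha (Finset.mem_filter.1 h').1)]
        push_cast
        exact add_comm _ _
      · rw [zero_add]
    · intro i hi
      rw [← rank_zero_iff (R := ℚ), ih hs', Nat.cast_eq_zero, Finset.card_eq_zero, Finset.filter_eq_empty_iff]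
      rintro e - ⟨h1, h2⟩
      exact Nat.not_even_iff_odd.2 hi (h2 ▸ hev e h1)
    · intro i hi
      rw [← rank_zero_iff (R := ℚ), hcell, if_neg]
      rintro ⟨h1, h2⟩
      exact Nat.not_even_iff_odd.2 hi (h2 ▸ hev a h1)

open Classical in
theorem rank_singHom_grassmannian [Fintype (Fin k ↪o Fin n)]
    (hev : ∀ e : Fin k ↪o Fin n, (∀ s, cellSign e (ψ s) = 1) → Even (leftEntries e).card) (i : ℕ)
    (hψ : ∀ s x, singMap (signAct (k := k) (ψ s)) (Set.mapsTo_univ _ Set.univ) (Set.mapsTo_empty _ ∅) i x = x) :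
    Module.rank ℚ (SingHom (Set.univ : Set (Grassmannian k n)) ∅ i) =
      ((Finset.univ.filter fun e : Fin k ↪o Fin n =>
        (∀ t, cellSign e (ψ t) = 1) ∧ (leftEntries e).card = i).card : Cardinal) := by
  rw [← rank_invHom_cellUnion ψ hev Finset.univ (fun _ _ f _ => Finset.mem_univ f),
    ← rank_invHom_of_trivial _ _ (signAct_map_mul ψ) hψ]
  have : cellUnion (Finset.univ : Finset (Fin k ↪o Fin n)) = Set.univ := by
    simp [cellUnion, iUnion_plueckerOpen]
  rw [this]

end Cells

section Rotation

variable {k m : ℕ}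

/-- The equivalence grouping the coordinates `2 q` and `2 q + 1` into a pair. -/
def pairEquiv (m : ℕ) : Fin (2 * m) ≃ Fin 2 × Fin m :=
  (finCongr (mul_comm 2 m)).trans (finProdFinEquiv.symm.trans (Equiv.prodComm _ _))

/-- Sign changes that agree on both coordinates of each pair. -/
def pairSigns (m : ℕ) : (Fin m → ℤˣ) →* (Fin (2 * m) → ℤˣ) where
  toFun s p := s (pairEquiv m p).2
  map_one' := rfl
  map_mul' _ _ := rfl

/-- Block rotation by the angles `θ q`. -/
noncomputable def blockRotation (θ : Fin m → ℝ) : Matrix (Fin (2 * m)) (Fin (2 * m)) ℝ :=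
  (Matrix.blockDiagonal fun q => !![Real.cos (θ q), -Real.sin (θ q); Real.sin (θ q), Real.cos (θ q)]).submatrix
    (pairEquiv m) (pairEquiv m)

lemma det_blockRotation (θ : Fin m → ℝ) : (blockRotation θ).det = 1 := by
  rw [blockRotation, Matrix.det_submatrix_equiv_self, Matrix.det_blockDiagonal]
  refine Finset.prod_eq_one fun q _ => ?_
  rw [Matrix.det_fin_two_of]
  linarith [Real.cos_sq_add_sin_sq (θ q)]

lemma continuous_blockRotation {T : Type*} [TopologicalSpace T] {θ : T → Fin m → ℝ} (h : Continuous θ) :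
    Continuous fun t => blockRotation (θ t) := by
  refine Continuous.matrix_submatrix ?_ _ _
  refine Continuous.matrix_blockDiagonal ?_
  refine continuous_pi fun q => continuous_matrix fun a b => ?_
  have hq : Continuous fun t => θ t q := (continuous_apply q).comp h
  fin_cases a <;> fin_cases b <;> simp <;> fun_prop

lemma blockRotation_of_sin_eq_zero {θ : Fin m → ℝ} (s : Fin m → ℤˣ)
    (h : ∀ q, Real.sin (θ q) = 0 ∧ Real.cos (θ q) = ((s q : ℤ) : ℝ)) :
    blockRotation θ = signMat (pairSigns m s) := by
  have : (fun q => !![Real.cos (θ q), -Real.sin (θ q); Real.sin (θ q), Real.cos (θ q)]) =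
      fun q => Matrix.diagonal fun _ : Fin 2 => ((s q : ℤ) : ℝ) := by
    funext q
    rw [(h q).1, (h q).2]
    ext a b
    fin_cases a <;> fin_cases b <;> simp
  rw [blockRotation, this, Matrix.blockDiagonal_diagonal, Matrix.submatrix_diagonal_equiv]
  rfl

lemma grassAct_congr {n : ℕ} {R R' : Matrix (Fin n) (Fin n) ℝ} (h : R = R') (hR : IsUnit R.det)
    (hR' : IsUnit R'.det) (x : Grassmannian k n) : grassAct R hR x = grassAct R' hR' x := by
  subst h; rfl

/-- Paired sign changes are isotopic to the identity, hence act trivially on homology. -/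
theorem singMap_signAct_pairSigns (s : Fin m → ℤˣ) (i : ℕ)
    (x : SingHom (Set.univ : Set (Grassmannian k (2 * m))) ∅ i) :
    singMap (signAct (pairSigns m s)) (Set.mapsTo_univ _ Set.univ) (Set.mapsTo_empty _ ∅) i x = x := by
  let θ : unitInterval → Fin m → ℝ := fun t q => if s q = 1 then 0 else Real.pi * t
  have hθ : Continuous θ := continuous_pi fun q => by
    by_cases h : s q = 1
    · simp only [θ, if_pos h]; exact continuous_const
    · simp only [θ, if_neg h]; fun_prop
  have hR : ∀ t, IsUnit (blockRotation (θ t)).det := fun t => by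
    rw [det_blockRotation]; exact isUnit_one
  let F : C(Grassmannian k (2 * m) × unitInterval, Grassmannian k (2 * m)) :=
    ⟨_, continuous_grassAct (continuous_blockRotation hθ) hR⟩
  have h1 : blockRotation (θ 1) = signMat (pairSigns m s) :=
    blockRotation_of_sin_eq_zero s fun q => by
      rcases Int.units_eq_one_or (s q) with h | h <;> simp [θ, h]
  have h0 : blockRotation (θ 0) = signMat 1 :=
    blockRotation_of_sin_eq_zero 1 fun q => by simp [θ]
  have hF1 : ∀ y, F (y, 1) = signAct (pairSigns m s) y := fun y => grassAct_congr h1 _ _ y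
  have hF0 : ∀ y, F (y, 0) = ContinuousMap.id _ y := fun y => by
    refine (grassAct_congr h0 (hR 0) (isUnit_det_signMat 1) y).trans ?_
    obtain ⟨A, rfl⟩ := Frame.mk_surjective y
    change signAct 1 A.mk = A.mk
    rw [signAct_mk]
    congr 1
    refine Subtype.ext ?_
    change A.mat * signMat 1 = A.mat
    simp [signMat]
  rw [singMap_eq_of_homotopy F (U := Set.univ) (V := ∅) (fun _ _ _ => Set.mem_univ _)
    (fun _ h => h.elim) hF1 hF0 _ _ (Set.mapsTo_id _) (Set.mapsTo_id _)]
  exact singMap_id i x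

end Rotation

section Inversions

open Finset

/-- The number of pairs `c < p` with `p ∈ J` and `c ∉ J`. -/
def inversions (J : Finset ℕ) : ℕ := ∑ p ∈ J, #(range p \ J)

/-- The union of the pairs `{2 q, 2 q + 1}` for `q ∈ J`. -/
def double (J : Finset ℕ) : Finset ℕ := J.image (2 * ·) ∪ J.image (2 * · + 1)

lemma mem_double {J : Finset ℕ} {a : ℕ} : a ∈ double J ↔ a / 2 ∈ J := by
  simp only [double, mem_union, mem_image]
  constructor
  · rintro (⟨q, hq, rfl⟩ | ⟨q, hq, rfl⟩)
    · rwa [Nat.mul_div_cancel_left _ two_pos]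
    · rwa [show (2 * q + 1) / 2 = q by omega]
  · intro h
    rcases Nat.even_or_odd' a with ⟨q, rfl | rfl⟩
    · exact Or.inl ⟨q, by rwa [Nat.mul_div_cancel_left _ two_pos] at h, rfl⟩
    · exact Or.inr ⟨q, by rwa [show (2 * q + 1) / 2 = q by omega] at h, rfl⟩

lemma double_injective : Function.Injective double := fun J K h => by
  ext q
  have := congrArg (2 * q ∈ ·) h
  simpa [mem_double] using this

@[to_additive]
lemma prod_double {M : Type*} [CommMonoid M] (J : Finset ℕ) (f : ℕ → M) :
    ∏ a ∈ double J, f a = ∏ q ∈ J, f (2 * q) * f (2 * q + 1) := by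
  rw [double, prod_union, prod_image, prod_image, prod_mul_distrib]
  · intro a _ b _ h
    simpa using h
  · intro a _ b _ h
    simpa using h
  · rw [disjoint_left]
    intro a h h'
    obtain ⟨q, -, rfl⟩ := mem_image.1 h
    obtain ⟨r, -, h⟩ := mem_image.1 h'
    omega

lemma card_double (J : Finset ℕ) : #(double J) = 2 * #J := by
  rw [card_eq_sum_ones, sum_double, sum_const, smul_eq_mul, mul_comm]

lemma range_sdiff_double {J : Finset ℕ} {q a : ℕ} (hq : q ∈ J) (ha : a / 2 = q) :
    range a \ double J = double (range q \ J) := by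
  ext c
  simp only [mem_sdiff, mem_range, mem_double]
  have : c / 2 ∉ J → c / 2 ≠ q := fun h h' => h (h' ▸ hq)
  constructor
  · rintro ⟨h, h'⟩
    exact ⟨by have := this h'; omega, h'⟩
  · rintro ⟨h, h'⟩
    exact ⟨by omega, h'⟩

@[to_additive]
lemma prod_prod_double {M : Type*} [CommMonoid M] (J : Finset ℕ) (f : ℕ → ℕ → M) :
    ∏ a ∈ double J, ∏ c ∈ range a \ double J, f (a / 2) (c / 2) =
      ∏ q ∈ J, ∏ r ∈ range q \ J, f q r ^ 4 := by
  rw [prod_double]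
  refine prod_congr rfl fun q hq => ?_
  rw [range_sdiff_double hq (by omega), range_sdiff_double hq (by omega), prod_double, prod_double,
    ← prod_mul_distrib]
  refine prod_congr rfl fun r _ => ?_
  rw [show 2 * q / 2 = q by omega, show 2 * r / 2 = r by omega, show (2 * q + 1) / 2 = q by omega,
    show (2 * r + 1) / 2 = r by omega, ← pow_two, ← pow_two, ← pow_mul]

lemma inversions_double (J : Finset ℕ) : inversions (double J) = 4 * inversions J := by
  have := sum_sum_double J fun _ _ => 1
  simp only [sum_const, smul_eq_mul, mul_one] at this
  rw [inversions, inversions, mul_sum, this]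
  exact sum_congr rfl fun _ _ => mul_comm _ _

lemma eq_double_of_forall {J : Finset ℕ} (h : ∀ q, 2 * q ∈ J ↔ 2 * q + 1 ∈ J) :
    J = double (J.image (· / 2)) := by
  ext a
  rw [mem_double, mem_image]
  refine ⟨fun ha => ⟨a, ha, rfl⟩, ?_⟩
  rintro ⟨b, hb, hab⟩
  have := h (a / 2)
  rcases Nat.even_or_odd' a with ⟨q, rfl | rfl⟩ <;> rcases Nat.even_or_odd' b with ⟨r, rfl | rfl⟩
  · rwa [show q = r by omega]
  · rw [show q = r by omega]; exact (h r).2 hb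
  · rw [show q = r by omega]; exact (h r).1 hb
  · rwa [show q = r by omega]

/-- The sign by which a paired sign change acts on the cell with pivots `J`. -/
def pivotSign (J : Finset ℕ) (s : ℕ → ℤˣ) : ℤˣ := ∏ a ∈ J, ∏ c ∈ range a \ J, s (a / 2) * s (c / 2)

lemma pivotSign_double (J : Finset ℕ) (s : ℕ → ℤˣ) : pivotSign (double J) s = 1 := by
  rw [pivotSign, prod_prod_double J fun a c => s a * s c]
  refine prod_eq_one fun q _ => prod_eq_one fun r _ => ?_
  rcases Int.units_eq_one_or (s q * s r) with h | h <;> rw [h] <;> rfl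

lemma pivotSign_flip {J : Finset ℕ} {q b b' : ℕ} (hb : b ∈ J) (hb' : b' ∉ J) (hq : b / 2 = q)
    (hq' : b' / 2 = q) (hJ : Even #J) : pivotSign J (fun p => if p = q then -1 else 1) = -1 := by
  have hp : ∀ p, p / 2 = q ↔ p = b ∨ p = b' := fun p => by
    have : b ≠ b' := fun h => hb' (h ▸ hb)
    omega
  have h1 : ∀ a ∈ J, (∏ c ∈ range a \ J, ((if a / 2 = q then -1 else 1) * if c / 2 = q then -1 else 1 : ℤˣ)) =
      (if a = b then (-1) ^ #(range b \ J) else 1) * if b' < a then -1 else 1 := by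
    intro a ha
    rw [prod_mul_distrib, prod_const]
    congr 1
    · have : a / 2 = q ↔ a = b := by
        rw [hp]; exact or_iff_left (by rintro rfl; exact hb' ha)
      by_cases h : a = b
      · subst h; simp [hq]
      · simp [this, h]
    · have : ∀ c ∈ range a \ J, (if c / 2 = q then -1 else 1 : ℤˣ) = if c = b' then -1 else 1 := by
        intro c hc
        have hc' : c ≠ b := by rintro rfl; exact (mem_sdiff.1 hc).2 hb
        simp [hp, hc']
      rw [prod_congr rfl this, prod_ite_eq']
      simp [hb']
  rw [pivotSign, prod_congr rfl h1, prod_mul_distrib, prod_ite_eq' _ _ fun _ => _, if_pos hb,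
    ← prod_filter, prod_const, ← pow_add]
  refine Odd.neg_one_pow ?_
  have hlt : #(range (2 * q) \ J) + #(J.filter (· < 2 * q)) = 2 * q := by
    refine Eq.trans ?_ ((card_sdiff_add_card_inter (range (2 * q)) J).trans (card_range _))
    congr 2
    ext a
    simp [and_comm]
  have hge : #(J.filter (· < 2 * q)) + #(J.filter fun a => ¬ a < 2 * q) = #J :=
    card_filter_add_card_filter_not _
  have hcases : (b = 2 * q ∧ b' = 2 * q + 1) ∨ (b = 2 * q + 1 ∧ b' = 2 * q) := by
    have : b ≠ b' := fun h => hb' (h ▸ hb)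
    omega
  rcases hcases with ⟨rfl, rfl⟩ | ⟨rfl, rfl⟩
  · have : J.filter (fun a => ¬ a < 2 * q) = insert (2 * q) (J.filter fun a => 2 * q + 1 < a) := by
      ext a
      simp only [mem_filter, mem_insert]
      constructor
      · rintro ⟨h, h'⟩
        have : a ≠ 2 * q + 1 := by rintro rfl; exact hb' h
        by_cases h2 : a = 2 * q
        · exact Or.inl h2
        · exact Or.inr ⟨h, by omega⟩
      · rintro (rfl | ⟨h, h'⟩)
        · exact ⟨hb, lt_irrefl _⟩
        · exact ⟨h, by omega⟩
    rw [this, card_insert_of_notMem (by simp)] at hge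
    obtain ⟨r, hr⟩ := hJ
    rw [← Nat.not_even_iff_odd]
    rintro ⟨t, ht⟩
    omega
  · have h1 : J.filter (fun a => ¬ a < 2 * q) = J.filter fun a => 2 * q < a := by
      ext a
      simp only [mem_filter]
      refine and_congr_right fun h => ?_
      have : a ≠ 2 * q := by rintro rfl; exact hb' h
      omega
    have h2 : range (2 * q + 1) \ J = insert (2 * q) (range (2 * q) \ J) := by
      rw [range_add_one, insert_sdiff_of_notMem _ hb']
    rw [h1] at hge
    rw [h2, card_insert_of_notMem (by simp)]
    obtain ⟨r, hr⟩ := hJ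
    rw [← Nat.not_even_iff_odd]
    rintro ⟨t, ht⟩
    omega

end Inversions

section Pivots

open Finset

variable {k n : ℕ}

/-- The set of pivot columns of a cell. -/
def pivots (e : Fin k ↪o Fin n) : Finset ℕ := univ.map (e.toEmbedding.trans Fin.valEmbedding)

lemma mem_pivots {e : Fin k ↪o Fin n} {a : ℕ} : a ∈ pivots e ↔ ∃ r, (e r : ℕ) = a := by
  simp [pivots]

lemma pivots_injective : Function.Injective (pivots : (Fin k ↪o Fin n) → Finset ℕ) := fun e f h => by
  have hr : Set.range e = Set.range f := by
    ext c
    have := congrArg ((c : ℕ) ∈ ·) h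
    simpa [mem_pivots, Fin.val_inj] using this
  exact DFunLike.coe_injective ((StrictMono.range_inj e.strictMono f.strictMono).1 hr)

lemma range_pivots : Set.range (pivots : (Fin k ↪o Fin n) → Finset ℕ) = powersetCard k (range n) := by
  ext J
  rw [Set.mem_range, mem_coe, mem_powersetCard]
  constructor
  · rintro ⟨e, rfl⟩
    refine ⟨fun a ha => ?_, by simp [pivots]⟩
    obtain ⟨r, rfl⟩ := mem_pivots.1 ha
    exact mem_range.2 (e r).2
  · rintro ⟨h, hc⟩
    have hJ : ∀ a ∈ J, a < n := fun a ha => mem_range.1 (h ha)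
    refine ⟨(J.attachFin hJ).orderEmbOfFin (by simpa using hc), ?_⟩
    ext a
    rw [mem_pivots]
    have hr := (J.attachFin hJ).range_orderEmbOfFin (k := k) (by simpa using hc)
    constructor
    · rintro ⟨r, rfl⟩
      have := hr ▸ Set.mem_range_self r
      simpa using this
    · intro ha
      have : (⟨a, hJ a ha⟩ : Fin n) ∈ (J.attachFin hJ : Set (Fin n)) := by simpa using ha
      rw [← hr] at this
      obtain ⟨r, hr⟩ := this
      exact ⟨r, by rw [hr]⟩

@[to_additive]
lemma prod_leftEntries {M : Type*} [CommMonoid M] (e : Fin k ↪o Fin n) (f : ℕ → ℕ → M) :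
    ∏ p ∈ leftEntries e, f (e p.1.1) p.1.2 = ∏ a ∈ pivots e, ∏ c ∈ range a \ pivots e, f a c := by
  rw [prod_sigma']
  refine prod_nbij (fun p => ⟨e p.1.1, p.1.2⟩) ?_ ?_ ?_ fun _ _ => rfl
  · intro p hp
    have hlt : p.1.2 < e p.1.1 := by simpa [leftEntries] using hp
    rw [mem_sigma, mem_sdiff, mem_range]
    refine ⟨mem_pivots.2 ⟨_, rfl⟩, hlt, fun h => ?_⟩
    obtain ⟨r, hr⟩ := mem_pivots.1 h
    exact p.2 r (Fin.ext hr)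
  · rintro ⟨⟨r, c⟩, h⟩ - ⟨⟨r', c'⟩, h'⟩ - heq
    simp only [Sigma.mk.injEq, heq_eq_eq, Fin.val_inj, e.injective.eq_iff] at heq
    obtain ⟨rfl, rfl⟩ := heq
    rfl
  · rintro ⟨a, c⟩ hac
    rw [mem_coe, mem_sigma, mem_sdiff, mem_range] at hac
    obtain ⟨ha, hlt, hc⟩ := hac
    obtain ⟨r, rfl⟩ := mem_pivots.1 ha
    refine ⟨⟨(r, ⟨c, hlt.trans (e r).2⟩), fun s hs => hc (mem_pivots.2 ⟨s, by rw [hs]⟩)⟩, ?_, rfl⟩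
    exact mem_coe.2 (mem_filter.2 ⟨mem_univ _, Fin.lt_def.2 hlt⟩)

lemma card_leftEntries (e : Fin k ↪o Fin n) : #(leftEntries e) = inversions (pivots e) := by
  rw [card_eq_sum_ones, sum_leftEntries e fun _ _ => 1, inversions]
  simp

lemma cellSign_pairSigns {m : ℕ} (e : Fin k ↪o Fin (2 * m)) (s : ℕ → ℤˣ) :
    cellSign e (pairSigns m fun q => s q) = pivotSign (pivots e) s :=
  prod_leftEntries e fun a c => s (a / 2) * s (c / 2)

lemma exists_eq_double_of_pivotSign {J : Finset ℕ} (hJ : Even #J)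
    (h : ∀ s : ℕ → ℤˣ, pivotSign J s = 1) : ∃ J', J = double J' := by
  refine ⟨_, eq_double_of_forall fun q => ?_⟩
  by_contra hq
  have hne : (-1 : ℤˣ) ≠ 1 := by decide
  by_cases h' : 2 * q ∈ J
  · exact hne ((pivotSign_flip h' (fun h2 => hq (iff_of_true h' h2)) (q := q) (by omega) (by omega) hJ).symm.trans (h _))
  · have h2 : 2 * q + 1 ∈ J := by
      by_contra h2
      exact hq (iff_of_false h' h2)
    exact hne ((pivotSign_flip h2 h' (q := q) (by omega) (by omega) hJ).symm.trans (h _))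

lemma forall_cellSign_eq_one_iff {j m : ℕ} (e : Fin (2 * j) ↪o Fin (2 * m)) :
    (∀ s, cellSign e (pairSigns m s) = 1) ↔ ∃ J ∈ powersetCard j (range m), double J = pivots e := by
  have he : pivots e ∈ powersetCard (2 * j) (range (2 * m)) := by
    rw [← mem_coe, ← range_pivots]; exact Set.mem_range_self e
  rw [mem_powersetCard] at he
  constructor
  · intro h
    obtain ⟨J, hJ⟩ := exists_eq_double_of_pivotSign (by rw [he.2]; exact even_two_mul j) fun s =>
      (cellSign_pairSigns e s).symm.trans (h _)
    refine ⟨J, mem_powersetCard.2 ⟨fun q hq => ?_, ?_⟩, hJ.symm⟩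
    · have : 2 * q ∈ pivots e := by rw [hJ, mem_double]; simpa using hq
      have := mem_range.1 (he.1 this)
      exact mem_range.2 (by omega)
    · have := he.2
      rw [hJ, card_double] at this
      omega
  · rintro ⟨J, -, hJ⟩ s
    have hs : s = fun q : Fin m => (fun p : ℕ => if h : p < m then s ⟨p, h⟩ else 1) q := by
      funext q; simp
    rw [hs]
    refine (cellSign_pairSigns e fun p : ℕ => if h : p < m then s ⟨p, h⟩ else 1).trans ?_
    rw [← hJ, pivotSign_double]

lemma even_card_leftEntries {j m : ℕ} (e : Fin (2 * j) ↪o Fin (2 * m))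
    (h : ∀ s, cellSign e (pairSigns m s) = 1) : Even (#(leftEntries e)) := by
  obtain ⟨J, -, hJ⟩ := (forall_cellSign_eq_one_iff e).1 h
  rw [card_leftEntries, ← hJ, inversions_double]
  exact ⟨2 * inversions J, by ring⟩

open Classical in
lemma card_invariant_cells (j m i : ℕ) [Fintype (Fin (2 * j) ↪o Fin (2 * m))] :
    #{e : Fin (2 * j) ↪o Fin (2 * m) | (∀ t, cellSign e (pairSigns m t) = 1) ∧ #(leftEntries e) = i} =
      #{J ∈ powersetCard j (range m) | 4 * inversions J = i} := by
  refine (card_image_of_injective _ pivots_injective).symm.trans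
    (Eq.trans (congrArg card ?_) (card_image_of_injective _ double_injective))
  ext K
  simp only [mem_image, mem_filter, mem_univ, true_and, forall_cellSign_eq_one_iff, card_leftEntries]
  constructor
  · rintro ⟨e, ⟨⟨J, hJ, h⟩, hi⟩, rfl⟩
    exact ⟨J, ⟨hJ, by rw [← hi, ← h, inversions_double]⟩, h⟩
  · rintro ⟨J, ⟨hJ, hi⟩, rfl⟩
    have : double J ∈ Set.range (pivots : (Fin (2 * j) ↪o Fin (2 * m)) → Finset ℕ) := by
      rw [range_pivots, mem_coe, mem_powersetCard, card_double]
      rw [mem_powersetCard] at hJ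
      refine ⟨fun a ha => ?_, by rw [hJ.2]⟩
      have := mem_range.1 (hJ.1 (mem_double.1 ha))
      exact mem_range.2 (by omega)
    obtain ⟨e, he⟩ := this
    exact ⟨e, ⟨⟨J, hJ, he.symm⟩, by rw [he, inversions_double, hi]⟩, he⟩

theorem rank_singHom_grassmannian_even (j m i : ℕ) :
    Module.rank ℚ (SingHom (Set.univ : Set (Grassmannian (2 * j) (2 * m))) ∅ i) =
      (#{J ∈ powersetCard j (range m) | 4 * inversions J = i} : Cardinal) := by
  classical
  have : Fintype (Fin (2 * j) ↪o Fin (2 * m)) := Fintype.ofFinite _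
  rw [rank_singHom_grassmannian (pairSigns m) even_card_leftEntries i fun s x =>
    singMap_signAct_pairSigns s i x, ← card_invariant_cells]

end Pivots

section GaussianBinomial

open Finset

/-- The generating polynomial of subsets by their number of inversions. -/
noncomputable def inversionPoly (m j : ℕ) : Polynomial ℤ := ∑ J ∈ powersetCard j (range m), X ^ inversions J

lemma inversions_insert {m : ℕ} {J : Finset ℕ} (hJ : J ⊆ range m) :
    inversions (insert m J) = inversions J + (m - #J) := by
  have hm : m ∉ J := fun h => lt_irrefl m (mem_range.1 (hJ h))
  rw [inversions, sum_insert hm, add_comm, inversions]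
  congr 1
  · refine sum_congr rfl fun p hp => ?_
    rw [sdiff_insert, erase_eq_of_notMem]
    simp [(mem_range.1 (hJ hp)).le]
  · rw [sdiff_insert, erase_eq_of_notMem (by simp), card_sdiff_of_subset hJ, card_range]

lemma inversionPoly_succ_succ (m j : ℕ) :
    inversionPoly (m + 1) (j + 1) = inversionPoly m (j + 1) + X ^ (m - j) * inversionPoly m j := by
  rw [inversionPoly, range_add_one, powersetCard_succ_insert notMem_range_self, sum_union, sum_image,
    inversionPoly, inversionPoly, mul_sum]
  · congr 1
    refine sum_congr rfl fun J hJ => ?_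
    rw [mem_powersetCard] at hJ
    rw [inversions_insert hJ.1, hJ.2, pow_add, mul_comm]
  · intro J hJ K hK h
    have hn : ∀ {J : Finset ℕ}, J ∈ powersetCard j (range m) → m ∉ J := fun hJ h =>
      lt_irrefl m (mem_range.1 ((mem_powersetCard.1 hJ).1 h))
    rw [← erase_insert (hn hJ), ← erase_insert (hn hK)]
    exact congrArg (erase · m) h
  · rw [disjoint_left]
    intro J hJ hJ'
    obtain ⟨K, -, rfl⟩ := mem_image.1 hJ'
    exact lt_irrefl m (mem_range.1 ((mem_powersetCard.1 hJ).1 (mem_insert_self _ _)))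

lemma inversionPoly_zero_right (m : ℕ) : inversionPoly m 0 = 1 := by
  simp [inversionPoly, inversions]

lemma inversionPoly_eq_zero {m j : ℕ} (h : m < j) : inversionPoly m j = 0 := by
  rw [inversionPoly, powersetCard_eq_empty.2 (by simpa using h), sum_empty]

lemma qInt_add (a b : ℕ) : qInt (a + b) = qInt a + X ^ a * qInt b := by
  simp only [qInt, sum_range_add, mul_sum, pow_add]

lemma qFact_zero : qFact 0 = 1 := rfl

lemma qFact_succ (r : ℕ) : qFact (r + 1) = qInt (r + 1) * qFact r := rfl

lemma qFact_ne_zero (r : ℕ) : qFact r ≠ 0 := by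
  suffices (qFact r).eval 1 ≠ 0 from fun h => this (by rw [h, eval_zero])
  induction r with
  | zero => simp [qFact]
  | succ r ih =>
    rw [qFact, eval_mul]
    refine mul_ne_zero ?_ ih
    simp only [qInt, eval_finsetSum, eval_pow, eval_X, one_pow, sum_const, card_range, nsmul_eq_mul, mul_one]
    exact_mod_cast r.succ_ne_zero

/-- Inversions of subsets are counted by the Gaussian binomial coefficients. -/
theorem inversionPoly_mul_qFact {m j : ℕ} (h : j ≤ m) :
    inversionPoly m j * (qFact j * qFact (m - j)) = qFact m := by
  induction m generalizing j with
  | zero =>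
    obtain rfl : j = 0 := by omega
    simp [inversionPoly_zero_right, qFact]
  | succ m ih =>
    rcases j with _ | j
    · simp [inversionPoly_zero_right, qFact]
    rw [inversionPoly_succ_succ, Nat.add_sub_add_right]
    have h2 := ih (j := j) (by omega)
    rcases (Nat.lt_or_ge j m) with hj | hj
    · have h1 := ih (j := j + 1) hj
      obtain ⟨d, rfl⟩ := Nat.exists_eq_add_of_lt hj
      have e1 : j + d + 1 - j = d + 1 := by omega
      have e2 : j + d + 1 - (j + 1) = d := by omega
      rw [e1] at h2 ⊢
      rw [e2] at h1
      have h3 : qInt (j + d + 1 + 1) = qInt (d + 1) + X ^ (d + 1) * qInt (j + 1) := by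
        rw [← qInt_add]
        congr 1
        omega
      have h4 := qFact_succ (j + d + 1)
      have h5 := qFact_succ j
      have h6 := qFact_succ d
      rw [h6] at h2
      rw [h5] at h1
      rw [h4, h3, h5, h6]
      generalize qFact (j + d + 1) = a at *
      linear_combination qInt (d + 1) * h1 + X ^ (d + 1) * qInt (j + 1) * h2
    · obtain rfl : j = m := by omega
      rw [inversionPoly_eq_zero (Nat.lt_succ_self j), zero_add, Nat.sub_self, pow_zero, one_mul,
        qFact_succ j, qFact_zero, mul_one]
      rw [Nat.sub_self, qFact_zero, mul_one] at h2
      rw [mul_left_comm, h2]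

lemma coeff_inversionPoly_comp (m j i : ℕ) :
    ((inversionPoly m j).comp (X ^ 4)).coeff i = #{J ∈ powersetCard j (range m) | 4 * inversions J = i} := by
  rw [inversionPoly, Polynomial.sum_comp, finsetSum_coeff, card_filter]
  push_cast
  refine sum_congr rfl fun J _ => ?_
  rw [X_pow_comp, ← pow_mul, coeff_X_pow]
  simp [eq_comm]

end GaussianBinomial

section Duality

/-- The cochain complex of linear forms on a chain complex. -/
noncomputable abbrev dualComplex (K : ChainComplex (ModuleCat.{0} ℚ) ℕ) :
    HomologicalComplex (ModuleCat.{0} ℚ) (ComplexShape.down ℕ).symm :=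
  (((linearYoneda ℚ (ModuleCat.{0} ℚ)).obj (ModuleCat.of ℚ ℚ)).mapHomologicalComplex _).obj K.op

variable {P Q R : Type} [AddCommGroup P] [AddCommGroup Q] [AddCommGroup R] [Module ℚ P] [Module ℚ Q]
  [Module ℚ R]

/-- A linear form vanishing on the kernel of a linear map factors through it. -/
lemma exists_comp_eq_of_ker_le {g : Q →ₗ[ℚ] R} {φ : Q →ₗ[ℚ] ℚ} (h : LinearMap.ker g ≤ LinearMap.ker φ) :
    ∃ χ : R →ₗ[ℚ] ℚ, χ ∘ₗ g = φ := by
  obtain ⟨χ, hχ⟩ := LinearMap.exists_extend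
    ((LinearMap.ker g).liftQ φ h ∘ₗ g.quotKerEquivRange.symm.toLinearMap)
  refine ⟨χ, LinearMap.ext fun x => ?_⟩
  have := LinearMap.congr_fun hχ ⟨g x, LinearMap.mem_range_self g x⟩
  refine this.trans ?_
  rw [LinearMap.comp_apply, LinearEquiv.coe_coe, LinearMap.quotKerEquivRange_symm_apply_image,
    Submodule.mkQ_apply, Submodule.liftQ_apply]

variable (K : ChainComplex (ModuleCat.{0} ℚ) ℕ) (i : ℕ)

lemma cocycle_apply_d (φ : LinearMap.ker ((dualComplex K).sc i).g.hom) (w : K.X (i + 1)) :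
    (show K.X i ⟶ ModuleCat.of ℚ ℚ from φ.1).hom ((K.d (i + 1) i).hom w) = 0 := by
  have h : ∀ q, q = i + 1 → (dualComplex K).d i q φ.1 = 0 →
      (dualComplex K).d i (i + 1) φ.1 = 0 := by
    rintro q rfl h
    exact h
  have := h ((ComplexShape.down ℕ).symm.next i) (ChainComplex.prev ℕ i) φ.2
  exact LinearMap.congr_fun (congrArg ModuleCat.Hom.hom (show K.d (i + 1) i ≫
    (show K.X i ⟶ ModuleCat.of ℚ ℚ from φ.1) = 0 from this)) w

/-- Evaluation of cocycles on homology classes. -/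
noncomputable def cocycleEval (p : ℕ) : LinearMap.ker ((dualComplex K).sc i).g.hom →ₗ[ℚ]
    Module.Dual ℚ (LinearMap.ker (K.d i p).hom ⧸
      (LinearMap.range (K.d (i + 1) i).hom).submoduleOf (LinearMap.ker (K.d i p).hom)) where
  toFun φ := Submodule.liftQ _ ((show K.X i ⟶ ModuleCat.of ℚ ℚ from φ.1).hom ∘ₗ Submodule.subtype _) (by
    rintro z ⟨w, hw⟩
    change (show K.X i ⟶ ModuleCat.of ℚ ℚ from φ.1).hom z.1 = 0
    rw [← cocycle_apply_d K i φ w]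
    exact congrArg _ hw.symm)
  map_add' φ ψ := by
    refine Submodule.linearMap_qext _ rfl
  map_smul' a φ := by
    refine Submodule.linearMap_qext _ rfl

lemma cocycleEval_surjective (p : ℕ) : Function.Surjective (cocycleEval K i p) := by
  intro χ
  obtain ⟨φ, hφ⟩ := LinearMap.exists_extend (χ ∘ₗ Submodule.mkQ _)
  have h0 : ∀ w, φ ((K.d (i + 1) i).hom w) = 0 := fun w => by
    have hw : (K.d (i + 1) i).hom w ∈ LinearMap.ker (K.d i p).hom :=
      LinearMap.congr_fun (congrArg ModuleCat.Hom.hom (K.d_comp_d (i + 1) i p)) w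
    refine (LinearMap.congr_fun hφ ⟨_, hw⟩).trans ?_
    rw [LinearMap.comp_apply, Submodule.mkQ_apply, (Submodule.Quotient.mk_eq_zero _).2, map_zero]
    exact ⟨w, rfl⟩
  have h : ∀ q, q = i + 1 → (dualComplex K).d i q (ModuleCat.ofHom φ : K.X i ⟶ ModuleCat.of ℚ ℚ) = 0 := by
    rintro q rfl
    exact ModuleCat.hom_ext (LinearMap.ext h0)
  refine ⟨⟨(ModuleCat.ofHom φ : K.X i ⟶ ModuleCat.of ℚ ℚ), h _ (ChainComplex.prev ℕ i)⟩, ?_⟩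
  exact Submodule.linearMap_qext _ hφ

lemma ker_cocycleEval :
    LinearMap.ker (cocycleEval K i ((ComplexShape.down ℕ).next i)) =
      LinearMap.range ((dualComplex K).sc i).moduleCatToCycles := by
  ext φ
  constructor
  · intro hφ
    obtain ⟨χ, hχ⟩ := exists_comp_eq_of_ker_le (g := (K.d i ((ComplexShape.down ℕ).next i)).hom)
      (φ := (show K.X i ⟶ ModuleCat.of ℚ ℚ from φ.1).hom) fun z hz =>
        LinearMap.congr_fun hφ (Submodule.Quotient.mk ⟨z, hz⟩)
    refine ⟨(ModuleCat.ofHom χ : K.X _ ⟶ ModuleCat.of ℚ ℚ), Subtype.ext ?_⟩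
    exact ModuleCat.hom_ext hχ
  · rintro ⟨χ, rfl⟩
    refine Submodule.linearMap_qext _ (LinearMap.ext fun z => ?_)
    exact (congrArg (show K.X ((ComplexShape.down ℕ).next i) ⟶ ModuleCat.of ℚ ℚ from χ).hom
      (LinearMap.mem_ker.1 z.2)).trans (map_zero _)

theorem finrank_homology_dualComplex :
    Module.finrank ℚ ((dualComplex K).homology i) =
      Module.finrank ℚ (LinearMap.ker (K.d i (i - 1)).hom ⧸
        (LinearMap.range (K.d (i + 1) i).hom).submoduleOf (LinearMap.ker (K.d i (i - 1)).hom)) := by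
  have hp : (ComplexShape.down ℕ).next i = i - 1 := by
    rcases i with _ | i
    · exact ChainComplex.next_nat_zero
    · exact ChainComplex.next_nat_succ i
  rw [← hp]
  refine (((dualComplex K).sc i).moduleCatHomologyIso.toLinearEquiv).finrank_eq.trans ?_
  exact ((Submodule.quotEquivOfEq _ _ (ker_cocycleEval K i).symm).trans
    (LinearMap.quotKerEquivOfSurjective _ (cocycleEval_surjective K i _))).finrank_eq.trans
    Subspace.dual_finrank_eq

end Duality

section Comparison

variable (X : TopCat.{0})

/-- Singular simplices in the simplicial set and as continuous maps. -/
noncomputable def simplexEquiv (n : ℕ) :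
    (TopCat.toSSet.obj X).obj (Opposite.op (SimplexCategory.mk n)) ≃ C(stdSimplex ℝ (Fin (n + 1)), X) :=
  X.toSSetObjEquiv _

noncomputable def toSingChain (n : ℕ) : (singularChainComplex ℚ X).X n →ₗ[ℚ] SingChain X :=
  Finsupp.lmapDomain ℚ ℚ fun s => ⟨n, simplexEquiv X n s⟩

lemma toSingChain_single (n : ℕ) (s : (TopCat.toSSet.obj X).obj (Opposite.op (SimplexCategory.mk n))) :
    toSingChain X n (Finsupp.single s 1) = Finsupp.single ⟨n, simplexEquiv X n s⟩ 1 :=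
  Finsupp.mapDomain_single

lemma toSingChain_injective (n : ℕ) : Function.Injective (toSingChain X n) :=
  Finsupp.mapDomain_injective fun s t h => (simplexEquiv X n).injective (by simpa using h)

lemma range_toSingChain (n : ℕ) : LinearMap.range (toSingChain X n) = chainsIn Set.univ n := by
  apply le_antisymm
  · rintro _ ⟨z, rfl⟩
    exact supported_induction (φ := toSingChain X n) (p := Set.univ)
      (fun s _ => (toSingChain_single X n s).symm ▸
        Finsupp.single_mem_supported ℚ _ ⟨rfl, Set.subset_univ _⟩)
      (Finsupp.mem_supported _ z |>.2 (Set.subset_univ _))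
  · intro z hz
    refine supported_induction (φ := LinearMap.id) ?_ hz
    rintro ⟨m, σ⟩ ⟨rfl, -⟩
    exact ⟨Finsupp.single ((simplexEquiv X m).symm σ) 1, by rw [toSingChain_single, Equiv.apply_symm_apply]; rfl⟩

lemma ModuleCat.sum_zsmul_hom_apply {M N : ModuleCat ℚ} {ι : Type*} (t : Finset ι) (a : ι → ℕ)
    (f : ι → (M ⟶ N)) (x : M) :
    (∑ i ∈ t, (-1 : ℤ) ^ a i • f i).hom x = ∑ i ∈ t, (-1 : ℚ) ^ a i • (f i).hom x := by
  rw [ModuleCat.hom_sum, LinearMap.sum_apply]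
  refine Finset.sum_congr rfl fun i _ => ?_
  rw [ModuleCat.hom_zsmul, LinearMap.smul_apply, ← Int.cast_smul_eq_zsmul ℚ, Int.cast_pow, Int.cast_neg,
    Int.cast_one]

lemma singularChainComplex_d_single (n : ℕ)
    (s : (TopCat.toSSet.obj X).obj (Opposite.op (SimplexCategory.mk (n + 1)))) :
    ((singularChainComplex ℚ X).d (n + 1) n).hom (Finsupp.single s 1) =
      (∑ i : Fin (n + 2), (-1 : ℚ) ^ (i : ℕ) •
        Finsupp.single ((TopCat.toSSet.obj X).δ i s) 1 : _ →₀ ℚ) := by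
  have h : (singularChainComplex ℚ X).d (n + 1) n = _ :=
    AlgebraicTopology.AlternatingFaceMapComplex.obj_d_eq (TopCat.toSSet.obj X ⋙ ModuleCat.free ℚ) n
  refine (congrArg (fun f => f.hom (Finsupp.single s 1)) h).trans ?_
  refine (ModuleCat.sum_zsmul_hom_apply _ _ _ _).trans (Finset.sum_congr rfl fun i _ => ?_)
  exact congrArg _ Finsupp.mapDomain_single

lemma simplexEquiv_δ {n : ℕ} (s : (TopCat.toSSet.obj X).obj (Opposite.op (SimplexCategory.mk (n + 1))))
    (i : Fin (n + 2)) : simplexEquiv X n ((TopCat.toSSet.obj X).δ i s) =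
      (simplexEquiv X (n + 1) s).comp ⟨_, stdSimplex.continuous_map i.succAbove⟩ :=
  ContinuousMap.ext fun t => TopCat.toSSetObjEquiv_δ_apply s i t

lemma singBd_toSingChain_succ (n : ℕ) (z : (singularChainComplex ℚ X).X (n + 1)) :
    singBd (toSingChain X (n + 1) z) = toSingChain X n (((singularChainComplex ℚ X).d (n + 1) n).hom z) := by
  refine chain_hom_congr (f := singBd ∘ₗ toSingChain X (n + 1))
    (g := toSingChain X n ∘ₗ ((singularChainComplex ℚ X).d (n + 1) n).hom) (fun s => ?_) z
  refine ((congrArg singBd (toSingChain_single X (n + 1) s)).trans (singBd_single_succ _)).trans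
    (Eq.trans ?_ (congrArg (toSingChain X n) (singularChainComplex_d_single X n s)).symm)
  refine (Finset.sum_congr rfl fun i _ => ?_).trans (map_sum (toSingChain X n) _ _).symm
  exact (congrArg _ ((congrArg (fun σ => Finsupp.single ⟨n, σ⟩ 1) (simplexEquiv_δ X s i)).symm.trans
    (toSingChain_single X n _).symm)).trans ((toSingChain X n).map_smul _ _).symm

lemma singBd_toSingChain_zero (z : (singularChainComplex ℚ X).X 0) :
    singBd (toSingChain X 0 z) = 0 :=
  chain_hom_congr (f := singBd ∘ₗ toSingChain X 0) (g := 0) (fun s =>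
    (congrArg singBd (toSingChain_single X 0 s)).trans (singBd_single_zero _)) z

lemma singBd_toSingChain_eq_zero (n : ℕ) (z : (singularChainComplex ℚ X).X n) :
    singBd (toSingChain X n z) = 0 ↔ ((singularChainComplex ℚ X).d n (n - 1)).hom z = 0 := by
  rcases n with _ | n
  · rw [singBd_toSingChain_zero, HomologicalComplex.shape _ _ _ (by simp)]
    exact iff_of_true rfl rfl
  · rw [singBd_toSingChain_succ, map_eq_zero_iff _ (toSingChain_injective X n)]
    rfl

theorem finrank_singularCohomology (n : ℕ) : Module.finrank ℚ (singularCohomology ℚ X n) =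
    Module.finrank ℚ (SingHom (Set.univ : Set X) ∅ n) := by
  refine (finrank_homology_dualComplex (singularChainComplex ℚ X) n).trans ?_
  have hz : ∀ z : LinearMap.ker ((singularChainComplex ℚ X).d n (n - 1)).hom,
      toSingChain X n z ∈ relCycles singBd (chainsIn Set.univ) (chainsIn ∅) n := fun z =>
    mem_relCycles.2 ⟨range_toSingChain X n ▸ LinearMap.mem_range_self _ _, by
      rw [(singBd_toSingChain_eq_zero X n z).2 z.2]; exact zero_mem _⟩
  let Φ : LinearMap.ker ((singularChainComplex ℚ X).d n (n - 1)).hom →ₗ[ℚ] SingHom (Set.univ : Set X) ∅ n :=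
    Submodule.mkQ _ ∘ₗ (toSingChain X n ∘ₗ Submodule.subtype _).codRestrict _ hz
  have hΦ : ∀ z, Φ z = relClass _ (hz z) := fun z => rfl
  have hs : Function.Surjective Φ := fun x => by
    induction x using relHom_ind with
    | h z h =>
      obtain ⟨w, rfl⟩ : z ∈ LinearMap.range (toSingChain X n) := range_toSingChain X n ▸ h.1
      exact ⟨⟨w, (singBd_toSingChain_eq_zero X n w).1 (chainsIn_empty _ h.2)⟩, rfl⟩
  have hk : LinearMap.ker Φ = (LinearMap.range ((singularChainComplex ℚ X).d (n + 1) n).hom).submoduleOf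
      (LinearMap.ker ((singularChainComplex ℚ X).d n (n - 1)).hom) := by
    ext z
    rw [LinearMap.mem_ker, hΦ, relClass_eq_zero, mem_relBds]
    constructor
    · rintro ⟨a, ha, w, hw, h⟩
      rw [← range_toSingChain] at hw
      obtain ⟨w, rfl⟩ := hw
      rw [chainsIn_empty _ ha, zero_add, singBd_toSingChain_succ] at h
      exact ⟨w, toSingChain_injective X n h⟩
    · rintro ⟨w, hw⟩
      refine ⟨0, zero_mem _, toSingChain X (n + 1) w, range_toSingChain X (n + 1) ▸ LinearMap.mem_range_self _ _, ?_⟩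
      rw [zero_add, singBd_toSingChain_succ, hw]
      rfl
  exact ((Submodule.quotEquivOfEq _ _ hk.symm).trans
    (LinearMap.quotKerEquivOfSurjective Φ hs)).finrank_eq

end Comparison

theorem poincare_poly_grassmannian_even (m j : ℕ) (hjm : j ≤ m)
    (B : ℕ → ℕ → Polynomial ℤ)
    (hB : ∀ a b : ℕ, b ≤ a → B a b * (qFact b * qFact (a - b)) = qFact a) :
    ∀ i : ℕ,
      (Module.finrank ℚ
        (singularCohomology ℚ (TopCat.of (Grassmannian (2 * j) (2 * m))) i) : ℤ)
        = ((B m j).comp (X ^ 4)).coeff i := by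
  intro i
  have h : B m j = inversionPoly m j :=
    mul_right_cancel₀ (mul_ne_zero (qFact_ne_zero _) (qFact_ne_zero _))
      ((hB m j hjm).trans (inversionPoly_mul_qFact hjm).symm)
  rw [finrank_singularCohomology, h, coeff_inversionPoly_comp, Nat.cast_inj]
  exact Module.finrank_eq_of_rank_eq (rank_singHom_grassmannian_even j m i)
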